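/- Let K be a global function field of characteristic different from 2, i.e. a finite extension of 𝔽_q(t) where q is odd. Then the set {(a₁, a₂) ∈ (Kˣ)² : −a₁a₂ is not a square in K} is diophantine over K. -/

import Mathlib

/-- A subset `S ⊆ K^ι` is diophantine over `K` if there are `m ∈ ℕ` and a polynomial
`f` in the variables `y_i` (`i : ι`) and `x_1, …, x_m` with coefficients in `K` such that
`a ∈ S` iff `f(a, x) = 0` has a solution `x ∈ K^m`. -/
def IsDiophantine {K : Type*} [Field K] {ι : Type*} [Fintype ι] (S : Set (ι → K)) : Prop :=
  ∃ (m : ℕ) (f : MvPolynomial (ι ⊕ Fin m) K),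
    ∀ a : ι → K, a ∈ S ↔ ∃ x : Fin m → K, MvPolynomial.eval (Sum.elim a x) f = 0

namespace FFD

/-- A discrete place of a field: a normalized discrete valuation, with `ord 0 = 0` by convention. -/
structure Place (L : Type*) [Field L] where
  ord : L → ℤ
  ord_zero : ord 0 = 0
  ord_mul : ∀ x y, x ≠ 0 → y ≠ 0 → ord (x * y) = ord x + ord y
  ord_add : ∀ x y, x ≠ 0 → y ≠ 0 → x + y ≠ 0 → min (ord x) (ord y) ≤ ord (x + y)
  surj : ∃ x, x ≠ 0 ∧ ord x = 1

namespace Place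
variable {L : Type*} [Field L] (v : Place L)

theorem ext' {v w : Place L} (h : ∀ x, v.ord x = w.ord x) : v = w := by
  cases v; cases w
  have : _ = _ := funext h
  simp only at this
  subst this
  rfl

/-- `ord x ≥ n`, with the convention `ord 0 = ∞`. -/
def Ge (x : L) (n : ℤ) : Prop := x = 0 ∨ n ≤ v.ord x

theorem ord_one : v.ord 1 = 0 := by
  have := v.ord_mul 1 1 one_ne_zero one_ne_zero
  rw [mul_one] at this; omega

theorem ord_neg_one : v.ord (-1) = 0 := by
  have := v.ord_mul (-1) (-1) (by simp) (by simp)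
  rw [neg_one_mul, neg_neg, v.ord_one] at this; omega

theorem ord_neg (x : L) : v.ord (-x) = v.ord x := by
  by_cases hx : x = 0
  · simp [hx]
  · rw [← neg_one_mul, v.ord_mul _ _ (by simp) hx, v.ord_neg_one, zero_add]

theorem ord_inv (x : L) : v.ord x⁻¹ = - v.ord x := by
  by_cases hx : x = 0
  · simp [hx, v.ord_zero]
  · have := v.ord_mul x x⁻¹ hx (inv_ne_zero hx)
    rw [mul_inv_cancel₀ hx, v.ord_one] at this; omega

theorem ord_div (x y : L) (hx : x ≠ 0) (hy : y ≠ 0) : v.ord (x / y) = v.ord x - v.ord y := by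
  rw [div_eq_mul_inv, v.ord_mul _ _ hx (inv_ne_zero hy), v.ord_inv]; ring

theorem ord_pow (x : L) (n : ℕ) : v.ord (x ^ n) = n * v.ord x := by
  by_cases hx : x = 0
  · subst hx
    rcases n.eq_zero_or_pos with h | h
    · simp [h, v.ord_one]
    · rw [zero_pow h.ne', v.ord_zero]; simp
  · induction n with
    | zero => simp [v.ord_one]
    | succ n ih =>
      rw [pow_succ, v.ord_mul _ _ (pow_ne_zero _ hx) hx, ih]; push_cast; ring

theorem ord_zpow (x : L) (n : ℤ) : v.ord (x ^ n) = n * v.ord x := by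
  cases n with
  | ofNat n => simpa using v.ord_pow x n
  | negSucc n =>
    rw [zpow_negSucc, v.ord_inv, v.ord_pow, Int.negSucc_eq]; push_cast; ring

theorem ord_eq_zero_of_pow {x : L} {n : ℕ} (hn : n ≠ 0) (h : x ^ n = 1) : v.ord x = 0 := by
  have := v.ord_pow x n
  rw [h, v.ord_one] at this
  have h2 := mul_eq_zero.mp this.symm
  rcases h2 with h2 | h2
  · exact absurd (by exact_mod_cast h2) hn
  · exact h2

theorem ge_zero (n : ℤ) : v.Ge 0 n := Or.inl rfl

variable {v}

theorem Ge.mono {x : L} {m n : ℤ} (h : v.Ge x n) (hmn : m ≤ n) : v.Ge x m :=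
  h.imp id (fun h => hmn.trans h)

theorem Ge.le {x : L} {n : ℤ} (h : v.Ge x n) (hx : x ≠ 0) : n ≤ v.ord x := h.resolve_left hx

theorem ge_ord (x : L) : v.Ge x (v.ord x) := Or.inr le_rfl

theorem ge_iff {x : L} (hx : x ≠ 0) {n : ℤ} : v.Ge x n ↔ n ≤ v.ord x := by simp [Ge, hx]

theorem Ge.neg {x : L} {n : ℤ} (h : v.Ge x n) : v.Ge (-x) n := by
  rcases h with h | h
  · left; simp [h]
  · right; rwa [v.ord_neg]

theorem Ge.add {x y : L} {n : ℤ} (hx : v.Ge x n) (hy : v.Ge y n) : v.Ge (x + y) n := by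
  by_cases h1 : x = 0
  · simpa [h1] using hy
  by_cases h2 : y = 0
  · simpa [h2] using hx
  by_cases h3 : x + y = 0
  · exact Or.inl h3
  · right
    exact le_trans (le_min (hx.le h1) (hy.le h2)) (v.ord_add x y h1 h2 h3)

theorem Ge.sub {x y : L} {n : ℤ} (hx : v.Ge x n) (hy : v.Ge y n) : v.Ge (x - y) n := by
  rw [sub_eq_add_neg]; exact hx.add hy.neg

theorem Ge.mul {x y : L} {m n : ℤ} (hx : v.Ge x m) (hy : v.Ge y n) : v.Ge (x * y) (m + n) := by
  by_cases h1 : x = 0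
  · left; simp [h1]
  by_cases h2 : y = 0
  · left; simp [h2]
  right
  rw [v.ord_mul x y h1 h2]
  exact add_le_add (hx.le h1) (hy.le h2)

theorem Ge.pow {x : L} {m : ℤ} (hx : v.Ge x m) (n : ℕ) : v.Ge (x ^ n) (n * m) := by
  by_cases h1 : x = 0
  · subst h1
    rcases n.eq_zero_or_pos with h | h
    · subst h; right; simp [v.ord_one]
    · rw [zero_pow h.ne']; exact v.ge_zero _
  · right; rw [v.ord_pow]
    exact mul_le_mul_of_nonneg_left (hx.le h1) (by positivity)

theorem ge_one_zero : v.Ge 1 0 := Or.inr (by rw [v.ord_one])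

theorem Ge.sum {ι : Type*} {s : Finset ι} {f : ι → L} {n : ℤ} (h : ∀ i ∈ s, v.Ge (f i) n) :
    v.Ge (∑ i ∈ s, f i) n := by
  classical
  induction s using Finset.induction_on with
  | empty => simpa using v.ge_zero n
  | insert a s ha ih =>
    rw [Finset.sum_insert ha]
    exact (h a (by simp)).add (ih (fun i hi => h i (by simp [hi])))

/-- If `x` is close to `y`, then they have the same order. -/
theorem ord_eq_of_sub {x y : L} (hx : x ≠ 0) (h : v.Ge (x - y) (v.ord x + 1)) :
    y ≠ 0 ∧ v.ord y = v.ord x := by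
  have hy : y ≠ 0 := by
    rintro rfl
    have := h.le (by simpa using hx)
    simp at this
  refine ⟨hy, ?_⟩
  have h1 : v.ord x ≤ v.ord y := by
    have : v.Ge y (v.ord x) := by
      have := (ge_ord (v := v) x).sub (h.mono (by omega))
      simpa using this
    exact this.le hy
  by_contra hne
  have h2 : v.Ge x (v.ord x + 1) := by
    have := h.add ((ge_ord (v := v) y).mono (show v.ord x + 1 ≤ v.ord y by omega))
    simpa using this
  have := h2.le hx
  omega

theorem ord_add_eq {x y : L} (hx : x ≠ 0) (h : v.Ge y (v.ord x + 1)) :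
    x + y ≠ 0 ∧ v.ord (x + y) = v.ord x := by
  apply ord_eq_of_sub hx
  simpa using h.neg

theorem not_ge {x : L} {n : ℤ} (h : ¬ v.Ge x n) : x ≠ 0 ∧ v.ord x < n := by
  simpa [Ge] using h

theorem ge_inv_zero {x : L} (h : ¬ v.Ge x 0) : v.Ge x⁻¹ 1 := by
  obtain ⟨h1, h2⟩ := not_ge h
  right; rw [v.ord_inv]; omega

variable (v) in
theorem exists_ord (n : ℤ) : ∃ x, x ≠ 0 ∧ v.ord x = n := by
  obtain ⟨x, hx, h⟩ := v.surj
  exact ⟨x ^ n, zpow_ne_zero _ hx, by rw [v.ord_zpow, h, mul_one]⟩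

/-- places are determined by their valuation rings; valuation rings are maximal. -/
theorem eq_of_le {w : Place L} (h : ∀ x, v.Ge x 0 → w.Ge x 0) : v = w := by
  have hu : ∀ x, x ≠ 0 → v.ord x = 0 → w.ord x = 0 := by
    intro x hx h0
    have h1 := (h x (Or.inr h0.ge)).le hx
    have h2 := (h x⁻¹ (Or.inr (by rw [v.ord_inv]; omega))).le (inv_ne_zero hx)
    rw [w.ord_inv] at h2; omega
  obtain ⟨p, hp, hp1⟩ := v.surj
  have key : ∀ x, x ≠ 0 → w.ord x = v.ord x * w.ord p := by
    intro x hx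
    have hp' := zpow_ne_zero (v.ord x) hp
    have := hu (x / p ^ (v.ord x)) (div_ne_zero hx hp') (by
      rw [v.ord_div _ _ hx hp', v.ord_zpow, hp1]; ring)
    rw [w.ord_div _ _ hx hp', w.ord_zpow] at this
    omega
  have hp0 : 0 ≤ w.ord p := (h p (Or.inr (by omega))).le hp
  obtain ⟨y, hy, hy1⟩ := w.surj
  have h3 := key y hy
  rw [hy1] at h3
  have h4 : w.ord p = 1 := by
    have : w.ord p ∣ 1 := ⟨v.ord y, by rw [h3]; ring⟩
    exact Int.eq_one_of_dvd_one hp0 this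
  apply ext'
  intro x
  by_cases hx : x = 0
  · rw [hx, v.ord_zero, w.ord_zero]
  · rw [key x hx, h4, mul_one]



theorem wa1 {w : Place L} (h : v ≠ w) : ∃ u, u ≠ 0 ∧ 0 < v.ord u ∧ w.ord u < 0 := by
  have h1 : ∃ x, v.Ge x 0 ∧ ¬ w.Ge x 0 := by
    by_contra hc; push Not at hc; exact h (eq_of_le hc)
  have h2 : ∃ x, w.Ge x 0 ∧ ¬ v.Ge x 0 := by
    by_contra hc; push Not at hc; exact h (eq_of_le hc).symm
  obtain ⟨x, hx1, hx2⟩ := h1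
  obtain ⟨y, hy1, hy2⟩ := h2
  obtain ⟨hx0, hx3⟩ := not_ge hx2
  obtain ⟨hy0, hy3⟩ := not_ge hy2
  refine ⟨x / y, div_ne_zero hx0 hy0, ?_, ?_⟩
  · rw [v.ord_div _ _ hx0 hy0]
    have := hx1.le hx0; omega
  · rw [w.ord_div _ _ hx0 hy0]
    have := hy1.le hy0; omega

theorem ord_add_of_lt {x y : L} (hx : x ≠ 0) (_hy : y ≠ 0) (h : v.ord x < v.ord y) :
    x + y ≠ 0 ∧ v.ord (x + y) = v.ord x :=
  ord_add_eq hx (Or.inr h)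

theorem wa2 (v : Place L) (S : Finset (Place L)) (hS : v ∉ S) :
    ∃ u, u ≠ 0 ∧ 0 < v.ord u ∧ ∀ w ∈ S, w.ord u < 0 := by
  classical
  induction S using Finset.induction_on with
  | empty =>
    obtain ⟨x, hx, h⟩ := v.surj
    exact ⟨x, hx, by omega, by simp⟩
  | insert w S hw ih =>
    obtain ⟨u, hu0, huv, huS⟩ := ih (fun h => hS (by simp [h]))
    by_cases hwu : w.ord u < 0
    · exact ⟨u, hu0, huv, by
        intro w' hw'
        rcases Finset.mem_insert.mp hw' with rfl | hw'
        · exact hwu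
        · exact huS _ hw'⟩
    push Not at hwu
    obtain ⟨y, hy0, hyv, hyw⟩ := wa1 (v := v) (w := w) (fun h => hS (by simp [h]))
    obtain ⟨N, hN⟩ : ∃ N : ℕ, 0 < N ∧ ∀ w' ∈ S, -(w'.ord u) < N := by
      refine ⟨1 + ∑ w' ∈ S, (w'.ord u).natAbs, by omega, ?_⟩
      intro w' hw'
      have := Finset.single_le_sum (f := fun w' : Place L => (w'.ord u).natAbs)
        (fun _ _ => Nat.zero_le _) hw'
      omega
    obtain ⟨hN0, hN⟩ := hN
    have hyN := pow_ne_zero N hy0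
    have hw1 : w.ord (y ^ N) < 0 := by
      rw [w.ord_pow]; exact mul_neg_of_pos_of_neg (by exact_mod_cast hN0) hyw
    have hne : y ^ N + u ≠ 0 ∧ w.ord (y ^ N + u) = w.ord (y ^ N) :=
      ord_add_of_lt hyN hu0 (by omega)
    refine ⟨y ^ N + u, hne.1, ?_, ?_⟩
    · have h1 : 0 < v.ord (y ^ N) := by
        rw [v.ord_pow]; exact mul_pos (by exact_mod_cast hN0) hyv
      exact lt_of_lt_of_le (lt_min h1 huv) (v.ord_add _ _ hyN hu0 hne.1)
    · intro w' hw'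
      rcases Finset.mem_insert.mp hw' with rfl | hw'
      · rw [hne.2]; exact hw1
      · have h1 := huS _ hw'
        have h2 := hN _ hw'
        have h3 := w'.ord_pow y N
        rcases lt_trichotomy (w'.ord y) 0 with h4 | h4 | h4
        · have : w'.ord (y ^ N) < w'.ord u := by
            rw [h3]; nlinarith
          rw [(ord_add_of_lt hyN hu0 this).2]; omega
        · rw [h4, mul_zero] at h3
          rw [add_comm, (ord_add_of_lt hu0 hyN (by omega)).2]; omega
        · have : 0 < w'.ord (y ^ N) := by rw [h3]; positivity
          rw [add_comm, (ord_add_of_lt hu0 hyN (by omega)).2]; omega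

theorem wa3 (v : Place L) (S : Finset (Place L)) (hS : v ∉ S) (n : ℤ) :
    ∃ x, v.Ge (x - 1) n ∧ ∀ w ∈ S, w.Ge x n := by
  obtain ⟨u, hu0, huv, huS⟩ := wa2 v S hS
  obtain ⟨N, hN1, hN⟩ : ∃ N : ℕ, 0 < N ∧ n ≤ N := ⟨n.toNat + 1, by omega, by omega⟩
  have hN1' : (0:ℤ) < N := by exact_mod_cast hN1
  have hp := pow_ne_zero N hu0
  have h1 : 1 + u ^ N ≠ 0 ∧ v.ord (1 + u ^ N) = v.ord 1 := ord_add_of_lt one_ne_zero hp (by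
    rw [v.ord_one, v.ord_pow]; positivity)
  refine ⟨(1 + u ^ N)⁻¹, ?_, ?_⟩
  · have h2 : (1 + u ^ N)⁻¹ - 1 = -(u ^ N / (1 + u ^ N)) := by
      have := h1.1
      field_simp; ring
    rw [h2]
    apply Ge.neg
    right
    rw [v.ord_div _ _ hp h1.1, h1.2, v.ord_one, v.ord_pow]
    nlinarith
  · intro w hw
    right
    have h3 : w.ord (u ^ N) < w.ord 1 := by
      rw [w.ord_one, w.ord_pow]; exact mul_neg_of_pos_of_neg hN1' (huS w hw)
    rw [w.ord_inv, add_comm, (ord_add_of_lt hp one_ne_zero h3).2, w.ord_pow]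
    have := huS w hw
    nlinarith

/-- weak approximation -/
theorem weak_approx (S : Finset (Place L)) (a : Place L → L) (n : ℤ) :
    ∃ x, ∀ v ∈ S, v.Ge (x - a v) n := by
  classical
  obtain ⟨N, hN⟩ : ∃ N : ℤ, ∀ v ∈ S, ∀ w ∈ S, n ≤ N + w.ord (a v) := by
    refine ⟨n + ∑ v ∈ S, ∑ w ∈ S, |w.ord (a v)|, ?_⟩
    intro v hv w hw
    have h1 := Finset.single_le_sum (f := fun w : Place L => |w.ord (a v)|)
        (fun _ _ => abs_nonneg _) hw
    have h2 := Finset.single_le_sum (f := fun v => ∑ w ∈ S, |w.ord (a v)|)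
        (fun _ _ => Finset.sum_nonneg (fun _ _ => abs_nonneg _)) hv
    have := neg_abs_le (w.ord (a v))
    linarith
  choose x hx1 hx2 using fun v : Place L => wa3 v (S.erase v) (by simp) N
  refine ⟨∑ v ∈ S, x v * a v, ?_⟩
  intro v hv
  have h1 : ∑ w ∈ S, x w * a w - a v = ∑ w ∈ S, (x w * a w - if w = v then a v else 0) := by
    rw [Finset.sum_sub_distrib, Finset.sum_ite_eq' S v]
    simp [hv]
  rw [h1]
  apply Ge.sum
  intro w hw
  by_cases hwv : w = v
  · subst hwv
    rw [if_pos rfl, show x w * a w - a w = (x w - 1) * a w by ring]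
    exact ((hx1 w).mul (ge_ord _)).mono (hN w hw w hw)
  · rw [if_neg hwv, sub_zero]
    exact ((hx2 w v (Finset.mem_erase.mpr ⟨fun h => hwv h.symm, hv⟩)).mul (ge_ord _)).mono (hN w hw v hv)

end Place
end FFD

namespace FFD

/-- `N = M(√a)` is a quadratic extension of `M`, with its nontrivial automorphism `σ`. -/
structure Quad (M N : Type*) [Field M] [Field N] [Algebra M N] (a : M) where
  r : N
  r_sq : r * r = algebraMap M N a
  span : ∀ z : N, ∃ x y : M, z = algebraMap M N x + algebraMap M N y * r
  nonsq : ∀ s : M, s * s ≠ a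
  two : (2 : M) ≠ 0
  σ : N →+* N
  σ_alg : ∀ x : M, σ (algebraMap M N x) = algebraMap M N x
  σ_r : σ r = -r

namespace Quad
variable {M N : Type*} [Field M] [Field N] [Algebra M N] {a : M} (Q : Quad M N a)
local notation "ι" => algebraMap M N

theorem σσ (z : N) : Q.σ (Q.σ z) = z := by
  obtain ⟨x, y, rfl⟩ := Q.span z
  simp [Q.σ_alg, Q.σ_r]

theorem σ_ne {z : N} (hz : z ≠ 0) : Q.σ z ≠ 0 := by
  intro h
  apply hz
  rw [← Q.σσ z, h, map_zero]

theorem two' (Q : Quad M N a) : (2 : N) ≠ 0 := by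
  intro h
  apply Q.two
  apply (algebraMap M N).injective
  rw [map_zero, map_ofNat, h]

theorem trace (z : N) : ∃ t : M, z + Q.σ z = ι t := by
  obtain ⟨x, y, rfl⟩ := Q.span z
  refine ⟨x + x, ?_⟩
  simp [Q.σ_alg, Q.σ_r]
  ring

theorem norm (z : N) : ∃ n : M, z * Q.σ z = ι n := by
  obtain ⟨x, y, rfl⟩ := Q.span z
  refine ⟨x ^ 2 - a * y ^ 2, ?_⟩
  simp [Q.σ_alg, Q.σ_r, ← Q.r_sq]
  ring

theorem fixed {z : N} (h : Q.σ z = z) : ∃ x : M, z = ι x := by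
  obtain ⟨t, ht⟩ := Q.trace z
  refine ⟨t / 2, ?_⟩
  rw [map_div₀, ← ht, h, map_ofNat]
  have := Q.two'
  field_simp; ring

theorem r_ne : Q.r ≠ 0 := by
  intro h
  apply Q.nonsq 0
  apply (algebraMap M N).injective
  rw [← Q.r_sq, h]; simp

theorem unique {x y x' y' : M} (h : ι x + ι y * Q.r = ι x' + ι y' * Q.r) : x = x' ∧ y = y' := by
  have h2 := congrArg Q.σ h
  simp only [map_add, map_mul, Q.σ_alg, Q.σ_r] at h2
  have h3 : ι x = ι x' := by
    have := Q.two'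
    apply mul_left_cancel₀ this
    linear_combination h + h2
  refine ⟨(algebraMap M N).injective h3, ?_⟩
  rw [h3, add_right_inj] at h
  exact (algebraMap M N).injective (mul_right_cancel₀ Q.r_ne h)

/-- the conjugate place -/
def conj (w : Place N) : Place N where
  ord x := w.ord (Q.σ x)
  ord_zero := by rw [map_zero, w.ord_zero]
  ord_mul x y hx hy := by rw [map_mul, w.ord_mul _ _ (Q.σ_ne hx) (Q.σ_ne hy)]
  ord_add x y hx hy h := by
    rw [map_add]; apply w.ord_add _ _ (Q.σ_ne hx) (Q.σ_ne hy)
    rw [← map_add]; exact Q.σ_ne h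
  surj := by
    obtain ⟨x, hx, h⟩ := w.surj
    exact ⟨Q.σ x, Q.σ_ne hx, by rw [Q.σσ, h]⟩

theorem conj_ord (w : Place N) (x : N) : (Q.conj w).ord x = w.ord (Q.σ x) := rfl

theorem conj_conj (w : Place N) : Q.conj (Q.conj w) = w :=
  Place.ext' (fun x => by rw [Q.conj_ord, Q.conj_ord, Q.σσ])

theorem conj_ge (w : Place N) (x : N) (n : ℤ) : (Q.conj w).Ge x n ↔ w.Ge (Q.σ x) n := by
  unfold Place.Ge
  rw [Q.conj_ord]
  constructor
  · rintro (h | h)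
    · left; rw [h, map_zero]
    · exact Or.inr h
  · rintro (h | h)
    · left; rw [← Q.σσ x, h, map_zero]
    · exact Or.inr h

theorem exists_res (Q : Quad M N a) (w : Place N) :
    ∃ (v : Place M) (e : ℤ), 0 < e ∧ ∀ x, w.ord (ι x) = e * v.ord x := by
  have inj := (algebraMap M N).injective
  have ne : ∀ {x : M}, x ≠ 0 → ι x ≠ 0 := fun hx => by simpa using hx
  let H : AddSubgroup ℤ :=
    { carrier := {n | ∃ x : M, x ≠ 0 ∧ w.ord (ι x) = n}
      zero_mem' := ⟨1, one_ne_zero, by rw [map_one, w.ord_one]⟩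
      add_mem' := by
        rintro _ _ ⟨x, hx, rfl⟩ ⟨y, hy, rfl⟩
        exact ⟨x * y, mul_ne_zero hx hy, by rw [map_mul, w.ord_mul _ _ (ne hx) (ne hy)]⟩
      neg_mem' := by
        rintro _ ⟨x, hx, rfl⟩
        exact ⟨x⁻¹, inv_ne_zero hx, by rw [map_inv₀, w.ord_inv]⟩ }
  obtain ⟨e0, he0⟩ := Int.subgroup_cyclic H
  have hmem : ∀ n, n ∈ H ↔ e0 ∣ n := by
    intro n
    rw [he0, AddSubgroup.mem_closure_singleton]
    constructor
    · rintro ⟨m, rfl⟩; exact ⟨m, by simp [mul_comm]⟩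
    · rintro ⟨m, rfl⟩; exact ⟨m, by simp [mul_comm]⟩
  have hnt : e0 ≠ 0 := by
    rintro rfl
    have h0 : ∀ x : M, x ≠ 0 → w.ord (ι x) = 0 := by
      intro x hx
      have : w.ord (ι x) ∈ H := ⟨x, hx, rfl⟩
      rw [hmem] at this
      simpa using this
    have hge : ∀ x : M, w.Ge (ι x) 0 := by
      intro x
      by_cases hx : x = 0
      · left; simp [hx]
      · right; rw [h0 x hx]
    obtain ⟨z, hz, hz1⟩ := w.surj
    obtain ⟨t, ht⟩ := Q.trace z
    obtain ⟨n, hn⟩ := Q.norm z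
    have hn0 : n ≠ 0 := by
      rintro rfl
      rw [map_zero] at hn
      exact (mul_ne_zero hz (Q.σ_ne hz)) hn
    have h1 : ι n = ι t * z - z * z := by rw [← hn, ← ht]; ring
    have hz' : w.Ge z 1 := Or.inr hz1.ge
    have h2 : w.Ge (ι n) 1 := by
      rw [h1]
      exact (((hge t).mul hz').mono (by norm_num)).sub ((hz'.mul hz').mono (by norm_num))
    have := h2.le (ne hn0)
    rw [h0 n hn0] at this
    omega
  have hdvd : ∀ x : M, |e0| ∣ w.ord (ι x) := by
    intro x
    by_cases hx : x = 0
    · simp [hx, w.ord_zero]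
    · rw [abs_dvd, ← hmem]; exact ⟨x, hx, rfl⟩
  have hpos : 0 < |e0| := abs_pos.mpr hnt
  choose o ho using hdvd
  refine ⟨⟨o, ?_, ?_, ?_, ?_⟩, |e0|, hpos, ho⟩
  · have := ho 0
    rw [map_zero, w.ord_zero] at this
    have := mul_eq_zero.mp this.symm
    omega
  · intro x y hx hy
    have := w.ord_mul _ _ (ne hx) (ne hy)
    rw [← map_mul, ho, ho, ho, ← mul_add] at this
    exact mul_left_cancel₀ hpos.ne' this
  · intro x y hx hy h
    have := w.ord_add _ _ (ne hx) (ne hy) (by rw [← map_add]; exact ne h)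
    rw [← map_add, ho, ho, ho, ← mul_min_of_nonneg _ _ hpos.le] at this
    exact le_of_mul_le_mul_left this hpos
  · have : |e0| ∈ H := by rw [hmem, dvd_abs]
    obtain ⟨x, hx, h⟩ := this
    refine ⟨x, hx, ?_⟩
    rw [ho] at h
    exact mul_left_cancel₀ hpos.ne' (by rw [h, mul_one])

/-- restriction of places -/
noncomputable def res (w : Place N) : Place M := (Q.exists_res w).choose
/-- ramification index -/
noncomputable def e (w : Place N) : ℤ := (Q.exists_res w).choose_spec.choose
theorem e_pos (w : Place N) : 0 < Q.e w := (Q.exists_res w).choose_spec.choose_spec.1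
theorem ord_res (w : Place N) (x : M) : w.ord (ι x) = Q.e w * (Q.res w).ord x :=
  (Q.exists_res w).choose_spec.choose_spec.2 x

theorem alg_ne {x : M} (hx : x ≠ 0) : ι x ≠ 0 := by simpa using hx

theorem ge_res_zero (w : Place N) (x : M) : w.Ge (ι x) 0 ↔ (Q.res w).Ge x 0 := by
  by_cases hx : x = 0
  · simp [hx, Place.Ge]
  · rw [Place.ge_iff (alg_ne hx), Place.ge_iff hx, Q.ord_res]
    have := Q.e_pos w
    constructor
    · intro h; by_contra hc; push Not at hc; nlinarith
    · intro h; positivity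

theorem ge_res_pos (w : Place N) (x : M) : w.Ge (ι x) 1 ↔ (Q.res w).Ge x 1 := by
  by_cases hx : x = 0
  · simp [hx, Place.Ge]
  · rw [Place.ge_iff (alg_ne hx), Place.ge_iff hx, Q.ord_res]
    have := Q.e_pos w
    constructor
    · intro h; by_contra hc; push Not at hc; nlinarith
    · intro h; nlinarith

theorem res_eq {w : Place N} {v : Place M} (h : ∀ x, w.Ge (ι x) 0 → v.Ge x 0) : Q.res w = v :=
  Place.eq_of_le (fun x hx => h x ((Q.ge_res_zero w x).mpr hx))

theorem res_conj (w : Place N) : Q.res (Q.conj w) = Q.res w := by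
  apply Q.res_eq
  intro x hx
  rw [Q.conj_ge, Q.σ_alg] at hx
  exact (Q.ge_res_zero w x).mp hx

theorem e_conj (w : Place N) : Q.e (Q.conj w) = Q.e w := by
  obtain ⟨x, hx, h⟩ := (Q.res w).surj
  have h1 := Q.ord_res (Q.conj w) x
  rw [Q.conj_ord, Q.σ_alg, Q.res_conj, h, Q.ord_res, h] at h1
  omega

/-- the fibres of restriction are orbits under conjugation -/
theorem fibre {w w' : Place N} (h : Q.res w = Q.res w') : w' = w ∨ w' = Q.conj w := by
  classical
  by_contra hc
  push Not at hc
  obtain ⟨h1, h2⟩ := hc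
  have h3 : Q.conj w' ≠ w := fun hh => h2 (by rw [← hh, Q.conj_conj])
  have h4 : Q.conj w' ≠ Q.conj w := fun hh => h1 (by rw [← Q.conj_conj w', hh, Q.conj_conj])
  obtain ⟨z, hz⟩ := Place.weak_approx {w, Q.conj w, w', Q.conj w'}
    (fun u => if u = w ∨ u = Q.conj w then (1 : N) else 0) 1
  have a1 := hz w (by simp)
  have a2 := hz (Q.conj w) (by simp)
  have a3 := hz w' (by simp)
  have a4 := hz (Q.conj w') (by simp)
  rw [if_pos (by simp)] at a1 a2
  rw [if_neg (by simp [h1, h2]), sub_zero] at a3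
  rw [if_neg (by simp [h3, h4]), sub_zero] at a4
  rw [Q.conj_ge] at a4 a2
  rw [map_sub, map_one] at a2
  have unit : ∀ y : N, w.Ge (y - 1) 1 → y ≠ 0 ∧ w.ord y = 0 := by
    intro y hy
    have := Place.ord_eq_of_sub (v := w) (x := 1) (y := y) one_ne_zero (by
      rw [w.ord_one]; simpa using hy.neg)
    rwa [w.ord_one] at this
  obtain ⟨b1, b2⟩ := unit _ a1
  obtain ⟨b3, b4⟩ := unit _ a2
  obtain ⟨n, hn⟩ := Q.norm z
  have hn0 : n ≠ 0 := by
    rintro rfl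
    rw [map_zero] at hn
    exact (mul_ne_zero b1 b3) hn
  have c1 : w.ord (ι n) = 0 := by rw [← hn, w.ord_mul _ _ b1 b3, b2, b4]; rfl
  have c2 : w'.Ge (ι n) 1 := by rw [← hn]; exact (a3.mul a4).mono (by norm_num)
  rw [Q.ge_res_pos, ← h, Place.ge_iff hn0] at c2
  rw [Q.ord_res] at c1
  have := Q.e_pos w
  nlinarith

/-- extensions by square roots of constants are unramified -/
theorem unramified (w : Place N) (h2 : w.ord 2 = 0) (ha : w.ord (ι a) = 0) : Q.e w = 1 := by
  classical
  have fin : ∀ x : M, w.ord (ι x) = 1 → Q.e w = 1 := by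
    intro x hx
    rw [Q.ord_res] at hx
    exact Int.eq_one_of_dvd_one (Q.e_pos w).le ⟨_, hx.symm⟩
  obtain ⟨p, hp, hp1⟩ := w.surj
  by_cases hc : Q.conj w = w
  · have hr : w.ord Q.r = 0 := by
      have := w.ord_mul _ _ Q.r_ne Q.r_ne
      rw [Q.r_sq, ha] at this; omega
    have hσ : w.ord (Q.σ p) = 1 := by rw [← Q.conj_ord, hc, hp1]
    obtain ⟨x, y, hxy⟩ := Q.span p
    have hσp : Q.σ p = ι x - ι y * Q.r := by
      rw [hxy]; simp [Q.σ_alg, Q.σ_r]; ring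
    have g1 : w.Ge p 1 := Or.inr hp1.ge
    have g2 : w.Ge (Q.σ p) 1 := Or.inr hσ.ge
    have hx1 : w.Ge (ι (x + x)) 1 := by
      have := g1.add g2
      rw [hσp] at this
      rw [hxy] at this
      convert this using 1
      simp
    have hy1 : w.Ge (ι (y + y)) 1 := by
      have := g1.sub g2
      rw [hσp] at this
      rw [hxy] at this
      have h3 : w.Ge (Q.r)⁻¹ 0 := Or.inr (by rw [w.ord_inv, hr]; rfl)
      convert (this.mul h3).mono (show (1:ℤ) ≤ 1 + 0 by norm_num) using 1
      have := Q.r_ne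
      field_simp
      simp; ring
    by_contra hne
    have hx2 : w.Ge (ι (x + x)) 2 := by
      by_contra hh
      obtain ⟨h5, h6⟩ := Place.not_ge hh
      have := hx1.le h5
      exact hne (fin (x + x) (by omega))
    have hy2 : w.Ge (ι (y + y)) 2 := by
      by_contra hh
      obtain ⟨h5, h6⟩ := Place.not_ge hh
      have := hy1.le h5
      exact hne (fin (y + y) (by omega))
    have h5 : w.Ge (2 * p) 2 := by
      have h6 : w.Ge Q.r 0 := Or.inr hr.ge
      convert hx2.add ((hy2.mul h6).mono (show (2:ℤ) ≤ 2 + 0 by norm_num)) using 1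
      rw [hxy]; simp; ring
    have := h5.le (mul_ne_zero Q.two' hp)
    rw [w.ord_mul _ _ Q.two' hp, h2, hp1] at this
    omega
  · obtain ⟨z, hz⟩ := Place.weak_approx {w, Q.conj w} (fun u => if u = w then p else 0) 2
    have a1 := hz w (by simp)
    have a2 := hz (Q.conj w) (by simp)
    rw [if_pos rfl] at a1
    rw [if_neg hc, sub_zero, Q.conj_ge] at a2
    obtain ⟨t, ht⟩ := Q.trace z
    apply fin t
    rw [← ht]
    have : w.Ge (p - (z + Q.σ z)) (w.ord p + 1) := by
      rw [hp1]
      rw [show p - (z + Q.σ z) = -(z - p + Q.σ z) by ring]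
      exact ((a1.add a2).neg).mono (by norm_num)
    rw [(Place.ord_eq_of_sub hp this).2, hp1]

end Quad

/-- `ε` is not a square in the residue field at `v`. -/
def Place.Odd {L : Type*} [Field L] (v : Place L) (ε : L) : Prop := ∀ c : L, ¬ v.Ge (c * c - ε) 1

namespace Quad
variable {M N : Type*} [Field M] [Field N] [Algebra M N] {a : M} (Q : Quad M N a)
local notation "ι" => algebraMap M N

theorem odd_of_conj_eq (w : Place N) (h2 : w.ord 2 = 0) (ha : w.ord (ι a) = 0)
    (hc : Q.conj w = w) : (Q.res w).Odd a := by
  intro c h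
  rw [← Q.ge_res_pos] at h
  have hr : w.ord Q.r = 0 := by
    have := w.ord_mul _ _ Q.r_ne Q.r_ne
    rw [Q.r_sq, ha] at this; omega
  have h1 : ι (c * c - a) = (ι c - Q.r) * (ι c + Q.r) := by
    simp [← Q.r_sq]; ring
  have h3 : Q.σ (ι c - Q.r) = ι c + Q.r := by simp [Q.σ_alg, Q.σ_r]
  have key : w.Ge (ι c - Q.r) 1 := by
    by_contra hh
    obtain ⟨h4, h5⟩ := Place.not_ge hh
    have h6 : w.ord (ι c + Q.r) = w.ord (ι c - Q.r) := by rw [← h3, ← Q.conj_ord, hc]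
    have h7 : ι c + Q.r ≠ 0 := by rw [← h3]; exact Q.σ_ne h4
    rw [h1] at h
    have := h.le (mul_ne_zero h4 h7)
    rw [w.ord_mul _ _ h4 h7, h6] at this
    omega
  have key2 : w.Ge (ι c + Q.r) 1 := by rw [← h3, ← Q.conj_ge, hc]; exact key
  have h8 : w.Ge (2 * Q.r) 1 := by
    convert key2.sub key using 1; ring
  have := h8.le (mul_ne_zero Q.two' Q.r_ne)
  rw [w.ord_mul _ _ Q.two' Q.r_ne, h2, hr] at this
  omega

theorem odd_res {w : Place N} {ε : M} (h : w.Odd (ι ε)) : (Q.res w).Odd ε := by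
  intro c hc
  rw [← Q.ge_res_pos] at hc
  exact h (ι c) (by simpa using hc)

theorem odd_conj {w : Place N} {ε : M} (h : w.Odd (ι ε)) : (Q.conj w).Odd (ι ε) := by
  intro c hc
  rw [Q.conj_ge] at hc
  exact h (Q.σ c) (by simpa [Q.σ_alg] using hc)

end Quad
end FFD

namespace FFD

namespace Place
variable (k : Type*) {L : Type*} [Field k] [Finite k] [Field L] [Algebra k L] (v : Place L)

theorem ord_const (c : k) : v.ord (algebraMap k L c) = 0 := by
  by_cases hc : c = 0
  · rw [hc, map_zero, v.ord_zero]
  · have := Fintype.ofFinite k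
    have h := FiniteField.pow_card_sub_one_eq_one c hc
    apply v.ord_eq_zero_of_pow (n := Fintype.card k - 1)
    · have := Fintype.one_lt_card (α := k); omega
    · rw [← map_pow, h, map_one]

theorem ge_const (c : k) : v.Ge (algebraMap k L c) 0 := Or.inr (v.ord_const k c).ge

theorem Ge.smul {k : Type*} {L : Type*} [Field k] [Finite k] [Field L] [Algebra k L] {v : Place L}
    {x : L} {n : ℤ} (h : v.Ge x n) (c : k) : v.Ge (c • x) n := by
  rw [Algebra.smul_def]
  exact ((v.ge_const k c).mul h).mono (by omega)

/-- valuation ring -/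
def O : Subalgebra k L where
  carrier := {x | v.Ge x 0}
  mul_mem' hx hy := (Ge.mul hx hy).mono (by norm_num)
  add_mem' hx hy := Ge.add hx hy
  algebraMap_mem' c := v.ge_const k c

theorem mem_O {x : L} : x ∈ v.O k ↔ v.Ge x 0 := Iff.rfl

/-- maximal ideal -/
def mm : Ideal (v.O k) where
  carrier := {x | v.Ge (x : L) 1}
  add_mem' hx hy := Ge.add hx hy
  zero_mem' := v.ge_zero _
  smul_mem' c x hx := (Ge.mul c.2 hx).mono (by norm_num)

theorem mem_mm {x : v.O k} : x ∈ v.mm k ↔ v.Ge (x : L) 1 := Iff.rfl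

instance : (v.mm k).IsMaximal := by
  rw [Ideal.isMaximal_iff]
  constructor
  · rw [mem_mm]
    intro h
    have := h.le (by simp)
    simp [v.ord_one] at this
  · intro J x _ hx hJ
    rw [mem_mm] at hx
    obtain ⟨h1, h2⟩ := not_ge hx
    have h3 := Ge.le x.2 h1
    have h4 : v.Ge ((x : L)⁻¹) 0 := Or.inr (by rw [v.ord_inv]; omega)
    have : (1 : v.O k) = ⟨(x : L)⁻¹, h4⟩ * x := by
      ext; simp [inv_mul_cancel₀ h1]
    rw [this]
    exact J.mul_mem_left _ hJ

/-- residue field -/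
abbrev κ := v.O k ⧸ v.mm k

noncomputable instance : Field (v.κ k) := Ideal.Quotient.field _

/-- degree -/
noncomputable def deg : ℕ := Module.finrank k (v.κ k)

theorem κ_mk_eq {x y : v.O k} :
    (Ideal.Quotient.mk (v.mm k) x = Ideal.Quotient.mk (v.mm k) y) ↔ v.Ge ((x : L) - y) 1 := by
  rw [Ideal.Quotient.eq, mem_mm]; rfl

theorem finite_κ (h : ∃ S : Finset L, ∀ x, v.Ge x 0 → ∃ s ∈ S, v.Ge (x - s) 1) :
    Finite (v.κ k) := by
  obtain ⟨S, hS⟩ := h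
  choose! s hs1 hs2 using hS
  have hsO : ∀ x, v.Ge x 0 → v.Ge (s x) 0 := by
    intro x hx
    have := hx.sub ((hs2 x hx).mono (show (0:ℤ) ≤ 1 by norm_num))
    simpa using this
  let g : v.κ k → S := fun y => ⟨s (Quotient.out y : v.O k), hs1 _ (Quotient.out y : v.O k).2⟩
  apply Finite.of_injective g
  intro y y' h
  have h1 : s (Quotient.out y : v.O k) = s (Quotient.out y' : v.O k) := congrArg Subtype.val h
  have e1 : Ideal.Quotient.mk (v.mm k) (Quotient.out y) = y := Quotient.out_eq y
  have e2 : Ideal.Quotient.mk (v.mm k) (Quotient.out y') = y' := Quotient.out_eq y'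
  rw [← e1, ← e2, κ_mk_eq]
  have a1 := hs2 _ (Quotient.out y : v.O k).2
  have a2 := hs2 _ (Quotient.out y' : v.O k).2
  rw [h1] at a1
  have := a1.sub a2
  simpa using this

/-- the leading coefficient map -/
theorem exists_lead (n : ℤ) (W : Submodule k L) (hW : ∀ x ∈ W, v.Ge x n) :
    ∃ φ : W →ₗ[k] v.κ k, (∀ x : W, φ x = 0 ↔ v.Ge (x : L) (n + 1)) ∧
      ((∀ y, v.Ge y n → ∃ x ∈ W, v.Ge (x - y) (n + 1)) → Function.Surjective φ) := by
  obtain ⟨p, hp, hpn⟩ := v.exists_ord (-n)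
  have hmem : ∀ x ∈ W, v.Ge (p * x) 0 := by
    intro x hx
    exact ((ge_ord (v := v) p).mul (hW x hx)).mono (by omega)
  let ψ : W →ₗ[k] v.O k :=
    { toFun := fun x => ⟨p * x, hmem x x.2⟩
      map_add' := fun x y => by ext; simp [mul_add]
      map_smul' := fun c x => by ext; simp }
  refine ⟨(Ideal.Quotient.mkₐ k (v.mm k)).toLinearMap ∘ₗ ψ, ?_, ?_⟩
  · intro x
    have : ((Ideal.Quotient.mkₐ k (v.mm k)).toLinearMap ∘ₗ ψ) x
        = Ideal.Quotient.mk (v.mm k) (ψ x) := rfl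
    rw [this, Ideal.Quotient.eq_zero_iff_mem, mem_mm]
    change v.Ge (p * x) 1 ↔ _
    by_cases hx : (x : L) = 0
    · simp [hx, ge_zero]
    · rw [ge_iff (mul_ne_zero hp hx), ge_iff hx, v.ord_mul _ _ hp hx]
      omega
  · intro hs y
    obtain ⟨⟨y, hy⟩, rfl⟩ := Ideal.Quotient.mk_surjective y
    have h1 : v.Ge (y / p) n := by
      rw [div_eq_mul_inv]
      exact (Ge.mul hy (ge_ord (v := v) p⁻¹)).mono (by rw [v.ord_inv]; omega)
    obtain ⟨x, hxW, hx⟩ := hs _ h1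
    refine ⟨⟨x, hxW⟩, ?_⟩
    change Ideal.Quotient.mk (v.mm k) (ψ _) = _
    rw [κ_mk_eq]
    change v.Ge (p * x - y) 1
    have := (ge_ord (v := v) p).mul hx
    rw [mul_sub, mul_div_cancel₀ _ hp] at this
    exact this.mono (by omega)

theorem step [Finite (v.κ k)] (n : ℤ) (W W' : Submodule k L) (hW : ∀ x ∈ W, v.Ge x n)
    (hW' : ∀ x, x ∈ W' ↔ x ∈ W ∧ v.Ge x (n + 1)) [hf : Module.Finite k W'] :
    Module.Finite k W ∧ Module.finrank k W ≤ Module.finrank k W' + v.deg k := by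
  obtain ⟨φ, h1, -⟩ := v.exists_lead k n W hW
  have hk : Submodule.map W.subtype (LinearMap.ker φ) = W' := by
    ext x
    simp only [Submodule.mem_map, LinearMap.mem_ker, Subtype.exists, hW']
    constructor
    · rintro ⟨y, hy, h, rfl⟩
      exact ⟨hy, (h1 _).mp h⟩
    · rintro ⟨h2, h3⟩
      exact ⟨x, h2, (h1 ⟨x, h2⟩).mpr h3, rfl⟩
  have e : LinearMap.ker φ ≃ₗ[k] W' :=
    (Submodule.equivMapOfInjective _ W.injective_subtype (LinearMap.ker φ)).trans
      (LinearEquiv.ofEq _ _ hk)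
  have hfk : Module.Finite k (LinearMap.ker φ) := Module.Finite.equiv e.symm
  have hfin : Module.Finite k W := by
    rw [Module.finite_def]
    apply Submodule.fg_of_fg_map_of_fg_inf_ker φ
    · exact IsNoetherian.noetherian _
    · rw [top_inf_eq]; exact Module.Finite.iff_fg.mp hfk
  refine ⟨hfin, ?_⟩
  rw [← LinearMap.finrank_range_add_finrank_ker φ, e.finrank_eq, add_comm]
  have : Module.Finite k (v.κ k) := Module.Finite.of_finite
  exact Nat.add_le_add_left (Submodule.finrank_le _) _

end Place
end FFD

namespace FFD
open Finsupp

/-- Divisors -/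
abbrev Div (L : Type*) [Field L] := Place L →₀ ℤ

theorem eff_ind {L : Type*} [Field L] {P : Div L → Prop} (h0 : P 0)
    (h1 : ∀ v E, 0 ≤ E → P E → P (E + single v 1)) : ∀ E, 0 ≤ E → P E := by
  classical
  let s : Div L →ₗ[ℤ] ℤ := Finsupp.linearCombination ℤ (fun _ => (1 : ℤ))
  have hs : ∀ E : Div L, 0 ≤ E → 0 ≤ s E := by
    intro E hE
    simp only [s, Finsupp.linearCombination_apply, Finsupp.sum]
    exact Finset.sum_nonneg (fun v _ => by simpa using hE v)
  have key : ∀ n : ℕ, ∀ E : Div L, 0 ≤ E → s E = n → P E := by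
    intro n
    induction n with
    | zero =>
      intro E hE h
      have : E = 0 := by
        by_contra hne
        obtain ⟨v, hv⟩ := Finsupp.ne_iff.mp hne
        simp only [s, Finsupp.linearCombination_apply, Finsupp.sum] at h
        have h2 := (Finset.sum_eq_zero_iff_of_nonneg (fun v _ => by simpa using hE v)).mp h v
          (by simpa using hv)
        simp at h2
        exact hv (by simpa using h2)
      rw [this]; exact h0
    | succ n ih =>
      intro E hE h
      have hne : E ≠ 0 := by
        rintro rfl
        rw [map_zero] at h; push_cast at h; omega
      obtain ⟨v, hv⟩ := Finsupp.ne_iff.mp hne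
      have hv1 : 1 ≤ E v := by
        have h1 : 0 ≤ E v := hE v
        have h2 : E v ≠ 0 := hv
        omega
      have hE' : 0 ≤ E - single v 1 := by
        intro w
        by_cases hw : v = w
        · subst hw; simpa using hv1
        · simpa [hw] using hE w
      have := h1 v _ hE' (ih _ hE' (by
        rw [map_sub, h]; simp [s]))
      simpa using this
  intro E hE
  exact key (s E).toNat E hE (by have := hs E hE; omega)

/-- The structural properties of global function fields with exact field of constants `k`
that are used below. -/
structure FF (k L : Type*) [Field k] [Finite k] [Field L] [Algebra k L] : Prop where
  supp : ∀ f : L, f ≠ 0 → {v : Place L | v.ord f ≠ 0}.Finite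
  resfin : ∀ v : Place L, ∃ S : Finset L, ∀ x, v.Ge x 0 → ∃ s ∈ S, v.Ge (x - s) 1
  vr : ∀ A : ValuationSubring L, A ≠ ⊤ → ∃ v : Place L, ∀ x, v.Ge x 0 → x ∈ A
  const : ∀ f : L, (∀ v : Place L, v.Ge f 0) → ∃ c : k, algebraMap k L c = f
  ne : Nonempty (Place L)

variable {k L : Type*} [Field k] [Finite k] [Field L] [Algebra k L]

variable (k) in
/-- degree of a divisor -/
noncomputable def dg : Div L →ₗ[ℤ] ℤ := Finsupp.linearCombination ℤ (fun v => (v.deg k : ℤ))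

theorem dg_single (v : Place L) (n : ℤ) : dg k (single v n) = n * v.deg k := by simp [dg]

theorem dg_nonneg {E : Div L} (hE : 0 ≤ E) : 0 ≤ dg k E := by
  simp only [dg, Finsupp.linearCombination_apply, Finsupp.sum]
  exact Finset.sum_nonneg (fun v _ => mul_nonneg (hE v) (by positivity))

theorem dg_mono {D E : Div L} (h : D ≤ E) : dg k D ≤ dg k E := by
  have := dg_nonneg (k := k) (sub_nonneg.mpr h)
  rw [map_sub] at this; omega

variable (k) in
/-- Riemann-Roch space -/
def RR (D : Div L) : Submodule k L where
  carrier := {f | ∀ v : Place L, v.Ge f (- D v)}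
  add_mem' hx hy v := (hx v).add (hy v)
  zero_mem' v := v.ge_zero _
  smul_mem' c x hx v := (hx v).smul c

theorem mem_RR {D : Div L} {f : L} : f ∈ RR k D ↔ ∀ v : Place L, v.Ge f (- D v) := Iff.rfl

theorem RR_mono {D E : Div L} (h : D ≤ E) : RR k D ≤ RR k E := by
  intro f hf v
  exact (hf v).mono (neg_le_neg (h v))

variable (k) in
/-- dimension of the Riemann-Roch space -/
noncomputable def ll (D : Div L) : ℕ := Module.finrank k (RR k D)

theorem RR_zero_trivial (v : Place L) (hF : FF k L) (f : L) (hf : f ∈ RR k (0 : Div L)) :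
    v.ord f = 0 := by
  obtain ⟨c, rfl⟩ := hF.const f (fun v => by simpa using hf v)
  exact v.ord_const k c

namespace FF
variable (hF : FF k L)

theorem finκ (hF : FF k L) (v : Place L) : Finite (v.κ k) := v.finite_κ k (hF.resfin v)

theorem deg_pos (hF : FF k L) (v : Place L) : 0 < v.deg k := by
  have := hF.finκ v
  have : Module.Finite k (v.κ k) := Module.Finite.of_finite
  exact Module.finrank_pos

theorem RR_add (hF : FF k L) (D E : Div L) (hE : 0 ≤ E) (hD : Module.Finite k (RR k D)) :
    Module.Finite k (RR k (D + E)) ∧ (ll k (D + E) : ℤ) ≤ ll k D + dg k E := by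
  revert E
  apply eff_ind
  · rw [add_zero, map_zero]; exact ⟨hD, by simp⟩
  · intro v E hE ⟨h1, h2⟩
    have := hF.finκ v
    obtain ⟨h3, h4⟩ := v.step k (-(D v + E v + 1)) (RR k (D + (E + single v 1))) (RR k (D + E))
      (by
        intro x hx
        exact (hx v).mono (by simp; omega))
      (by
        intro x
        constructor
        · intro hx
          refine ⟨RR_mono ?_ hx, (hx v).mono (by simp)⟩
          intro w
          by_cases hw : v = w
          · subst hw; simp
          · simp [hw]
        · rintro ⟨hx, hv⟩ w
          by_cases hw : v = w
          · subst hw; exact hv.mono (by simp)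
          · have := hx w
            simpa [hw] using this)
    refine ⟨h3, ?_⟩
    rw [map_add, dg_single]
    unfold ll at h2 ⊢
    push_cast
    have h5 : (Module.finrank k (RR k (D + (E + single v 1))) : ℤ) ≤
      Module.finrank k (RR k (D + E)) + v.deg k := by exact_mod_cast h4
    linarith

theorem ll_zero (hF : FF k L) : Module.Finite k (RR k (0 : Div L)) ∧ ll k (0 : Div L) = 1 := by
  have h : RR k (0 : Div L) = LinearMap.range (Algebra.linearMap k L) := by
    ext f
    constructor
    · intro hf
      obtain ⟨c, hc⟩ := hF.const f (fun v => by simpa using hf v)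
      exact ⟨c, hc⟩
    · rintro ⟨c, rfl⟩ v
      simpa using v.ge_const k c
  have e : k ≃ₗ[k] RR k (0 : Div L) := by
    rw [h]
    exact LinearEquiv.ofInjective _ (algebraMap k L).injective
  exact ⟨Module.Finite.equiv e, by unfold ll; rw [← e.finrank_eq]; simp⟩

theorem RR_fin (hF : FF k L) (D : Div L) : Module.Finite k (RR k D) := by
  have h1 := (hF.RR_add 0 (D ⊔ 0) le_sup_right hF.ll_zero.1).1
  rw [zero_add] at h1
  exact Submodule.finiteDimensional_of_le (RR_mono (k := k) (le_sup_left : D ≤ D ⊔ 0))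

theorem ll_mono_diff (hF : FF k L) {D E : Div L} (h : D ≤ E) :
    dg k D - ll k D ≤ dg k E - ll k E := by
  have := (hF.RR_add D (E - D) (sub_nonneg.mpr h) (hF.RR_fin D)).2
  rw [add_sub_cancel, map_sub] at this
  omega

theorem ll_le (hF : FF k L) {E : Div L} (h : 0 ≤ E) : (ll k E : ℤ) ≤ dg k E + 1 := by
  have := hF.ll_mono_diff h
  rw [map_zero, hF.ll_zero.2] at this
  push_cast at this; omega

/-- divisor of a function -/
noncomputable def div (hF : FF k L) (f : L) : Div L :=
  Finsupp.ofSupportFinite (fun v => v.ord f) (by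
    by_cases hf : f = 0
    · have : Function.support (fun v : Place L => v.ord f) = ∅ := by
        ext v; simp [hf, v.ord_zero]
      rw [this]; exact Set.finite_empty
    · exact hF.supp f hf)

theorem div_apply (v : Place L) (f : L) : hF.div f v = v.ord f := rfl

theorem div_mul {f g : L} (hf : f ≠ 0) (hg : g ≠ 0) : hF.div (f * g) = hF.div f + hF.div g := by
  ext v; exact v.ord_mul f g hf hg

theorem div_inv (f : L) : hF.div f⁻¹ = - hF.div f := by
  ext v; exact v.ord_inv f

theorem div_pow (f : L) (n : ℕ) : hF.div (f ^ n) = n • hF.div f := by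
  ext v; simp [div_apply, v.ord_pow]

theorem div_zpow (f : L) (n : ℤ) : hF.div (f ^ n) = n • hF.div f := by
  ext v; simp [div_apply, v.ord_zpow]

theorem div_one : hF.div 1 = 0 := by ext v; exact v.ord_one

theorem div_const (c : k) : hF.div (algebraMap k L c) = 0 := by ext v; exact v.ord_const k c

/-- divisor of zeros -/
noncomputable def zd (f : L) : Div L := hF.div f ⊔ 0

theorem zd_nonneg (f : L) : 0 ≤ hF.zd f := le_sup_right

theorem zd_apply (f : L) (v : Place L) : hF.zd f v = max (v.ord f) 0 := rfl

theorem div_eq (f : L) : hF.div f = hF.zd f - hF.zd f⁻¹ := by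
  ext v
  rw [Finsupp.sub_apply, zd_apply, zd_apply, div_apply, v.ord_inv]
  omega

theorem mul_mem_RR {f g : L} (hg : g ≠ 0) (D : Div L) :
    g * f ∈ RR k (D - hF.div g) ↔ f ∈ RR k D := by
  rw [mem_RR, mem_RR]
  apply forall_congr'
  intro v
  by_cases hf : f = 0
  · simp [hf, Place.ge_zero]
  · rw [Place.ge_iff (mul_ne_zero hg hf), Place.ge_iff hf, v.ord_mul _ _ hg hf,
      Finsupp.sub_apply, div_apply]
    omega

theorem ll_div {g : L} (hg : g ≠ 0) (D : Div L) : ll k (D - hF.div g) = ll k D := by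
  unfold ll
  symm
  let e : L ≃ₗ[k] L := LinearEquiv.smulOfNeZero (M := L) L g hg |>.restrictScalars k
  have : Submodule.map (e : L →ₗ[k] L) (RR k D) = RR k (D - hF.div g) := by
    ext y
    simp only [Submodule.mem_map]
    constructor
    · rintro ⟨x, hx, rfl⟩
      exact (hF.mul_mem_RR hg D).mpr hx
    · intro hy
      refine ⟨g⁻¹ * y, ?_, ?_⟩
      · rw [← hF.mul_mem_RR hg D, mul_inv_cancel_left₀ hg]; exact hy
      · change g * (g⁻¹ * y) = y
        exact mul_inv_cancel_left₀ hg y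
  rw [← this]
  exact (Submodule.equivMapOfInjective (e : L →ₗ[k] L) e.injective (RR k D)).finrank_eq

end FF
end FFD

namespace FFD
open Finsupp
variable {k L : Type*} [Field k] [Finite k] [Field L] [Algebra k L]

namespace FF
variable (hF : FF k L)

theorem indep_mod (hF : FF k L) (T : Finset (Place L)) : ∀ E : Div L, 0 ≤ E → E.support ⊆ T →
    ∃ (ι : Type) (_ : Fintype ι) (u : ι → L), (Fintype.card ι : ℤ) = dg k E ∧
      (∀ v ∈ T, ∀ i, v.Ge (u i) 0) ∧
      ∀ c : ι → k, (∀ v ∈ T, v.Ge (∑ i, c i • u i) (E v)) → ∀ i, c i = 0 := by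
  apply eff_ind
  · intro _
    exact ⟨Empty, inferInstance, fun i => i.elim, by simp, fun _ _ i => i.elim, fun _ _ i => i.elim⟩
  · intro v E hE ih hT
    have hv : v ∈ T := hT (by
      have : 0 ≤ E v := hE v
      simp; omega)
    obtain ⟨ι, _, u, h1, h2, h3⟩ := ih (by
      intro w hw
      apply hT
      have : 0 ≤ E w := hE w
      have h' : E w ≠ 0 := by simpa using hw
      by_cases hvw : v = w
      · subst hvw; simp; omega
      · simpa [hvw] using h')
    let W : Submodule k L :=
      { carrier := {x | ∀ w ∈ T, w.Ge x (E w)}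
        add_mem' := fun hx hy w hw => (hx w hw).add (hy w hw)
        zero_mem' := fun w _ => w.ge_zero _
        smul_mem' := fun c x hx w hw => (hx w hw).smul c }
    obtain ⟨φ, hφ0, hφs⟩ := v.exists_lead k (E v) W (fun x hx => hx v hv)
    have hs : Function.Surjective φ := by
      apply hφs
      intro y hy
      classical
      obtain ⟨B, hB⟩ : ∃ B : ℤ, ∀ w ∈ T, E w + 1 ≤ B := by
        obtain ⟨B, hB⟩ := (T.image (fun w => E w + 1)).bddAbove
        exact ⟨B, fun w hw => hB (Finset.mem_coe.mpr (Finset.mem_image_of_mem _ hw))⟩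
      obtain ⟨x, hx⟩ := Place.weak_approx T (fun w => if w = v then y else 0) B
      refine ⟨x, ?_, ?_⟩
      · intro w hw
        have := (hx w hw).mono (hB w hw)
        by_cases hwv : w = v
        · subst hwv
          simp only [if_true] at this
          have := (this.mono (show E w ≤ E w + 1 by omega)).add hy
          simpa using this
        · simp only [hwv, if_false, sub_zero] at this
          exact this.mono (by omega)
      · have := (hx v hv).mono (hB v hv)
        simpa using this
    have := hF.finκ v
    have : Module.Finite k (v.κ k) := Module.Finite.of_finite
    have hfree : Module.Free k (v.κ k) := Module.Free.of_divisionRing k (v.κ k)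
    let b := Module.finBasis k (v.κ k)
    choose x hx using fun j => hs (b j)
    refine ⟨ι ⊕ Fin (Module.finrank k (v.κ k)), inferInstance, Sum.elim u (fun j => (x j : L)),
      ?_, ?_, ?_⟩
    · rw [map_add, dg_single, Fintype.card_sum, Fintype.card_fin, ← h1]
      simp [Place.deg]
    · rintro w hw (i | j)
      · exact h2 w hw i
      · exact ((x j).2 w hw).mono (hE w)
    · intro c hc
      simp only [Fintype.sum_sum_type, Sum.elim_inl, Sum.elim_inr] at hc
      have hcι : ∀ i, c (Sum.inl i) = 0 := by
        apply h3
        intro w hw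
        have e1 : w.Ge (∑ j, c (Sum.inr j) • (x j : L)) (E w) :=
          Place.Ge.sum (fun j _ => ((x j).2 w hw).smul _)
        have e2 := (hc w hw).mono (show E w ≤ (E + single v 1 : Div L) w by
          by_cases hvw : v = w
          · subst hvw; simp
          · simp [hvw])
        have := e2.sub e1
        simpa using this
      have hcj : ∀ j, c (Sum.inr j) = 0 := by
        have e1 := hc v hv
        simp only [hcι, zero_smul, Finset.sum_const_zero, zero_add] at e1
        have e2 : φ (∑ j, c (Sum.inr j) • x j) = 0 := by
          rw [hφ0]
          simpa using e1
        rw [map_sum] at e2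
        simp only [map_smul, hx] at e2
        exact Fintype.linearIndependent_iff.mp b.linearIndependent _ e2
      rintro (i | j)
      · exact hcι i
      · exact hcj j

/-- independence over `k[h]`, spelled out -/
def IndepS (k : Type*) {L : Type*} [Field k] [Field L] [Algebra k L] {ι : Type} [Fintype ι]
    (u : ι → L) (h : L) : Prop :=
  ∀ m, ∀ c : ι → Fin m → k, (∑ i, ∑ j, c i j • (h ^ (j : ℕ) * u i) = 0) → ∀ i j, c i j = 0

theorem IndepS.inv {ι : Type} [Fintype ι] {u : ι → L} {h : L} (hh : h ≠ 0)
    (hu : IndepS k u h) : IndepS k u h⁻¹ := by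
  intro m c hc i j
  have := hu m (fun i j => c i (Fin.rev j)) (by
    have h2 : ∀ i, ∑ j : Fin m, c i (Fin.rev j) • (h ^ (j : ℕ) * u i)
        = h ^ (m - 1) * ∑ j : Fin m, c i j • (h⁻¹ ^ (j : ℕ) * u i) := by
      intro i
      rw [← Equiv.sum_comp Fin.revPerm, Finset.mul_sum]
      apply Finset.sum_congr rfl
      intro j _
      simp only [Fin.revPerm_apply, Fin.rev_rev]
      have e : h ^ ((Fin.rev j : Fin m) : ℕ) = h ^ (m - 1) * h⁻¹ ^ (j : ℕ) := by
        have : ((Fin.rev j : Fin m) : ℕ) + j = m - 1 := by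
          rw [Fin.val_rev]; omega
        rw [← this, pow_add, inv_pow, mul_assoc, mul_inv_cancel₀ (pow_ne_zero _ hh), mul_one]
      rw [e, mul_assoc, Algebra.mul_smul_comm]
    simp only [h2]
    rw [← Finset.mul_sum, hc, mul_zero]) i (Fin.rev j)
  simpa using this

theorem exists_indepS (hF : FF k L) (s : L) (hs : s ≠ 0) :
    ∃ (ι : Type) (_ : Fintype ι) (u : ι → L), (Fintype.card ι : ℤ) = dg k (hF.zd s) ∧
      IndepS k u s := by
  obtain ⟨ι, _, u, h1, h2, h3⟩ := hF.indep_mod (hF.zd s).support (hF.zd s) (hF.zd_nonneg s)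
    (Finset.Subset.refl _)
  refine ⟨ι, inferInstance, u, h1, ?_⟩
  intro m
  induction m with
  | zero => exact fun c _ i j => j.elim0
  | succ m ih =>
    intro c hc
    have hsplit : ∑ i, c i 0 • u i + s * ∑ i, ∑ j : Fin m, c i j.succ • (s ^ (j : ℕ) * u i) = 0 := by
      rw [← hc, Finset.mul_sum, ← Finset.sum_add_distrib]
      apply Finset.sum_congr rfl
      intro i _
      rw [Fin.sum_univ_succ, Finset.mul_sum]
      congr 1
      · simp
      · apply Finset.sum_congr rfl
        intro j _
        rw [Fin.val_succ, pow_succ, Algebra.mul_smul_comm]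
        congr 1; ring
    have hpos : ∀ v ∈ (hF.zd s).support, 0 ≤ v.ord s ∧ hF.zd s v = v.ord s := by
      intro v hv
      have : hF.zd s v ≠ 0 := by simpa using hv
      rw [zd_apply] at this ⊢
      omega
    have h0 : ∀ i, c i 0 = 0 := by
      apply h3
      intro v hv
      obtain ⟨hv0, hv1⟩ := hpos v hv
      rw [eq_neg_of_add_eq_zero_left hsplit, hv1]
      apply Place.Ge.neg
      have e1 : v.Ge (∑ i, ∑ j : Fin m, c i j.succ • (s ^ (j : ℕ) * u i)) 0 := by
        apply Place.Ge.sum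
        intro i _
        apply Place.Ge.sum
        intro j _
        apply Place.Ge.smul
        have e2 : v.Ge s 0 := Or.inr hv0
        exact ((e2.pow _).mul (h2 v hv i)).mono (by simp)
      exact ((Place.ge_ord (v := v) s).mul e1).mono (by omega)
    have h4 := ih (fun i j => c i j.succ) (by
      simp only [h0, zero_smul, Finset.sum_const_zero, zero_add] at hsplit
      exact (mul_eq_zero.mp hsplit).resolve_left hs)
    intro i j
    refine Fin.cases (h0 i) (fun j => h4 i j) j

theorem indep_ll (hF : FF k L) {ι : Type} [Fintype ι] {u : ι → L} {h : L}
    (hu : IndepS k u h) (D0 : Div L) (hD : ∀ i, u i ∈ RR k D0) (m : ℕ) :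
    Fintype.card ι * (m + 1) ≤ ll k (m • hF.zd h⁻¹ + D0) := by
  have hpow : ∀ j : Fin (m + 1), ∀ i, h ^ (j : ℕ) * u i ∈ RR k (m • hF.zd h⁻¹ + D0) := by
    intro j i v
    have e1 : v.Ge h (- hF.zd h⁻¹ v) := by
      refine Or.inr ?_
      rw [zd_apply, v.ord_inv]; omega
    refine ((e1.pow j).mul (hD i v)).mono ?_
    have h3 : 0 ≤ hF.zd h⁻¹ v := hF.zd_nonneg _ v
    have h4 : ((j : ℕ) : ℤ) ≤ m := by have := j.2; omega
    simp only [Finsupp.add_apply, Finsupp.smul_apply, nsmul_eq_mul]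
    nlinarith
  have hli : LinearIndependent k
      (fun ij : ι × Fin (m + 1) =>
        (⟨h ^ (ij.2 : ℕ) * u ij.1, hpow ij.2 ij.1⟩ : RR k (m • hF.zd h⁻¹ + D0))) := by
    rw [Fintype.linearIndependent_iff]
    intro c hc ij
    refine hu (m + 1) (fun i j => c (i, j)) ?_ ij.1 ij.2
    have := congrArg (Submodule.subtype _) hc
    rw [map_sum, map_zero, Fintype.sum_prod_type] at this
    simpa using this
  have := hF.RR_fin (m • hF.zd h⁻¹ + D0)
  have h5 := hli.fintype_card_le_finrank
  simpa [ll] using h5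

theorem exists_bound (hF : FF k L) {ι : Type} [Fintype ι] (u : ι → L) :
    ∃ D0 : Div L, 0 ≤ D0 ∧ ∀ i, u i ∈ RR k D0 := by
  refine ⟨∑ i, hF.zd (u i)⁻¹, Finset.sum_nonneg (fun i _ => hF.zd_nonneg _), ?_⟩
  intro i v
  refine Or.inr ?_
  have h1 : hF.zd (u i)⁻¹ ≤ ∑ i, hF.zd (u i)⁻¹ :=
    Finset.single_le_sum (f := fun i => hF.zd (u i)⁻¹) (fun i _ => hF.zd_nonneg _)
      (Finset.mem_univ i)
  have h2 := h1 v
  rw [zd_apply, v.ord_inv] at h2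
  omega

theorem dg_div_le (hF : FF k L) (h : L) (hh : h ≠ 0) : dg k (hF.zd h) ≤ dg k (hF.zd h⁻¹) := by
  obtain ⟨ι, _, u, h1, hu⟩ := hF.exists_indepS h hh
  obtain ⟨D0, hD0, hD⟩ := hF.exists_bound u
  rw [← h1]
  by_contra hlt
  push Not at hlt
  have hd := dg_nonneg (k := k) hD0
  obtain ⟨e, he⟩ := Int.eq_ofNat_of_zero_le hd
  have h2 := hF.indep_ll hu D0 hD (e + 1)
  have h3 := hF.ll_le (E := (e + 1) • hF.zd h⁻¹ + D0)
    (add_nonneg (nsmul_nonneg (hF.zd_nonneg _) _) hD0)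
  rw [map_add, map_nsmul, he] at h3
  have h4 : ((Fintype.card ι * (e + 1 + 1) : ℕ) : ℤ) ≤ ll k ((e + 1) • hF.zd h⁻¹ + D0) := by
    exact_mod_cast h2
  have h0 := dg_nonneg (k := k) (hF.zd_nonneg h⁻¹)
  simp only [nsmul_eq_mul] at h3
  push_cast at h3 h4
  nlinarith

/-- the product formula -/
theorem dg_div (hF : FF k L) (h : L) : dg k (hF.div h) = 0 := by
  by_cases hh : h = 0
  · have : hF.div h = 0 := by ext v; rw [div_apply, hh, v.ord_zero]; rfl
    rw [this, map_zero]
  · have h1 := hF.dg_div_le h hh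
    have h2 := hF.dg_div_le h⁻¹ (inv_ne_zero hh)
    rw [inv_inv] at h2
    rw [hF.div_eq, map_sub]; omega

end FF
end FFD

namespace FFD
open Finsupp
variable {k L : Type*} [Field k] [Finite k] [Field L] [Algebra k L]

theorem Place.frob_ge (v : Place L) [Finite (v.κ k)] {x : L} (hx : v.Ge x 0) :
    v.Ge (x ^ (Nat.card k ^ v.deg k) - x) 1 := by
  have : Fintype (v.κ k) := Fintype.ofFinite _
  have : Module.Finite k (v.κ k) := Module.Finite.of_finite
  have hfree : Module.Free k (v.κ k) := Module.Free.of_divisionRing k (v.κ k)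
  have hc : Nat.card k ^ v.deg k = Fintype.card (v.κ k) := by
    rw [← Nat.card_eq_fintype_card, Module.natCard_eq_pow_finrank (K := k) (V := v.κ k)]; rfl
  have h1 := FiniteField.pow_card (Ideal.Quotient.mk (v.mm k) ⟨x, hx⟩)
  rw [← map_pow, Place.κ_mk_eq, ← hc] at h1
  exact h1

namespace FF
variable (hF : FF k L)

theorem exists_pole (hF : FF k L) : ∃ (v : Place L) (t : L), v.ord t = -1 := by
  obtain ⟨v⟩ := hF.ne
  obtain ⟨t, -, ht⟩ := v.exists_ord (-1)
  exact ⟨v, t, ht⟩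

theorem pow_sub_ne {v : Place L} {t : L} (ht : v.ord t = -1) {Q : ℕ} (hQ : 1 < Q) :
    t ^ Q - t ≠ 0 := by
  intro h
  have h1 : v.ord (t ^ Q) = v.ord t := by rw [sub_eq_zero.mp h]
  rw [v.ord_pow, ht] at h1
  omega

theorem one_lt_q : 1 < Nat.card k := Finite.one_lt_card

/-- Riemann's inequality -/
theorem riemann (hF : FF k L) : ∃ C : ℤ, ∀ D : Div L, dg k D ≤ ll k D + C := by
  classical
  obtain ⟨v0, t, ht⟩ := hF.exists_pole
  have ht0 : t ≠ 0 := by rintro rfl; rw [v0.ord_zero] at ht; omega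
  obtain ⟨ι, _, u, h1, hu⟩ := hF.exists_indepS t⁻¹ (inv_ne_zero ht0)
  have hu' := hu.inv (inv_ne_zero ht0)
  rw [inv_inv] at hu'
  obtain ⟨D0, hD0, hD⟩ := hF.exists_bound u
  set B := hF.zd t⁻¹ with hB
  refine ⟨dg k D0, ?_⟩
  have hm : ∀ m : ℕ, dg k (m • B) ≤ ll k (m • B) + dg k D0 := by
    intro m
    have h2 := hF.indep_ll hu' D0 hD m
    have h3 := (hF.RR_add (m • B) D0 hD0 (hF.RR_fin _)).2
    have h4 : ((Fintype.card ι * (m + 1) : ℕ) : ℤ) ≤ ll k (m • B + D0) := by exact_mod_cast h2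
    push_cast at h4
    have h5 := dg_nonneg (k := k) (hF.zd_nonneg t⁻¹)
    rw [map_nsmul, nsmul_eq_mul]
    rw [h1] at h4
    nlinarith
  intro D
  have hq : ∀ v : Place L, 1 < Nat.card k ^ v.deg k := fun v =>
    Nat.one_lt_pow (hF.deg_pos v).ne' one_lt_q
  let g : Place L → L := fun v => (t ^ (Nat.card k ^ v.deg k) - t) ^ (D v).toNat
  have hg0 : ∀ v, g v ≠ 0 := fun v => pow_ne_zero _ (pow_sub_ne ht (hq v))
  have hgint : ∀ v w : Place L, 0 ≤ w.ord t → w.Ge (g v) 0 := by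
    intro v w hw
    have : w.Ge t 0 := Or.inr hw
    have := (((this.pow (Nat.card k ^ v.deg k)).mono (by simp)).sub this).pow (D v).toNat
    exact this.mono (by simp)
  have hgv : ∀ v : Place L, 0 ≤ v.ord t → D v ≤ v.ord (g v) := by
    intro v hv
    have := hF.finκ v
    have h2 := ((v.frob_ge (k := k) (x := t) (Or.inr hv)).pow (D v).toNat).le (hg0 v)
    refine le_trans ?_ h2
    omega
  let h : L := ∏ v ∈ D.support, g v
  have hh0 : h ≠ 0 := Finset.prod_ne_zero_iff.mpr (fun v _ => hg0 v)
  have hle : ∀ w : Place L, 0 ≤ w.ord t → D w ≤ w.ord h := by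
    intro w hw
    have hprod : ∀ S : Finset (Place L), w.Ge (∏ v ∈ S, g v) 0 := by
      intro S
      induction S using Finset.induction with
      | empty => simpa using w.ge_one_zero
      | insert a S ha ih =>
        rw [Finset.prod_insert ha]
        exact ((hgint a w hw).mul ih).mono (by norm_num)
    by_cases hwD : w ∈ D.support
    · have : h = g w * ∏ v ∈ D.support.erase w, g v := (Finset.mul_prod_erase _ _ hwD).symm
      rw [this, w.ord_mul _ _ (hg0 w) (Finset.prod_ne_zero_iff.mpr (fun v _ => hg0 v))]
      have h2 := (hprod (D.support.erase w)).le (Finset.prod_ne_zero_iff.mpr (fun v _ => hg0 v))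
      have h3 := hgv w hw
      omega
    · have h2 : D w = 0 := by simpa using hwD
      rw [h2]
      exact (hprod D.support).le hh0
  obtain ⟨m, hm2⟩ : ∃ m : ℕ, D - hF.div h ≤ m • B := by
    obtain ⟨b, hb⟩ := (B.support.image (fun w => (D - hF.div h) w)).bddAbove
    refine ⟨b.toNat, ?_⟩
    intro w
    have hBw : B w = max (- w.ord t) 0 := by rw [hB, zd_apply, w.ord_inv]
    by_cases hw : 0 ≤ w.ord t
    · have h2 : B w = 0 := by rw [hBw]; omega
      have h3 := hle w hw
      simp only [Finsupp.sub_apply, Finsupp.smul_apply, h2, smul_zero, div_apply]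
      omega
    · have h2 : 1 ≤ B w := by rw [hBw]; omega
      have h3 : (D - hF.div h) w ≤ b := hb (Finset.mem_coe.mpr (Finset.mem_image_of_mem _ (by
        rw [Finsupp.mem_support_iff]; omega)))
      refine h3.trans ?_
      rw [Finsupp.smul_apply, nsmul_eq_mul]
      have : b ≤ (b.toNat : ℤ) := Int.self_le_toNat b
      nlinarith
  have h2 := hF.ll_mono_diff hm2
  rw [map_sub, hF.dg_div, hF.ll_div hh0] at h2
  have h3 := hm m
  omega

theorem ll_div' {f : L} (hf : f ≠ 0) (D : Div L) : ll k (D + hF.div f) = ll k D := by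
  rw [← hF.ll_div hf (D + hF.div f), add_sub_cancel_right]

theorem mem_RR_iff {f : L} (hf : f ≠ 0) (D : Div L) : f ∈ RR k D ↔ 0 ≤ D + hF.div f := by
  rw [mem_RR]
  constructor
  · intro h v
    have := (h v).le hf
    simp only [Finsupp.coe_zero, Pi.zero_apply, Finsupp.add_apply, div_apply]
    omega
  · intro h v
    have := h v
    simp only [Finsupp.coe_zero, Pi.zero_apply, Finsupp.add_apply, div_apply] at this
    exact Or.inr (by omega)

theorem exists_of_ll (hF : FF k L) {D : Div L} (h : 1 ≤ ll k D) :
    ∃ f : L, f ≠ 0 ∧ 0 ≤ D + hF.div f := by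
  have h1 : 0 < Module.finrank k (RR k D) := h
  have := hF.RR_fin D
  have h2 := Module.finrank_pos_iff.mp h1
  obtain ⟨⟨f, hf⟩, hne⟩ := exists_ne (0 : RR k D)
  have hf0 : f ≠ 0 := fun h => hne (Subtype.ext h)
  exact ⟨f, hf0, (hF.mem_RR_iff hf0 D).mp hf⟩

/-- Riemann-Roch for large degree -/
theorem stab (hF : FF k L) : ∃ c n0 : ℤ, 0 ≤ n0 ∧ ∀ D : Div L, n0 ≤ dg k D →
    (ll k D : ℤ) = dg k D - c := by
  obtain ⟨C, hC⟩ := hF.riemann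
  obtain ⟨c, ⟨D1, hD1⟩, hc⟩ : ∃ c : ℤ, (∃ D1 : Div L, dg k D1 - ll k D1 = c) ∧
      ∀ D : Div L, dg k D - ll k D ≤ c := by
    obtain ⟨c, h1, h2⟩ := Int.exists_greatest_of_bdd
      (P := fun z => ∃ D1 : Div L, dg k D1 - ll k D1 = z)
      ⟨C, by rintro z ⟨D, rfl⟩; have := hC D; omega⟩ ⟨_, 0, rfl⟩
    exact ⟨c, h1, fun D => h2 _ ⟨D, rfl⟩⟩
  refine ⟨c, max 0 (dg k D1 + C + 1), le_max_left _ _, ?_⟩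
  intro D hD
  have h1 := hC (D - D1)
  rw [map_sub] at h1
  obtain ⟨f, hf, hfD⟩ := hF.exists_of_ll (D := D - D1) (by
    have := le_max_right 0 (dg k D1 + C + 1)
    omega)
  have h2 : D1 ≤ D + hF.div f := by
    rw [← sub_nonneg]
    convert hfD using 1
    abel
  have h3 := hF.ll_mono_diff h2
  rw [map_add, hF.dg_div, hF.ll_div' hf] at h3
  have h4 := hc D
  omega

theorem finite_places (hF : FF k L) (n : ℕ) : {v : Place L | v.deg k ≤ n}.Finite := by
  classical
  obtain ⟨v0, t, ht⟩ := hF.exists_pole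
  have ht0 : t ≠ 0 := by rintro rfl; rw [v0.ord_zero] at ht; omega
  have hfin : ((hF.div t).support ∪ (Finset.Icc 1 n).biUnion
      (fun d => (hF.div (t ^ (Nat.card k ^ d) - t)).support) : Set (Place L)).Finite := by
    apply Set.Finite.union
    · exact Finset.finite_toSet _
    · exact Finset.finite_toSet _
  refine hfin.subset ?_
  intro v hv
  by_cases h : v.ord t = 0
  · right
    have hv' : v.deg k ≤ n := hv
    simp only [Finset.coe_biUnion, Set.mem_iUnion]
    refine ⟨v.deg k, ?_, ?_⟩
    · simp only [Finset.coe_Icc, Set.mem_Icc]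
      exact ⟨hF.deg_pos v, hv'⟩
    · have := hF.finκ v
      have h2 := (v.frob_ge (k := k) (x := t) (Or.inr h.ge)).le
        (pow_sub_ne ht (Nat.one_lt_pow (hF.deg_pos v).ne' one_lt_q))
      simp only [Finset.mem_coe, Finsupp.mem_support_iff, div_apply]
      omega
  · left
    simpa [div_apply] using h

theorem finite_eff (hF : FF k L) (n : ℤ) : {E : Div L | 0 ≤ E ∧ dg k E ≤ n}.Finite := by
  classical
  let S := (hF.finite_places n.toNat).toFinset
  let M : Div L := ∑ v ∈ S, single v n
  refine (Finset.finite_toSet (Finset.Icc 0 M)).subset ?_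
  rintro E ⟨hE, hn⟩
  rw [Finset.coe_Icc]
  refine ⟨hE, ?_⟩
  intro v
  by_cases hv : E v = 0
  · rw [hv]
    have hn0 : 0 ≤ n := (dg_nonneg hE).trans hn
    exact (Finset.sum_nonneg (fun w _ => by simpa using hn0) : (0 : Div L) ≤ M) v
  · have hvE : 1 ≤ E v := by have : 0 ≤ E v := hE v; omega
    have h1 : E v * v.deg k ≤ n := by
      rw [← dg_single]
      refine le_trans (dg_mono ?_) hn
      intro w
      by_cases hw : v = w
      · subst hw; simp
      · simpa [hw] using hE w
    have h2 : (1 : ℤ) ≤ v.deg k := by exact_mod_cast hF.deg_pos v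
    have hvS : v ∈ S := by
      simp only [S, Set.Finite.mem_toFinset, Set.mem_ofPred_eq]
      have : (v.deg k : ℤ) ≤ n := by nlinarith
      omega
    have h3 : M v = n := by
      simp only [M, Finsupp.finsetSum_apply, Finsupp.single_apply]
      rw [Finset.sum_ite_eq' S v]
      simp [hvS]
    rw [h3]; nlinarith

end FF
end FFD

namespace FFD
open Finsupp
variable {k L : Type*} [Field k] [Finite k] [Field L] [Algebra k L]

variable (k) in
/-- divisors of even type -/
def ET (E : Div L) : Prop := ∀ v : Place L, Odd (v.deg k) → Even (E v)

variable (k) in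
/-- sign of a divisor -/
noncomputable def sg (E : Div L) : ℤ := ((dg k E).negOnePow : ℤ)

theorem sg_add (D E : Div L) : sg k (D + E) = sg k D * sg k E := by
  simp [sg, Int.negOnePow_add]

variable (k) in
open Classical in
/-- alternating number of divisors below `E` -/
noncomputable def lam (E : Div L) : ℤ := ∑ F ∈ Finset.Icc 0 E, sg k F

theorem lam_single_add (v : Place L) (n : ℤ) (E : Div L) (hv : E v = 0) :
    lam k (single v n + E) = (∑ j ∈ Finset.Icc 0 n, sg k (single v j)) * lam k E := by
  classical
  unfold lam
  rw [Finset.sum_mul_sum, ← Finset.sum_product']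
  have hsplit : ∀ F : Div L, single v (F v) + F.erase v = F := fun F => single_add_erase v F
  refine Finset.sum_nbij' (fun F => (F v, F.erase v)) (fun p => single v p.1 + p.2) ?_ ?_ ?_ ?_ ?_
  · intro F hF
    rw [Finset.mem_Icc] at hF
    simp only [Finset.mem_product, Finset.mem_Icc]
    refine ⟨⟨hF.1 v, by simpa [hv] using hF.2 v⟩, ?_, ?_⟩
    · intro w
      by_cases hw : w = v
      · subst hw; simp
      · simpa [Finsupp.erase_ne hw] using hF.1 w
    · intro w
      by_cases hw : w = v
      · subst hw; simp [hv]
      · have := hF.2 w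
        simpa [Finsupp.erase_ne hw, Ne.symm hw] using this
  · rintro ⟨j, F⟩ h
    simp only [Finset.mem_product, Finset.mem_Icc] at h ⊢
    obtain ⟨⟨h1, h2⟩, h3, h4⟩ := h
    refine ⟨add_nonneg (by simpa using h1) h3, ?_⟩
    exact add_le_add (Finsupp.single_le_single.mpr h2) h4
  · intro F _; exact hsplit F
  · rintro ⟨j, F⟩ h
    simp only [Finset.mem_product, Finset.mem_Icc] at h ⊢
    obtain ⟨⟨h1, h2⟩, h3, h4⟩ := h
    have hFv : F v = 0 := le_antisymm (by simpa [hv] using h4 v) (h3 v)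
    refine Prod.ext ?_ ?_
    · simp [hFv]
    · simp only [Finsupp.erase_add, Finsupp.erase_single, zero_add]
      exact Finsupp.erase_of_notMem_support (by simpa using hFv)
  · intro F _
    rw [← sg_add]
    exact congrArg _ (hsplit F).symm

theorem sum_sg_single (v : Place L) (n : ℕ) :
    ∑ j ∈ Finset.Icc (0 : ℤ) n, sg k (single v j) =
      if Odd (v.deg k) then (if Even n then 1 else 0) else n + 1 := by
  have hval : ∀ j : ℤ, sg k (single v j) = ((j * v.deg k).negOnePow : ℤ) := by
    intro j; rw [sg, dg_single]
  induction n with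
  | zero => simp [hval]
  | succ n ih =>
    have : Finset.Icc (0 : ℤ) ((n + 1 : ℕ) : ℤ) = insert ((n : ℤ) + 1) (Finset.Icc (0 : ℤ) n) := by
      ext j; simp; omega
    rw [this, Finset.sum_insert (by simp), ih, hval]
    by_cases hd : Odd (v.deg k)
    · simp only [hd, if_true]
      by_cases hn : Even n
      · have h1 : ¬ Even (n + 1) := by simpa [Nat.even_add_one] using hn
        simp only [hn, h1, if_true, if_false]
        rw [Int.negOnePow_odd]
        · simp
        · apply Odd.mul
          · exact Even.add_one (by exact_mod_cast hn)
          · exact_mod_cast hd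
      · have h1 : Even (n + 1) := by simpa [Nat.even_add_one] using hn
        simp only [hn, h1, if_true, if_false]
        rw [Int.negOnePow_even]
        · simp
        · apply Even.mul_right
          exact_mod_cast h1
    · simp only [hd, if_false]
      rw [Int.negOnePow_even]
      · push_cast; ring
      · apply Even.mul_left
        exact_mod_cast Nat.not_odd_iff_even.mp hd

theorem lam_spec (E : Div L) : 0 ≤ E → (ET k E → 0 < lam k E) ∧ (¬ ET k E → lam k E = 0) := by
  induction E using Finsupp.induction with
  | zero =>
    intro _
    constructor
    · intro _
      simp [lam, sg]
    · intro h
      exact absurd (fun v _ => by simp) h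
  | single_add v n E hv hn ih =>
    intro h
    have hv0 : E v = 0 := by simpa using hv
    have hn0 : 0 ≤ n := by simpa [hv0] using h v
    have hE : 0 ≤ E := by
      intro w
      by_cases hw : v = w
      · subst hw; simp [hv0]
      · simpa [hw] using h w
    obtain ⟨ih1, ih2⟩ := ih hE
    lift n to ℕ using hn0
    rw [lam_single_add v _ E hv0, sum_sg_single]
    have hET : ET k (single v (n : ℤ) + E) ↔ (Odd (v.deg k) → Even n) ∧ ET k E := by
      constructor
      · intro h1
        refine ⟨fun ho => by have := h1 v ho; simpa [hv0] using this, ?_⟩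
        intro w hw
        by_cases hvw : v = w
        · subst hvw; simp [hv0]
        · have := h1 w hw
          simpa [hvw] using this
      · rintro ⟨h1, h2⟩ w hw
        by_cases hvw : v = w
        · subst hvw; have := h1 hw; simpa [hv0] using this
        · have := h2 w hw
          simpa [hvw] using this
    constructor
    · intro h1
      obtain ⟨h2, h3⟩ := hET.mp h1
      apply mul_pos _ (ih1 h3)
      by_cases ho : Odd (v.deg k)
      · simp [ho, h2 ho]
      · simp only [ho, if_false]; positivity
    · intro h1
      rw [hET] at h1
      by_cases h3 : ET k E
      · have h4 : ¬ (Odd (v.deg k) → Even n) := fun h => h1 ⟨h, h3⟩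
        push Not at h4
        simp only [h4.1, if_true]
        simp [h4.2]
      · rw [ih2 h3, mul_zero]

namespace FF
variable (hF : FF k L)

theorem finite_RR (hF : FF k L) (D : Div L) : Finite (RR k D) := by
  have := hF.RR_fin D
  exact Module.finite_of_finite k

theorem finite_nz (hF : FF k L) (D : Div L) : {f : L | f ≠ 0 ∧ f ∈ RR k D}.Finite := by
  have := hF.finite_RR D
  exact (Set.toFinite (RR k D : Set L)).subset (fun _ h => h.2)

/-- nonzero elements of the Riemann-Roch space -/
noncomputable def nz (hF : FF k L) (D : Div L) : Finset L := (hF.finite_nz D).toFinset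

theorem mem_nz {D : Div L} {f : L} : f ∈ hF.nz D ↔ f ≠ 0 ∧ 0 ≤ D + hF.div f := by
  rw [nz, Set.Finite.mem_toFinset]
  change f ≠ 0 ∧ f ∈ RR k D ↔ _
  constructor
  · rintro ⟨h1, h2⟩; exact ⟨h1, (hF.mem_RR_iff h1 D).mp h2⟩
  · rintro ⟨h1, h2⟩; exact ⟨h1, (hF.mem_RR_iff h1 D).mpr h2⟩

theorem card_nz (D : Div L) : ((hF.nz D).card : ℤ) = Nat.card k ^ ll k D - 1 := by
  classical
  have := hF.finite_RR D
  have := hF.RR_fin D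
  have h1 : Nat.card (RR k D) = Nat.card k ^ ll k D :=
    Module.natCard_eq_pow_finrank (K := k) (V := RR k D)
  have h2 : insert 0 (hF.nz D) = (Set.toFinite (RR k D : Set L)).toFinset := by
    ext f
    simp only [Finset.mem_insert, Set.Finite.mem_toFinset, SetLike.mem_coe, nz]
    change f = 0 ∨ (f ≠ 0 ∧ f ∈ RR k D) ↔ _
    constructor
    · rintro (rfl | h)
      · exact (RR k D).zero_mem
      · exact h.2
    · intro h
      by_cases hf : f = 0
      · exact Or.inl hf
      · exact Or.inr ⟨hf, h⟩
  have h3 : (insert 0 (hF.nz D)).card = Nat.card k ^ ll k D := by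
    rw [h2, ← h1, ← Set.ncard_eq_toFinset_card (RR k D : Set L)]
    rfl
  rw [Finset.card_insert_of_notMem (by rw [mem_nz]; simp)] at h3
  have : (((hF.nz D).card + 1 : ℕ) : ℤ) = (Nat.card k : ℤ) ^ ll k D := by rw [h3]; push_cast; rfl
  push_cast at this
  omega

/-- the weighted sum -/
noncomputable def SS (D : Div L) : ℤ := ∑ f ∈ hF.nz D, lam k (D + hF.div f)

theorem SS_eq (hF : FF k L) : ∃ n1 : ℤ, ∀ n, n1 ≤ n → ∃ s : ℤ, ∀ D : Div L, dg k D = n → hF.SS D = s := by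
  classical
  obtain ⟨c, n0, hn0, hst⟩ := hF.stab
  refine ⟨2 * n0, ?_⟩
  intro n hn
  let w : ℤ → ℤ := fun j => (if 2 * j ≤ n then (j.negOnePow : ℤ) else 0) +
    (if 2 * j < n then ((n - j).negOnePow : ℤ) else 0)
  let X : Finset (Div L) := (hF.finite_eff n).toFinset
  refine ⟨∑ E ∈ X, w (dg k E) * ((Nat.card k : ℤ) ^ (n - dg k E - c).toNat - 1), ?_⟩
  intro D hD
  have hinner : ∀ A : Div L, dg k A = n → lam k A = ∑ E ∈ Finset.Icc 0 A, w (dg k E) := by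
    intro A hA
    unfold lam
    rw [Finset.sum_add_distrib]
    have hrefl : ∑ E ∈ Finset.Icc 0 A, (if 2 * dg k E < n then ((n - dg k E).negOnePow : ℤ) else 0)
        = ∑ E ∈ Finset.Icc 0 A, (if 2 * dg k E ≤ n then 0 else ((dg k E).negOnePow : ℤ)) := by
      refine Finset.sum_nbij' (fun E => A - E) (fun E => A - E) ?_ ?_ ?_ ?_ ?_
      · intro E hE
        rw [Finset.mem_Icc] at hE ⊢
        exact ⟨sub_nonneg.mpr hE.2, sub_le_self _ hE.1⟩
      · intro E hE
        rw [Finset.mem_Icc] at hE ⊢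
        exact ⟨sub_nonneg.mpr hE.2, sub_le_self _ hE.1⟩
      · intro E _; simp
      · intro E _; simp
      · intro E _
        rw [map_sub, hA]
        by_cases h : 2 * dg k E < n
        · rw [if_pos h, if_neg (by omega)]
        · rw [if_neg h, if_pos (by omega)]
    rw [hrefl, ← Finset.sum_add_distrib]
    apply Finset.sum_congr rfl
    intro E _
    by_cases h : 2 * dg k E ≤ n <;> simp [h, sg]
  unfold SS
  rw [Finset.sum_congr rfl (fun f _ => hinner (D + hF.div f) (by rw [map_add, hF.dg_div, hD, add_zero]))]
  rw [Finset.sum_comm' (s' := fun E => hF.nz (D - E)) (t' := X)]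
  · apply Finset.sum_congr rfl
    intro E _
    rw [Finset.sum_const, nsmul_eq_mul, hF.card_nz, mul_comm]
    by_cases hE : 2 * dg k E ≤ n
    · have := hst (D - E) (by rw [map_sub]; omega)
      rw [map_sub, hD] at this
      rw [show ll k (D - E) = (n - dg k E - c).toNat by omega]
    · have : w (dg k E) = 0 := by
        simp only [w]
        rw [if_neg hE, if_neg (by omega), add_zero]
      rw [this, zero_mul, zero_mul]
  · intro f E
    rw [mem_nz, mem_nz, Finset.mem_Icc, Set.Finite.mem_toFinset]
    constructor
    · rintro ⟨⟨h1, h2⟩, h3, h4⟩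
      refine ⟨⟨h1, ?_⟩, h3, ?_⟩
      · have := sub_nonneg.mpr h4
        rwa [add_sub_right_comm] at this
      · have := dg_mono (k := k) h4
        rwa [map_add, hF.dg_div, hD, add_zero] at this
    · rintro ⟨⟨h1, h2⟩, h3, h4⟩
      have h5 : E ≤ D + hF.div f := by
        rw [← sub_nonneg, add_sub_right_comm]
        exact h2
      exact ⟨⟨h1, h3.trans h5⟩, h3, h5⟩

/-- Lemma A -/
theorem lemmaA (hF : FF k L) : ∃ n1 : ℤ, ∀ D D' : Div L, n1 ≤ dg k D → dg k D = dg k D' →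
    0 ≤ D' → ET k D' → ∃ f : L, f ≠ 0 ∧ 0 ≤ D + hF.div f ∧ ET k (D + hF.div f) := by
  obtain ⟨n1, h1⟩ := hF.SS_eq
  refine ⟨n1, ?_⟩
  intro D D' hn hDD h0 het
  obtain ⟨s, hs⟩ := h1 _ hn
  have e1 := hs D rfl
  have e2 := hs D' hDD.symm
  have hpos : 0 < hF.SS D' := by
    apply Finset.sum_pos'
    · intro f hf
      obtain ⟨a, b⟩ := lam_spec (k := k) (D' + hF.div f) (hF.mem_nz.mp hf).2
      by_cases h : ET k (D' + hF.div f)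
      · exact (a h).le
      · exact (b h).ge
    · refine ⟨1, hF.mem_nz.mpr ⟨one_ne_zero, by rw [hF.div_one, add_zero]; exact h0⟩, ?_⟩
      rw [hF.div_one, add_zero]
      exact (lam_spec D' h0).1 het
  rw [e2, ← e1] at hpos
  obtain ⟨f, hf, hfl⟩ := Finset.exists_ne_zero_of_sum_ne_zero hpos.ne'
  obtain ⟨h2, h3⟩ := hF.mem_nz.mp hf
  refine ⟨f, h2, h3, ?_⟩
  by_contra h
  exact hfl ((lam_spec _ h3).2 h)

end FF
end FFD

namespace FFD
open Finsupp
variable {k L : Type*} [Field k] [Finite k] [Field L] [Algebra k L]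

set_option linter.unusedSectionVars false

theorem Place.natCard_κ (v : Place L) [Finite (v.κ k)] :
    Nat.card (v.κ k) = Nat.card k ^ v.deg k := by
  have : Module.Finite k (v.κ k) := Module.Finite.of_finite
  have hfree : Module.Free k (v.κ k) := Module.Free.of_divisionRing k (v.κ k)
  exact Module.natCard_eq_pow_finrank (K := k) (V := v.κ k)

theorem nonsq_pow {q : ℕ} (hq : Odd q) (ε : k) (h1 : ε ^ q = ε) (h2 : ε ^ (q / 2) = -1) (d : ℕ) :
    ε ^ (q ^ d / 2) = (-1) ^ d := by
  induction d with
  | zero => simp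
  | succ d ih =>
    obtain ⟨m, hm⟩ := hq.pow (n := d)
    obtain ⟨r, hr⟩ := hq
    have e1 : q ^ (d + 1) / 2 = q * m + r := by
      have : q ^ (d + 1) = 2 * (q * m + r) + 1 := by
        rw [pow_succ, hm]; nlinarith
      omega
    have e2 : q ^ d / 2 = m := by omega
    have e3 : q / 2 = r := by omega
    rw [e1, pow_add, pow_mul, h1, ← e2, ih, ← e3, h2, pow_succ]

theorem Place.odd_iff (v : Place L) [Finite (v.κ k)] (h2 : (2 : k) ≠ 0) (ε : k)
    (hε : ¬ IsSquare ε) : v.Odd (algebraMap k L ε) ↔ _root_.Odd (v.deg k) := by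
  have : Fintype (v.κ k) := Fintype.ofFinite _
  have : Fintype k := Fintype.ofFinite _
  have hε0 : ε ≠ 0 := by rintro rfl; exact hε (IsSquare.zero)
  have hck : ringChar k ≠ 2 := by
    intro h
    apply h2
    have := ringChar.Nat.cast_ringChar (R := k)
    rw [h] at this
    exact_mod_cast this
  have hinj : Function.Injective (algebraMap k (v.κ k)) := (algebraMap k (v.κ k)).injective
  have hcκ : ringChar (v.κ k) ≠ 2 := by
    intro h
    apply h2
    have := ringChar.Nat.cast_ringChar (R := v.κ k)
    rw [h] at this
    apply hinj
    rw [map_zero, map_ofNat]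
    exact_mod_cast this
  have hq : _root_.Odd (Fintype.card k) := by
    rw [Nat.odd_iff]; exact FiniteField.odd_card_of_char_ne_two hck
  have e1 := nonsq_pow hq ε (FiniteField.pow_card ε)
    ((FiniteField.pow_dichotomy hck hε0).resolve_left
      (fun h => hε ((FiniteField.isSquare_iff hck hε0).mpr h))) (v.deg k)
  have hcard : Fintype.card (v.κ k) = Fintype.card k ^ v.deg k := by
    rw [← Nat.card_eq_fintype_card, ← Nat.card_eq_fintype_card]; exact v.natCard_κ
  have e2 : algebraMap k (v.κ k) ε ^ (Fintype.card (v.κ k) / 2) = (-1) ^ v.deg k := by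
    rw [hcard, ← map_pow, e1]; simp
  have e3 := FiniteField.isSquare_iff hcκ (a := algebraMap k (v.κ k) ε)
    (by rw [ne_eq, map_eq_zero]; exact hε0)
  rw [e2] at e3
  have e4 : (-1 : v.κ k) ^ v.deg k = 1 ↔ ¬ _root_.Odd (v.deg k) := by
    constructor
    · intro h ho
      rw [ho.neg_one_pow] at h
      exact (Ring.neg_one_ne_one_of_char_ne_two hcκ) h
    · intro h
      exact (Nat.not_odd_iff_even.mp h).neg_one_pow
  rw [e4] at e3
  rw [← not_iff_not, ← e3]
  unfold Place.Odd
  push Not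
  have hmk : algebraMap k (v.κ k) ε = Ideal.Quotient.mk (v.mm k) ⟨algebraMap k L ε, v.ge_const k ε⟩ :=
    rfl
  constructor
  · rintro ⟨c, hc⟩
    have hc0 : v.Ge c 0 := by
      by_contra h
      obtain ⟨h5, h6⟩ := not_ge h
      have h7 : v.Ge (c * c) 0 := by
        have := (hc.mono (show (0:ℤ) ≤ 1 by norm_num)).add (v.ge_const k ε)
        simpa using this
      have := h7.le (mul_ne_zero h5 h5)
      rw [v.ord_mul _ _ h5 h5] at this
      omega
    refine ⟨Ideal.Quotient.mk (v.mm k) ⟨c, hc0⟩, ?_⟩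
    rw [hmk, ← map_mul]
    symm
    rw [v.κ_mk_eq k]
    exact hc
  · rintro ⟨y, hy⟩
    obtain ⟨⟨c, hc0⟩, rfl⟩ := Ideal.Quotient.mk_surjective y
    refine ⟨c, ?_⟩
    rw [hmk, ← map_mul] at hy
    have := (v.κ_mk_eq k).mp hy.symm
    exact this

theorem herbrand {G : Type*} [AddCommGroup G] [Finite G] (s : G →+ G) (hs : ∀ x, s (s x) = x)
    (h : ∀ x, s x = x → ∃ y, x = y + s y) (x : G) (hx : x + s x = 0) : ∃ y, x = y - s y := by
  let p : G →+ G := AddMonoidHom.id G + s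
  let m : G →+ G := AddMonoidHom.id G - s
  have card : ∀ f : G →+ G, Nat.card f.range * Nat.card f.ker = Nat.card G := by
    intro f
    rw [AddSubgroup.card_eq_card_quotient_mul_card_addSubgroup f.ker,
      Nat.card_congr (QuotientAddGroup.quotientKerEquivRange f).toEquiv]
  have h1 : p.range = m.ker := by
    ext y
    constructor
    · rintro ⟨z, rfl⟩
      rw [AddMonoidHom.mem_ker]
      simp [p, m, hs, add_comm]
    · intro hy
      have : s y = y := by
        rw [AddMonoidHom.mem_ker] at hy
        simp only [m, AddMonoidHom.sub_apply, AddMonoidHom.id_apply] at hy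
        exact (sub_eq_zero.mp hy).symm
      obtain ⟨z, hz⟩ := h y this
      exact ⟨z, by simp [p, ← hz]⟩
  have h2 : m.range ≤ p.ker := by
    rintro y ⟨z, rfl⟩
    rw [AddMonoidHom.mem_ker]
    simp [p, m, hs]
  have h3 : m.range = p.ker := by
    apply AddSubgroup.eq_of_le_of_card_ge h2
    have c1 := card p
    have c2 := card m
    rw [h1] at c1
    have hpos : 0 < Nat.card m.ker := Nat.card_pos
    have : Nat.card m.ker * Nat.card p.ker = Nat.card m.ker * Nat.card m.range := by
      rw [c1, ← c2, mul_comm]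
    exact (Nat.eq_of_mul_eq_mul_left hpos this).le
  have : x ∈ m.range := by
    rw [h3, AddMonoidHom.mem_ker]
    simpa [p] using hx
  obtain ⟨y, hy⟩ := this
  exact ⟨y, by simp [← hy, m]⟩

namespace FF
variable (hF : FF k L)

/-- functions with prescribed parity at odd places -/
theorem exists_parity (hF : FF k L) {P Q : Place L} (hPQ : P ≠ Q) (hd : P.deg k = Q.deg k) :
    ∃ g : L, g ≠ 0 ∧ ∀ v : Place L, Odd (v.deg k) → (Odd (v.ord g) ↔ v = P ∨ v = Q) := by
  classical
  obtain ⟨n1, h1⟩ := hF.lemmaA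
  let m := n1.toNat
  have hd1 : (1 : ℤ) ≤ P.deg k := by exact_mod_cast hF.deg_pos P
  obtain ⟨g, hg, -, h3⟩ := h1 (single P (1 : ℤ) + single Q (1 : ℤ) + single P (2 * (m : ℤ))) (single P (2 * ((m : ℤ) + 1)))
    (by
      simp only [map_add, dg_single]
      have : n1 ≤ m := Int.self_le_toNat _
      have : (0 : ℤ) ≤ m := by positivity
      have : (0 : ℤ) ≤ Q.deg k := by positivity
      nlinarith)
    (by
      simp only [map_add, dg_single, hd]; ring)
    (by
      rw [Finsupp.single_nonneg]; positivity)
    (by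
      intro v _
      rw [Finsupp.single_apply]
      split_ifs
      · exact even_two_mul _
      · exact Even.zero)
  refine ⟨g, hg, ?_⟩
  intro v hv
  have := h3 v hv
  simp only [Finsupp.add_apply, div_apply, Finsupp.single_apply] at this
  rw [Int.odd_iff]
  rw [Int.even_iff] at this
  by_cases hP : P = v
  · have hQ : ¬ Q = v := by rintro rfl; exact hPQ hP
    simp only [hP, hQ, if_true, if_false] at this
    simp only [eq_comm (a := v), hP, hQ, true_or, iff_true]
    omega
  · by_cases hQ : Q = v
    · simp only [hP, hQ, if_true, if_false] at this
      simp only [eq_comm (a := v), hQ, or_true, iff_true]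
      omega
    · simp only [hP, hQ, if_false] at this
      simp only [eq_comm (a := v), hP, hQ, or_self, iff_false]
      omega

/-- principal divisors -/
def Prin (hF : FF k L) : AddSubgroup (Div L) where
  carrier := {D | ∃ f : L, f ≠ 0 ∧ D = hF.div f}
  zero_mem' := ⟨1, one_ne_zero, hF.div_one.symm⟩
  add_mem' := by
    rintro _ _ ⟨f, hf, rfl⟩ ⟨g, hg, rfl⟩
    exact ⟨f * g, mul_ne_zero hf hg, (hF.div_mul hf hg).symm⟩
  neg_mem' := by
    rintro _ ⟨f, hf, rfl⟩
    exact ⟨f⁻¹, inv_ne_zero hf, (hF.div_inv f).symm⟩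

theorem mem_Prin {D : Div L} : D ∈ hF.Prin ↔ ∃ f : L, f ≠ 0 ∧ D = hF.div f := Iff.rfl

variable (k L) in
/-- divisors of degree zero -/
def Div0 : AddSubgroup (Div L) where
  carrier := {D | dg k D = 0}
  zero_mem' := map_zero _
  add_mem' := by
    intro a b ha hb
    have ha' : dg k a = 0 := ha
    have hb' : dg k b = 0 := hb
    change dg k (a + b) = 0
    rw [map_add, ha', hb', add_zero]
  neg_mem' := by
    intro a ha
    have ha' : dg k a = 0 := ha
    change dg k (-a) = 0
    rw [map_neg, ha', neg_zero]

theorem mem_Div0 {D : Div L} : D ∈ Div0 k L ↔ dg k D = 0 := Iff.rfl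

/-- the class group of degree zero -/
abbrev Pic (hF : FF k L) := (Div0 k L) ⧸ (hF.Prin.addSubgroupOf (Div0 k L))

theorem pic_eq {D E : Div0 k L} : ((D : hF.Pic) = (E : hF.Pic)) ↔
    ∃ f : L, f ≠ 0 ∧ (E : Div L) = D + hF.div f := by
  rw [QuotientAddGroup.eq, AddSubgroup.mem_addSubgroupOf, mem_Prin]
  constructor
  · rintro ⟨f, hf, h⟩
    refine ⟨f, hf, ?_⟩
    rw [← h]; simp
  · rintro ⟨f, hf, h⟩
    refine ⟨f, hf, ?_⟩
    simp [h]

theorem finite_pic (hF : FF k L) : Finite hF.Pic := by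
  obtain ⟨C, hC⟩ := hF.riemann
  obtain ⟨P⟩ := hF.ne
  let m : ℕ := (C + 1).toNat
  have hd1 : (1 : ℤ) ≤ P.deg k := by exact_mod_cast hF.deg_pos P
  have key : ∀ D : Div0 k L, ∃ f : L, f ≠ 0 ∧ 0 ≤ (D : Div L) + single P (m : ℤ) + hF.div f := by
    intro D
    apply hF.exists_of_ll
    have h1 := hC ((D : Div L) + single P (m : ℤ))
    rw [map_add, dg_single, mem_Div0.mp D.2] at h1
    have h2 : C + 1 ≤ m := Int.self_le_toNat _
    have h3 : (0 : ℤ) ≤ m := by positivity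
    have : (1 : ℤ) ≤ ll k ((D : Div L) + single P (m : ℤ)) := by nlinarith
    exact_mod_cast this
  choose f hf hfD using key
  have := (hF.finite_eff (m * P.deg k)).to_subtype
  let φ : hF.Pic → {E : Div L | 0 ≤ E ∧ dg k E ≤ m * P.deg k} := fun x =>
    ⟨(Quotient.out x : Div0 k L) + single P (m : ℤ) + hF.div (f (Quotient.out x)),
      hfD _, by
        rw [map_add, map_add, dg_single, hF.dg_div, mem_Div0.mp (Quotient.out x : Div0 k L).2]
        simp⟩
  apply Finite.of_injective φ
  intro x y hxy
  have h1 := congrArg Subtype.val hxy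
  simp only [φ] at h1
  have e1 : ((Quotient.out x : Div0 k L) : hF.Pic) = x := Quotient.out_eq x
  have e2 : ((Quotient.out y : Div0 k L) : hF.Pic) = y := Quotient.out_eq y
  rw [← e1, ← e2, pic_eq]
  refine ⟨f (Quotient.out x) * (f (Quotient.out y))⁻¹, mul_ne_zero (hf _) (inv_ne_zero (hf _)), ?_⟩
  rw [hF.div_mul (hf _) (inv_ne_zero (hf _)), hF.div_inv, ← sub_eq_add_neg, ← add_sub_assoc,
    eq_sub_iff_add_eq]
  have h2 : (single P (m : ℤ) : Div L) + ((Quotient.out y : Div0 k L) + hF.div (f (Quotient.out y)))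
      = single P (m : ℤ) + ((Quotient.out x : Div0 k L) + hF.div (f (Quotient.out x))) := by
    rw [add_left_comm, ← add_assoc, ← h1]; abel
  exact add_left_cancel h2

end FF
end FFD

namespace FFD
open Finsupp
set_option linter.unusedSectionVars false
variable {k M k' N : Type*} [Field k] [Finite k] [Field M] [Algebra k M]
  [Field k'] [Finite k'] [Field N] [Algebra k' N] [Algebra M N]

/-- comparison of degrees -/
theorem Place.deg_le_of_hom {L : Type*} [Field L] [Algebra k L] (v w : Place L) [Finite (v.κ k)]
    [Finite (w.κ k)] (s : L →+* L) (h0 : ∀ x, v.Ge x 0 → w.Ge (s x) 0)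
    (h1 : ∀ x, v.Ge x 1 → w.Ge (s x) 1) : v.deg k ≤ w.deg k := by
  let f : v.O k →+* w.O k := (s.comp (v.O k).val.toRingHom).codRestrict (w.O k)
    (fun x => h0 x x.2)
  let g : v.κ k →+* w.κ k := Ideal.quotientMap (w.mm k) f (fun x hx => h1 x hx)
  have hc := Nat.card_le_card_of_injective g g.injective
  rw [v.natCard_κ, w.natCard_κ] at hc
  exact (Nat.pow_le_pow_iff_right FF.one_lt_q).mp hc

/-- norm forms represent all constants -/
theorem const_norm (h2 : (2 : k) ≠ 0) {ε : k} (hε : ε ≠ 0) (u : k) :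
    ∃ a b : k, u = a ^ 2 - ε * b ^ 2 := by
  have : Fintype k := Fintype.ofFinite _
  have hck : ringChar k ≠ 2 := by
    intro h
    apply h2
    have := ringChar.Nat.cast_ringChar (R := k)
    rw [h] at this
    exact_mod_cast this
  open Polynomial in
  obtain ⟨a, b, h⟩ := FiniteField.exists_root_sum_quadratic (R := k)
    (f := X ^ 2 - C u) (g := C (-ε) * X ^ 2) (degree_X_pow_sub_C (by norm_num) u)
    (degree_C_mul_X_pow 2 (neg_ne_zero.mpr hε)) (FiniteField.odd_card_of_char_ne_two hck)
  refine ⟨a, b, ?_⟩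
  simp at h
  linear_combination -h

namespace Quad
variable {a : M} (Q : Quad M N a)

/-- conjugation of places as a permutation -/
noncomputable def cperm : Equiv.Perm (Place N) := Function.Involutive.toPerm Q.conj Q.conj_conj

/-- conjugation of divisors -/
noncomputable def cj : Div N →+ Div N := (Finsupp.domCongr Q.cperm).toAddMonoidHom

theorem cj_apply (E : Div N) (w : Place N) : Q.cj E w = E (Q.conj w) := rfl

theorem cj_cj (E : Div N) : Q.cj (Q.cj E) = E := by
  ext w; rw [cj_apply, cj_apply, Q.conj_conj]

theorem cj_div (hN : FF k' N) (h : N) : Q.cj (hN.div h) = hN.div (Q.σ h) := by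
  ext w; rfl

theorem deg_conj (hN : FF k' N) (w : Place N) : (Q.conj w).deg k' = w.deg k' := by
  have h : ∀ w : Place N, (Q.conj w).deg k' ≤ w.deg k' := by
    intro w
    have := hN.finκ w
    have := hN.finκ (Q.conj w)
    exact Place.deg_le_of_hom (Q.conj w) w Q.σ (fun x hx => (Q.conj_ge _ _ _).mp hx)
      (fun x hx => (Q.conj_ge _ _ _).mp hx)
  apply le_antisymm (h w)
  have := h (Q.conj w)
  rwa [Q.conj_conj] at this

theorem dg_cj (hN : FF k' N) (E : Div N) : dg k' (Q.cj E) = dg k' E := by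
  induction E using Finsupp.induction_linear with
  | zero => simp
  | add f g hf hg => rw [map_add, map_add, map_add, hf, hg]
  | single w n =>
    have : Q.cj (single w n) = single (Q.conj w) n := by
      simp only [cj, AddEquiv.toAddMonoidHom_eq_coe, AddMonoidHom.coe_coe, Finsupp.domCongr_apply,
        Finsupp.equivMapDomain_single]
      rfl
    rw [this, dg_single, dg_single, Q.deg_conj hN]

/-- every place extends -/
theorem exists_ext (hN : FF k' N) (v : Place M) : ∃ w : Place N, Q.res w = v := by
  let A : Subring N :=
    { carrier := {x | ∃ m, v.Ge m 0 ∧ algebraMap M N m = x}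
      mul_mem' := by
        rintro _ _ ⟨m, hm, rfl⟩ ⟨n, hn, rfl⟩
        exact ⟨m * n, (hm.mul hn).mono (by norm_num), by simp⟩
      one_mem' := ⟨1, v.ge_one_zero, by simp⟩
      add_mem' := by
        rintro _ _ ⟨m, hm, rfl⟩ ⟨n, hn, rfl⟩
        exact ⟨m + n, hm.add hn, by simp⟩
      zero_mem' := ⟨0, v.ge_zero _, by simp⟩
      neg_mem' := by
        rintro _ ⟨m, hm, rfl⟩
        exact ⟨-m, hm.neg, by simp⟩ }
  let I : Ideal A :=
    { carrier := {x | ∃ m, v.Ge m 1 ∧ algebraMap M N m = x}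
      add_mem' := by
        rintro _ _ ⟨m, hm, h⟩ ⟨n, hn, h'⟩
        exact ⟨m + n, hm.add hn, by simp [h, h']⟩
      zero_mem' := ⟨0, v.ge_zero _, by simp⟩
      smul_mem' := by
        rintro ⟨_, ⟨c, hc, rfl⟩⟩ _ ⟨n, hn, h'⟩
        exact ⟨c * n, (hc.mul hn).mono (by norm_num), by simp [h']⟩ }
  have hI : I ≠ ⊤ := by
    intro h
    have h1 : (1 : A) ∈ I := by rw [h]; trivial
    obtain ⟨m, hm, h1⟩ := h1
    have : m = 1 := (algebraMap M N).injective (by simpa using h1)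
    rw [this] at hm
    have := hm.le one_ne_zero
    rw [v.ord_one] at this; omega
  obtain ⟨B, hAB, hIB⟩ := Ideal.image_subset_nonunits_valuationSubring I hI
  have hnu : ∀ m, v.Ge m 1 → algebraMap M N m ∈ B.nonunits := by
    intro m hm
    exact hIB ⟨⟨algebraMap M N m, m, hm.mono (by norm_num), rfl⟩, ⟨m, hm, rfl⟩, rfl⟩
  have hinv : ∀ m, v.Ge m 1 → m ≠ 0 → algebraMap M N m⁻¹ ∉ B := by
    intro m hm hm0 hB
    obtain ⟨h1, h2⟩ := ValuationSubring.mem_nonunits_iff_exists_mem_maximalIdeal.mp (hnu m hm)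
    rw [IsLocalRing.mem_maximalIdeal] at h2
    apply h2
    apply IsUnit.of_mul_eq_one ⟨algebraMap M N m⁻¹, hB⟩
    ext
    simp [hm0]
  obtain ⟨p, hp, hp1⟩ := v.exists_ord 1
  obtain ⟨w, hw⟩ := hN.vr B (by
    rintro rfl
    exact hinv p (Or.inr hp1.ge) hp trivial)
  refine ⟨w, Q.res_eq ?_⟩
  intro x hx
  by_contra h
  have h1 := Place.ge_inv_zero h
  have h2 := hinv x⁻¹ h1 (inv_ne_zero (Place.not_ge h).1)
  rw [inv_inv] at h2
  exact h2 (hw _ hx)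

/-- invariant divisors with even coefficients at fixed places are traces -/
theorem exists_half (s : Place M → Place N) (hs : ∀ v, Q.res (s v) = v)
    (F : Div N) (h1 : ∀ w, F (Q.conj w) = F w)
    (h2 : ∀ w, Q.conj w = w → Even (F w)) : ∃ E : Div N, F = E + Q.cj E := by
  classical
  let E : Div N := Finsupp.onFinset F.support
    (fun w => if Q.conj w = w then F w / 2 else if s (Q.res w) = w then F w else 0) (by
      intro w hw
      rw [Finsupp.mem_support_iff]
      intro h
      simp [h] at hw)
  have hE : ∀ w, E w = if Q.conj w = w then F w / 2 else if s (Q.res w) = w then F w else 0 :=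
    fun w => rfl
  refine ⟨E, ?_⟩
  ext w
  rw [Finsupp.add_apply, Q.cj_apply, hE, hE, Q.conj_conj, Q.res_conj, h1]
  by_cases hw : Q.conj w = w
  · obtain ⟨m, hm⟩ := h2 w hw
    simp only [hw, if_true]
    omega
  · have hw' : ¬ w = Q.conj w := fun h => hw h.symm
    simp only [hw, hw', if_false]
    rcases Q.fibre (w := w) (w' := s (Q.res w)) (hs _).symm with h | h
    · rw [h]; simp [hw']
    · rw [h]; simp [hw]

end Quad

section LemmaB
variable {ε : k} (hM : FF k M) (hN : FF k' N) (Q : Quad M N (algebraMap k M ε))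

theorem Quad.ord_two (hN : FF k' N) (Q : Quad M N (algebraMap k M ε)) (w : Place N) :
    w.ord 2 = 0 := by
  have := w.ord_const k' (2 : k')
  rwa [map_ofNat] at this

theorem Quad.e_one (hN : FF k' N) (Q : Quad M N (algebraMap k M ε)) (w : Place N) : Q.e w = 1 := by
  apply Q.unramified w (Q.ord_two hN w)
  rw [Q.ord_res, (Q.res w).ord_const k, mul_zero]

theorem Quad.ord_alg (hN : FF k' N) (Q : Quad M N (algebraMap k M ε)) (w : Place N) (x : M) :
    w.ord (algebraMap M N x) = (Q.res w).ord x := by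
  rw [Q.ord_res, Q.e_one hN, one_mul]

theorem Quad.odd_deg (hM : FF k M) (hN : FF k' N) (Q : Quad M N (algebraMap k M ε)) (w : Place N)
    (hw : Q.conj w = w) : Odd ((Q.res w).deg k) := by
  have := hM.finκ (Q.res w)
  have h2 : (2 : k) ≠ 0 := by
    intro h
    apply Q.two
    have := congrArg (algebraMap k M) h
    rw [map_ofNat, map_zero] at this
    exact this
  have hε : ¬ IsSquare ε := by
    rintro ⟨s, hs⟩
    exact Q.nonsq (algebraMap k M s) (by rw [hs, map_mul])
  rw [← (Q.res w).odd_iff h2 ε hε]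
  apply Q.odd_of_conj_eq w (Q.ord_two hN w) _ hw
  rw [Q.ord_res, (Q.res w).ord_const k, mul_zero]

/-- an element of `M` which is a unit everywhere on `N` is a norm of a constant -/
theorem Quad.unit_norm (hM : FF k M) (hN : FF k' N) (Q : Quad M N (algebraMap k M ε)) (u : M)
    (hu : u ≠ 0) (h : ∀ w : Place N, w.ord (algebraMap M N u) = 0) :
    ∃ γ : N, γ ≠ 0 ∧ γ * Q.σ γ = algebraMap M N u ∧ hN.div γ = 0 := by
  have h2 : (2 : k) ≠ 0 := by
    intro h
    apply Q.two
    have := congrArg (algebraMap k M) h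
    rw [map_ofNat, map_zero] at this
    exact this
  have hε : ε ≠ 0 := by
    rintro rfl
    exact Q.nonsq 0 (by simp)
  obtain ⟨c, hc⟩ := hM.const u (by
    intro v
    obtain ⟨w, rfl⟩ := Q.exists_ext hN v
    have := h w
    rw [Q.ord_alg hN] at this
    exact Or.inr this.ge)
  obtain ⟨a, b, hab⟩ := const_norm h2 hε c
  have hnorm : (algebraMap M N (algebraMap k M a) + algebraMap M N (algebraMap k M b) * Q.r) *
      Q.σ (algebraMap M N (algebraMap k M a) + algebraMap M N (algebraMap k M b) * Q.r)
      = algebraMap M N u := by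
    rw [← hc, hab]
    simp only [map_add, map_mul, map_sub, map_pow, Q.σ_alg, Q.σ_r]
    linear_combination (-(algebraMap M N (algebraMap k M b)) ^ 2) * Q.r_sq
  set γ := algebraMap M N (algebraMap k M a) + algebraMap M N (algebraMap k M b) * Q.r
  have hγ : γ ≠ 0 := by
    intro h0
    rw [h0, zero_mul] at hnorm
    exact Quad.alg_ne hu hnorm.symm
  refine ⟨γ, hγ, hnorm, ?_⟩
  have hge : ∀ w : Place N, w.Ge γ 0 := by
    intro w
    have hr : w.Ge Q.r 0 := by
      refine Or.inr ?_
      have h1 := w.ord_mul _ _ Q.r_ne Q.r_ne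
      rw [Q.r_sq, Q.ord_alg hN, (Q.res w).ord_const k] at h1
      omega
    have ha : ∀ a : k, w.Ge (algebraMap M N (algebraMap k M a)) 0 := by
      intro a
      refine Or.inr ?_
      rw [Q.ord_alg hN, (Q.res w).ord_const k]
    exact (ha a).add (((ha b).mul hr).mono (by norm_num))
  ext w
  have e1 := (hge w).le hγ
  have e2 := (hge (Q.conj w)).le hγ
  rw [Q.conj_ord] at e2
  have e3 := h w
  rw [← hnorm, w.ord_mul _ _ hγ (Q.σ_ne hγ)] at e3
  rw [FF.div_apply, Finsupp.coe_zero, Pi.zero_apply]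
  omega

/-- Hilbert 90 -/
theorem Quad.h90 {M N : Type*} [Field M] [Field N] [Algebra M N] {a : M} (Q : Quad M N a) (h : N)
    (hh : h * Q.σ h = 1) : ∃ τ : N, τ ≠ 0 ∧ τ = h * Q.σ τ := by
  by_cases h1 : h = -1
  · exact ⟨Q.r, Q.r_ne, by rw [h1, Q.σ_r]; ring⟩
  · refine ⟨1 + h, ?_, ?_⟩
    · intro h2; exact h1 (by linear_combination h2)
    · rw [map_add, map_one]
      linear_combination -hh

theorem Quad.fixed_class (hM : FF k M) (hN : FF k' N) (Q : Quad M N (algebraMap k M ε))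
    (E : Div N) (hE : dg k' E = 0) (h : N) (hh : h ≠ 0) (hσ : Q.cj E = E + hN.div h) :
    ∃ (E2 : Div N) (g : N), g ≠ 0 ∧ E + hN.div g = E2 + Q.cj E2 := by
  choose s hs using Q.exists_ext hN
  -- make the divisor invariant
  obtain ⟨u, hu⟩ := Q.norm h
  have hu0 : u ≠ 0 := by
    rintro rfl
    rw [map_zero] at hu
    exact (mul_ne_zero hh (Q.σ_ne hh)) hu
  have hdiv : hN.div h + hN.div (Q.σ h) = 0 := by
    have := Q.cj_cj E
    rw [hσ, map_add, hσ, Q.cj_div hN, add_assoc] at this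
    exact left_eq_add.mp this.symm
  obtain ⟨γ, hγ, hγu, hγd⟩ := Q.unit_norm hM hN u hu0 (by
    intro w
    rw [← hu, w.ord_mul _ _ hh (Q.σ_ne hh)]
    exact DFunLike.congr_fun hdiv w)
  have hh' : (h / γ) * Q.σ (h / γ) = 1 := by
    rw [map_div₀, div_mul_div_comm, hu, hγu, div_self (Quad.alg_ne hu0)]
  obtain ⟨τ, hτ, hτ2⟩ := Q.h90 _ hh'
  have hdτ : hN.div τ = hN.div h + hN.div (Q.σ τ) := by
    conv_lhs => rw [hτ2]
    rw [hN.div_mul (div_ne_zero hh hγ) (Q.σ_ne hτ), div_eq_mul_inv,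
      hN.div_mul hh (inv_ne_zero hγ), hN.div_inv, hγd]
    simp
  set E' := E + hN.div τ with hE'
  have hfix : Q.cj E' = E' := by
    rw [hE', map_add, hσ, Q.cj_div hN, hdτ, add_assoc]
  have hE'0 : dg k' E' = 0 := by rw [hE', map_add, hE, hN.dg_div, add_zero]
  -- descend to `M`
  have hsinj : Function.Injective s := fun v v' hvv => by rw [← hs v, ← hs v', hvv]
  let D : Div M := Finsupp.comapDomain s E' hsinj.injOn
  have hD : ∀ w, D (Q.res w) = E' w := by
    intro w
    have h1 : D (Q.res w) = E' (s (Q.res w)) := rfl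
    rw [h1]
    rcases Q.fibre (w := w) (w' := s (Q.res w)) (hs _).symm with h | h
    · rw [h]
    · rw [h, ← Q.cj_apply, hfix]
  -- degree zero, by torsion
  have hD0 : dg k D = 0 := by
    have := hN.finite_pic
    let c : hN.Pic := ((⟨E', hE'0⟩ : FF.Div0 k' N) : hN.Pic)
    have hc : Nat.card hN.Pic • c = 0 := card_nsmul_eq_zero'
    have hpos : 0 < Nat.card hN.Pic := Nat.card_pos
    set n := Nat.card hN.Pic
    have hc2 : ((n • (⟨E', hE'0⟩ : FF.Div0 k' N) : FF.Div0 k' N) : hN.Pic) = ((0 : FF.Div0 k' N) : hN.Pic) := hc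
    obtain ⟨g, hg, hgE⟩ := hN.pic_eq.mp hc2.symm
    have hgE' : n • E' = hN.div g := by simpa using hgE
    obtain ⟨x, hx⟩ := Q.norm g
    have hx0 : x ≠ 0 := by
      rintro rfl
      rw [map_zero] at hx
      exact (mul_ne_zero hg (Q.σ_ne hg)) hx
    have : (2 * n) • D = hM.div x := by
      ext v
      obtain ⟨w, rfl⟩ := Q.exists_ext hN v
      have e1 : w.ord g = n * E' w := by
        rw [← hN.div_apply w g, ← hgE', Finsupp.smul_apply, nsmul_eq_mul]
      have e2 : (Q.conj w).ord g = n * E' w := by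
        rw [← hN.div_apply _ g, ← hgE', Finsupp.smul_apply, nsmul_eq_mul, ← Q.cj_apply, hfix]
      rw [Finsupp.smul_apply, hD, FF.div_apply, ← Q.ord_alg hN, ← hx, w.ord_mul _ _ hg (Q.σ_ne hg),
        e1, ← Q.conj_ord, e2, nsmul_eq_mul]
      push_cast; ring
    have h3 := congrArg (dg k) this
    rw [hM.dg_div, map_nsmul] at h3
    rcases smul_eq_zero.mp h3 with h4 | h4
    · omega
    · exact h4
  -- apply Lemma A
  obtain ⟨n1, hA⟩ := hM.lemmaA
  obtain ⟨P⟩ := hM.ne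
  let m := n1.toNat
  have hd1 : (1 : ℤ) ≤ P.deg k := by exact_mod_cast hM.deg_pos P
  obtain ⟨f, hf, -, hET⟩ := hA (D + single P (2 * (m : ℤ))) (single P (2 * (m : ℤ)))
    (by
      rw [map_add, hD0, dg_single]
      have : n1 ≤ m := Int.self_le_toNat _
      have : (0 : ℤ) ≤ m := by positivity
      nlinarith)
    (by rw [map_add, hD0, zero_add])
    (by rw [Finsupp.single_nonneg]; positivity)
    (by
      classical
      intro v _
      rw [Finsupp.single_apply]
      split_ifs
      · exact even_two_mul _
      · exact Even.zero)
  obtain ⟨E2, hE2⟩ := Q.exists_half s hs (E' + hN.div (algebraMap M N f))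
    (by
      intro w
      have h1 : E' (Q.conj w) = E' w := by rw [← Q.cj_apply, hfix]
      have h2 : hN.div (algebraMap M N f) (Q.conj w) = hN.div (algebraMap M N f) w := by
        rw [FF.div_apply, FF.div_apply, Q.conj_ord, Q.σ_alg]
      change E' (Q.conj w) + hN.div (algebraMap M N f) (Q.conj w) =
        E' w + hN.div (algebraMap M N f) w
      rw [h1, h2])
    (by
      classical
      intro w hw
      have h1 := hET (Q.res w) (Q.odd_deg hM hN w hw)
      rw [Finsupp.add_apply, Finsupp.add_apply, hD, FF.div_apply, ← Q.ord_alg hN,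
        Finsupp.single_apply] at h1
      rw [Finsupp.add_apply, FF.div_apply]
      rw [Int.even_iff] at h1 ⊢
      split_ifs at h1 <;> omega)
  refine ⟨E2, τ * algebraMap M N f, mul_ne_zero hτ (Quad.alg_ne hf), ?_⟩
  rw [hN.div_mul hτ (Quad.alg_ne hf), ← add_assoc, ← hE2]

/-- Lemma B -/
theorem Quad.lemmaB (hM : FF k M) (hN : FF k' N) (Q : Quad M N (algebraMap k M ε)) (f : M)
    (hf : f ≠ 0) (h : ∀ v : Place M, Odd (v.deg k) → Even (v.ord f)) :
    ∃ y z : M, f = y ^ 2 - algebraMap k M ε * z ^ 2 := by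
  choose s hs using Q.exists_ext hN
  have hcj0 : ∀ E : Div N, dg k' E = 0 → dg k' (Q.cj E) = 0 := fun E hE => by
    rw [Q.dg_cj hN, hE]
  obtain ⟨E, hE⟩ := Q.exists_half s hs (hN.div (algebraMap M N f))
    (fun w => by rw [FF.div_apply, FF.div_apply, Q.conj_ord, Q.σ_alg])
    (fun w hw => by
      rw [FF.div_apply, Q.ord_alg hN]
      exact h _ (Q.odd_deg hM hN w hw))
  have hE0 : dg k' E = 0 := by
    have h1 := congrArg (dg k') hE
    rw [hN.dg_div, map_add, Q.dg_cj hN] at h1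
    omega
  have hfin := hN.finite_pic
  let s0 : FF.Div0 k' N →+ FF.Div0 k' N := (Q.cj.comp (FF.Div0 k' N).subtype).codRestrict _
    (fun E => hcj0 _ E.2)
  have hs0 : ∀ E, ((s0 E : FF.Div0 k' N) : Div N) = Q.cj E := fun E => rfl
  let sP : hN.Pic →+ hN.Pic := QuotientAddGroup.map _ _ s0 (by
    intro x hx
    rw [AddSubgroup.mem_comap, AddSubgroup.mem_addSubgroupOf]
    rw [AddSubgroup.mem_addSubgroupOf] at hx
    obtain ⟨g, hg, hx⟩ := hx
    exact ⟨Q.σ g, Q.σ_ne hg, by rw [hs0, hx, Q.cj_div hN]⟩)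
  have hsP : ∀ E : FF.Div0 k' N, sP (E : hN.Pic) = ((s0 E : FF.Div0 k' N) : hN.Pic) := fun E => rfl
  obtain ⟨y, hy⟩ := herbrand sP
    (by
      intro x
      obtain ⟨E, rfl⟩ := QuotientAddGroup.mk_surjective x
      rw [hsP, hsP]
      congr 1
      apply Subtype.ext
      rw [hs0, hs0, Q.cj_cj])
    (by
      intro x hx
      obtain ⟨E, rfl⟩ := QuotientAddGroup.mk_surjective x
      rw [hsP] at hx
      obtain ⟨g, hg, hgE⟩ := hN.pic_eq.mp hx.symm
      obtain ⟨E2, g2, hg2, hE2⟩ := Q.fixed_class hM hN E E.2 g hg hgE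
      have hE20 : dg k' E2 = 0 := by
        have h1 := congrArg (dg k') hE2
        rw [map_add, hN.dg_div, FF.mem_Div0.mp E.2, map_add, Q.dg_cj hN] at h1
        omega
      refine ⟨((⟨E2, hE20⟩ : FF.Div0 k' N) : hN.Pic), ?_⟩
      rw [hsP, ← QuotientAddGroup.mk_add, hN.pic_eq]
      exact ⟨g2, hg2, hE2.symm⟩)
    ((⟨E, hE0⟩ : FF.Div0 k' N) : hN.Pic)
    (by
      rw [hsP, ← QuotientAddGroup.mk_add, ← QuotientAddGroup.mk_zero]
      symm
      rw [hN.pic_eq]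
      refine ⟨algebraMap M N f, Quad.alg_ne hf, ?_⟩
      rw [hE]; simp [hs0])
  obtain ⟨C, rfl⟩ := QuotientAddGroup.mk_surjective y
  rw [hsP, ← QuotientAddGroup.mk_sub] at hy
  obtain ⟨g, hg, hgE⟩ := hN.pic_eq.mp hy.symm
  have hgE' : E = C - Q.cj C + hN.div g := by simpa [hs0] using hgE
  have hdiv : hN.div (algebraMap M N f) = hN.div (g * Q.σ g) := by
    rw [hE, hN.div_mul hg (Q.σ_ne hg), hgE', map_add, map_sub, Q.cj_cj, Q.cj_div hN]
    abel
  obtain ⟨n, hn⟩ := Q.norm g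
  have hn0 : n ≠ 0 := by
    rintro rfl
    rw [map_zero] at hn
    exact (mul_ne_zero hg (Q.σ_ne hg)) hn
  obtain ⟨γ, hγ, hγu, -⟩ := Q.unit_norm hM hN (f / n) (div_ne_zero hf hn0) (by
    intro w
    rw [map_div₀, w.ord_div _ _ (Quad.alg_ne hf) (Quad.alg_ne hn0), ← hn]
    have := DFunLike.congr_fun hdiv w
    rw [FF.div_apply, FF.div_apply] at this
    omega)
  obtain ⟨y, z, hyz⟩ := Q.span (g * γ)
  refine ⟨y, z, (algebraMap M N).injective ?_⟩
  have e1 : algebraMap M N f = (g * γ) * Q.σ (g * γ) := by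
    rw [map_mul, mul_mul_mul_comm, hn, hγu, ← map_mul, mul_div_cancel₀ _ hn0]
  rw [e1, hyz]
  simp only [map_add, map_mul, map_sub, map_pow, Q.σ_alg, Q.σ_r]
  linear_combination (-(algebraMap M N z) ^ 2) * Q.r_sq

end LemmaB
end FFD

namespace FFD
open IsDedekindDomain WithZero

section Dedekind
variable {B L : Type*} [CommRing B] [IsDedekindDomain B] [Field L] [Algebra B L] [IsFractionRing B L]

/-- the place of `L` attached to a maximal ideal of `B` -/
noncomputable def Place.ofPrime (L : Type*) [Field L] [Algebra B L] [IsFractionRing B L]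
    (P : HeightOneSpectrum B) : Place L where
  ord x := - WithZero.log (P.valuation L x)
  ord_zero := by simp
  ord_mul x y hx hy := by
    rw [map_mul, WithZero.log_mul (by simpa using hx) (by simpa using hy)]; ring
  ord_add x y hx hy hxy := by
    have h := (P.valuation L).map_add x y
    have hx' : P.valuation L x ≠ 0 := by simpa using hx
    have hy' : P.valuation L y ≠ 0 := by simpa using hy
    have hxy' : P.valuation L (x + y) ≠ 0 := by simpa only [ne_eq, Valuation.zero_iff] using hxy
    rcases le_max_iff.mp h with h | h
    · rw [← WithZero.log_le_log hxy' hx'] at h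
      exact (min_le_left _ _).trans (neg_le_neg h)
    · rw [← WithZero.log_le_log hxy' hy'] at h
      exact (min_le_right _ _).trans (neg_le_neg h)
  surj := by
    obtain ⟨π, hπ⟩ := P.valuation_exists_uniformizer L
    refine ⟨π, ?_, ?_⟩
    · rintro rfl
      rw [map_zero] at hπ
      exact WithZero.exp_ne_zero hπ.symm
    · rw [hπ]; simp

theorem Place.ofPrime_ge_zero (P : HeightOneSpectrum B) (x : L) :
    (Place.ofPrime L P).Ge x 0 ↔ P.valuation L x ≤ 1 := by
  by_cases hx : x = 0
  · simp [hx, Place.Ge]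
  · have hx' : P.valuation L x ≠ 0 := by simpa using hx
    simp only [Place.Ge, hx, false_or]
    rw [← WithZero.log_le_log hx' one_ne_zero, WithZero.log_one]
    change 0 ≤ - _ ↔ _
    omega

theorem Place.ofPrime_ge_one (P : HeightOneSpectrum B) (x : L) :
    (Place.ofPrime L P).Ge x 1 ↔ P.valuation L x < 1 := by
  by_cases hx : x = 0
  · simp [hx, Place.Ge]
  · have hx' : P.valuation L x ≠ 0 := by simpa using hx
    simp only [Place.Ge, hx, false_or]
    rw [← WithZero.log_lt_log hx' one_ne_zero, WithZero.log_one]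
    change 1 ≤ - _ ↔ _
    omega

theorem exists_prime_of_vsr (A : ValuationSubring L) (hA : A ≠ ⊤)
    (hB : ∀ b : B, algebraMap B L b ∈ A) :
    ∃ P : HeightOneSpectrum B, ∀ x, (Place.ofPrime L P).Ge x 0 → x ∈ A := by
  let g : B →+* A := (algebraMap B L).codRestrict A.toSubring hB
  let p : Ideal B := (IsLocalRing.maximalIdeal A).comap g
  have hp : p.IsPrime := Ideal.comap_isPrime g _
  have hu : ∀ b : B, b ∉ p → (algebraMap B L b)⁻¹ ∈ A := by
    intro b hb
    have h1 : IsUnit (g b) := by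
      by_contra h
      exact hb ((IsLocalRing.mem_maximalIdeal _).mpr h)
    obtain ⟨c, hc⟩ := h1.exists_right_inv
    have h2 : algebraMap B L b * (c : L) = 1 := congrArg Subtype.val hc
    rw [← eq_inv_of_mul_eq_one_right h2]
    exact c.2
  have hne : p ≠ ⊥ := by
    intro h
    apply hA
    rw [eq_top_iff]
    intro x _
    obtain ⟨a, b, hb, rfl⟩ := IsFractionRing.div_surjective (A := B) x
    rw [div_eq_mul_inv]
    apply A.mul_mem _ _ (hB a)
    apply hu
    rw [h]
    simpa using hb
  refine ⟨⟨p, hp, hne⟩, fun x hx => ?_⟩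
  rw [Place.ofPrime_ge_zero] at hx
  obtain ⟨n, d, hd⟩ := HeightOneSpectrum.exists_primeCompl_mul_eq_of_integer _ x hx
  have hd0 : algebraMap B L (d : B) ≠ 0 := by
    intro h
    have : (d : B) = 0 := by simpa using h
    exact d.2 (by rw [this]; exact Ideal.zero_mem _)
  rw [eq_div_of_mul_eq hd0 hd, div_eq_mul_inv]
  exact A.mul_mem _ _ (hB n) (hu d d.2)

/-- the valuation ring of a place -/
def Place.vsr {L : Type*} [Field L] (v : Place L) : ValuationSubring L where
  carrier := {x | v.Ge x 0}
  mul_mem' ha hb := by simpa using Place.Ge.mul ha hb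
  one_mem' := v.ge_one_zero
  add_mem' ha hb := Place.Ge.add ha hb
  zero_mem' := Or.inl rfl
  neg_mem' ha := Place.Ge.neg ha
  mem_or_inv_mem' x := by
    by_cases h : v.Ge x 0
    · exact Or.inl h
    · right
      obtain ⟨h0, h1⟩ := Place.not_ge h
      right
      rw [v.ord_inv]; omega

theorem Place.mem_vsr {L : Type*} [Field L] (v : Place L) (x : L) : x ∈ v.vsr ↔ v.Ge x 0 := Iff.rfl

theorem Place.vsr_ne {L : Type*} [Field L] (v : Place L) : v.vsr ≠ ⊤ := by
  intro h
  obtain ⟨x, hx, hx1⟩ := v.exists_ord (-1)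
  have : x ∈ v.vsr := by rw [h]; trivial
  rw [Place.mem_vsr, v.ge_iff hx] at this
  omega

theorem exists_prime_of_place (v : Place L) (hB : ∀ b : B, v.Ge (algebraMap B L b) 0) :
    ∃ P : HeightOneSpectrum B, Place.ofPrime L P = v := by
  obtain ⟨P, hP⟩ := exists_prime_of_vsr v.vsr v.vsr_ne hB
  exact ⟨P, Place.eq_of_le hP⟩

variable (B) in
theorem finite_supp (f : L) (hf : f ≠ 0) :
    {v : Place L | (∀ b : B, v.Ge (algebraMap B L b) 0) ∧ v.ord f ≠ 0}.Finite := by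
  apply Set.Finite.subset
    (((HeightOneSpectrum.Support.finite B f).union
      (HeightOneSpectrum.Support.finite B f⁻¹)).image (Place.ofPrime L))
  rintro v ⟨h1, h2⟩
  obtain ⟨P, rfl⟩ := exists_prime_of_place v h1
  refine ⟨P, ?_, rfl⟩
  have h0 : ∀ x : L, x ≠ 0 → (Place.ofPrime L P).ord x < 0 → P ∈ HeightOneSpectrum.Support B x := by
    intro x hx h
    change 1 < P.valuation L x
    by_contra h'
    rw [not_lt, ← Place.ofPrime_ge_zero, Place.ge_iff hx] at h'
    omega
  rcases lt_or_gt_of_ne h2 with h | h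
  · exact Or.inl (h0 f hf h)
  · right
    apply h0 _ (inv_ne_zero hf)
    rw [Place.ord_inv]; omega

theorem resfin_prime (P : HeightOneSpectrum B) [Finite (B ⧸ P.asIdeal)] :
    ∃ S : Finset L, ∀ x, (Place.ofPrime L P).Ge x 0 → ∃ s ∈ S, (Place.ofPrime L P).Ge (x - s) 1 := by
  classical
  choose s hs using Ideal.Quotient.mk_surjective (I := P.asIdeal)
  have := Fintype.ofFinite (B ⧸ P.asIdeal)
  refine ⟨Finset.univ.image (fun c => algebraMap B L (s c)), fun x hx => ?_⟩
  rw [Place.ofPrime_ge_zero] at hx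
  obtain ⟨n, d, hd⟩ := HeightOneSpectrum.exists_primeCompl_mul_eq_of_integer _ x hx
  have hmax : P.asIdeal.IsMaximal := P.isMaximal
  obtain ⟨d', hd'⟩ := Ideal.Quotient.exists_inv (I := P.asIdeal)
    (a := Ideal.Quotient.mk P.asIdeal d) (by
      intro h
      exact d.2 (Ideal.Quotient.eq_zero_iff_mem.mp h))
  refine ⟨algebraMap B L (s (Ideal.Quotient.mk _ n * d')), by simp, ?_⟩
  set b := s (Ideal.Quotient.mk _ n * d') with hb
  have h1 : n - b * d ∈ P.asIdeal := by
    rw [← Ideal.Quotient.eq_zero_iff_mem, map_sub, map_mul, hb, hs, mul_assoc, mul_comm d', hd',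
      mul_one, sub_self]
  rw [Place.ofPrime_ge_one]
  have h2 : (x - algebraMap B L b) * algebraMap B L d = algebraMap B L (n - b * d) := by
    rw [sub_mul, hd, map_sub, map_mul]
  have h3 := congrArg (P.valuation L) h2
  rw [map_mul, (HeightOneSpectrum.valuation_eq_one_iff_notMem P).mpr d.2, mul_one] at h3
  rw [h3, HeightOneSpectrum.valuation_lt_one_iff_mem]
  exact h1

end Dedekind
end FFD

namespace FFD
open IsDedekindDomain
open scoped Polynomial

section Half
variable (k0 L : Type*) [Field k0] [Finite k0] [Field L] [Algebra (RatFunc k0) L]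
  [FiniteDimensional (RatFunc k0) L] [Algebra.IsSeparable (RatFunc k0) L]

/-- A valuation ring containing `t` contains the integral closure. -/
theorem vsr_mem (A : ValuationSubring L)
    [Algebra k0[X] L] [IsScalarTower k0[X] (RatFunc k0) L] (ht : algebraMap k0[X] L Polynomial.X ∈ A)
    (b : integralClosure k0[X] L) : (b : L) ∈ A := by
  have hconst : ∀ c : k0, algebraMap k0[X] L (Polynomial.C c) ∈ A := by
    intro c
    have := Fintype.ofFinite k0
    have h1 : (algebraMap k0[X] L (Polynomial.C c)) ^ Fintype.card k0 =
        algebraMap k0[X] L (Polynomial.C c) := by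
      rw [← map_pow, ← map_pow, FiniteField.pow_card]
    set x := algebraMap k0[X] L (Polynomial.C c)
    rcases A.mem_or_inv_mem x with h | h
    · exact h
    · by_cases hx : x = 0
      · rw [hx]; exact A.zero_mem
      · have h2 : x = (x⁻¹) ^ (Fintype.card k0 - 2) := by
          have h3 := Fintype.one_lt_card (α := k0)
          obtain ⟨n, hn⟩ : ∃ n, Fintype.card k0 = n + 2 := ⟨_, (Nat.sub_add_cancel h3).symm⟩
          rw [hn] at h1 ⊢
          have h4 : x ^ n * x = 1 := by
            apply mul_right_cancel₀ hx
            rw [one_mul, mul_assoc, ← pow_two, ← pow_add, h1]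
          rw [Nat.add_sub_cancel, inv_pow]
          exact eq_inv_of_mul_eq_one_right h4
        rw [h2]
        exact pow_mem h _
  have hpoly : ∀ p : k0[X], algebraMap k0[X] L p ∈ A := by
    intro p
    induction p using Polynomial.induction_on' with
    | add p q hp hq => rw [map_add]; exact A.add_mem _ _ hp hq
    | monomial n a =>
      rw [← Polynomial.C_mul_X_pow_eq_monomial, map_mul, map_pow]
      exact A.mul_mem _ _ (hconst a) (pow_mem ht _)
  let g : k0[X] →+* A := (algebraMap k0[X] L).codRestrict A.toSubring hpoly
  have hintA : IsIntegral A (b : L) := by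
    obtain ⟨p, hp, hp0⟩ := b.2
    refine ⟨p.map g, hp.map g, ?_⟩
    rw [Polynomial.eval₂_map]
    exact hp0
  obtain ⟨y, hy⟩ := (IsIntegrallyClosed.isIntegral_iff (R := A) (K := L)).mp hintA
  rw [← hy]
  exact y.2

theorem finite_quot_poly (p : Ideal k0[X]) (hp : p ≠ ⊥) : Finite (k0[X] ⧸ p) := by
  obtain ⟨f, hf, hf0⟩ := Submodule.exists_mem_ne_zero_of_ne_bot hp
  have h1 : Finite (k0[X] ⧸ Ideal.span {f}) := by
    have : Module.Finite k0 (AdjoinRoot f) := (AdjoinRoot.powerBasis hf0).finite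
    exact Module.finite_of_finite k0 (M := AdjoinRoot f)
  exact Finite.of_surjective _ (Ideal.Quotient.factor_surjective
    ((Ideal.span_singleton_le_iff_mem _).mpr hf))

theorem finite_quot [Algebra k0[X] L] [IsScalarTower k0[X] (RatFunc k0) L]
    (P : Ideal (integralClosure k0[X] L)) (hP : P ≠ ⊥) :
    Finite (integralClosure k0[X] L ⧸ P) := by
  have hdd : IsNoetherian k0[X] (integralClosure k0[X] L) :=
    IsIntegralClosure.isNoetherian _ (RatFunc k0) L _
  have hne : P.under k0[X] ≠ ⊥ := by
    obtain ⟨x, hx, hx0⟩ := Submodule.exists_mem_ne_zero_of_ne_bot hP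
    exact Ideal.comap_ne_bot_of_integral_mem (R := k0[X]) (I := P) hx0 hx
      (Algebra.IsIntegral.isIntegral x)
  have := finite_quot_poly k0 _ hne
  have : Module.Finite (k0[X] ⧸ P.under k0[X]) (integralClosure k0[X] L ⧸ P) := inferInstance
  exact Module.finite_of_finite (k0[X] ⧸ P.under k0[X])

theorem half :
    (∀ f : L, f ≠ 0 → {v : Place L | v.Ge (algebraMap (RatFunc k0) L RatFunc.X) 0 ∧
      v.ord f ≠ 0}.Finite) ∧
    (∀ v : Place L, v.Ge (algebraMap (RatFunc k0) L RatFunc.X) 0 →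
      ∃ S : Finset L, ∀ x, v.Ge x 0 → ∃ s ∈ S, v.Ge (x - s) 1) ∧
    (∀ A : ValuationSubring L, A ≠ ⊤ → algebraMap (RatFunc k0) L RatFunc.X ∈ A →
      ∃ v : Place L, ∀ x, v.Ge x 0 → x ∈ A) ∧ Nonempty (Place L) := by
  let : Algebra k0[X] L := ((algebraMap (RatFunc k0) L).comp (algebraMap k0[X] (RatFunc k0))).toAlgebra
  have : IsScalarTower k0[X] (RatFunc k0) L := IsScalarTower.of_algebraMap_eq (fun _ => rfl)
  have : IsFractionRing (integralClosure k0[X] L) L :=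
    integralClosure.isFractionRing_of_finite_extension (RatFunc k0) L
  have : IsDedekindDomain (integralClosure k0[X] L) :=
    IsIntegralClosure.isDedekindDomain k0[X] (RatFunc k0) L _
  have hX : algebraMap (RatFunc k0) L RatFunc.X = algebraMap k0[X] L Polynomial.X := by
    rw [← RatFunc.algebraMap_X]; rfl
  have hge : ∀ v : Place L, v.Ge (algebraMap k0[X] L Polynomial.X) 0 →
      ∀ b : integralClosure k0[X] L, v.Ge (algebraMap _ L b) 0 := fun v hv b =>
    vsr_mem k0 L v.vsr hv b
  rw [hX]
  refine ⟨fun f hf => ?_, fun v hv => ?_, fun A hA ht => ?_, ?_⟩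
  · apply (finite_supp (integralClosure k0[X] L) f hf).subset
    rintro v ⟨h1, h2⟩
    exact ⟨hge v h1, h2⟩
  · obtain ⟨P, rfl⟩ := exists_prime_of_place v (hge v hv)
    have := finite_quot k0 L P.asIdeal P.ne_bot
    exact resfin_prime P
  · obtain ⟨P, hP⟩ := exists_prime_of_vsr (B := integralClosure k0[X] L) A hA
      (fun b => vsr_mem k0 L A ht b)
    exact ⟨_, hP⟩
  · have hnf : ¬ IsField (integralClosure k0[X] L) :=
      FunctionField.ringOfIntegers.not_isField k0 L
    obtain ⟨M, hM, hM2⟩ := Ring.not_isField_iff_exists_prime.mp hnf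
    exact ⟨Place.ofPrime L (⟨M, hM2, hM⟩ : HeightOneSpectrum (integralClosure k0[X] L))⟩

end Half

/-- the twist `X ↦ 1/X` of the rational function field -/
theorem exists_twist (k0 : Type*) [Field k0] :
    ∃ e : RatFunc k0 ≃+* RatFunc k0, e RatFunc.X = RatFunc.X⁻¹ := by
  have hinj : Function.Injective (Polynomial.aeval (R := k0) (RatFunc.X⁻¹ : RatFunc k0)) := by
    rw [← transcendental_iff_injective]
    intro h
    have := h.inv
    rw [inv_inv] at this
    exact RatFunc.transcendental_X this
  let g : RatFunc k0 →ₐ[k0] RatFunc k0 := IsFractionRing.liftAlgHom (g := Polynomial.aeval (R := k0) (RatFunc.X⁻¹ : RatFunc k0)) hinj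
  have hg : g RatFunc.X = RatFunc.X⁻¹ := by
    rw [← RatFunc.algebraMap_X]
    simp only [g, IsFractionRing.liftAlgHom_apply]
    rw [IsFractionRing.lift_algebraMap]
    simp
  have hgg : ∀ x, g (g x) = x := by
    intro x
    have : (g.comp g) = AlgHom.id k0 _ := by
      apply IsLocalization.algHom_ext (nonZeroDivisors k0[X])
      apply Polynomial.algHom_ext
      change g (g (algebraMap k0[X] (RatFunc k0) Polynomial.X)) =
        algebraMap k0[X] (RatFunc k0) Polynomial.X
      rw [RatFunc.algebraMap_X, hg, map_inv₀, hg, inv_inv]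
    exact DFunLike.congr_fun this x
  exact ⟨RingEquiv.ofBijective (g : RatFunc k0 →+* RatFunc k0)
    ⟨g.toRingHom.injective, fun x => ⟨g x, hgg x⟩⟩, hg⟩

/-- `L` is finite and separable over a rational function field with constants `k0` -/
def Br (k0 L : Type*) [Field k0] [Field L] : Prop :=
  ∃ _ : Algebra (RatFunc k0) L, FiniteDimensional (RatFunc k0) L ∧ Algebra.IsSeparable (RatFunc k0) L

theorem isIntegral_closure_range {k0 L : Type*} [Field k0] [Field L] [Algebra k0 L] (f : L)
    (hf : IsIntegral (Subring.closure (Set.range (algebraMap k0 L))) f) : IsIntegral k0 f := by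
  obtain ⟨p, hp, hp0⟩ := hf
  have hr : ∀ x : Subring.closure (Set.range (algebraMap k0 L)), ∃ c : k0, algebraMap k0 L c = x := by
    intro x
    have h1 : Subring.closure (Set.range (algebraMap k0 L)) ≤ (algebraMap k0 L).range :=
      Subring.closure_le.mpr (by simp)
    exact h1 x.2
  let p' : L[X] := p.map (algebraMap _ L)
  have hl : p' ∈ Polynomial.lifts (algebraMap k0 L) := by
    rw [Polynomial.lifts_iff_coeff_lifts]
    intro n
    rw [Polynomial.coeff_map]
    obtain ⟨c, hc⟩ := hr (p.coeff n)
    exact ⟨c, hc⟩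
  obtain ⟨q, hq, -, hq1⟩ := Polynomial.lifts_and_natDegree_eq_and_monic hl (hp.map _)
  refine ⟨q, hq1, ?_⟩
  rw [← Polynomial.eval_map, hq, Polynomial.eval_map]
  exact hp0

theorem pow_eq_one_of_integral {k0 L : Type*} [Field k0] [Finite k0] [Field L] [Algebra k0 L] (f : L)
    (hf : IsIntegral k0 f) (h0 : f ≠ 0) : ∃ n : ℕ, 0 < n ∧ f ^ n = 1 := by
  have : FiniteDimensional k0 (IntermediateField.adjoin k0 {f}) :=
    IntermediateField.adjoin.finiteDimensional hf
  have : Finite (IntermediateField.adjoin k0 {f}) := Module.finite_of_finite k0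
  let g : IntermediateField.adjoin k0 {f} := IntermediateField.AdjoinSimple.gen k0 f
  have hg : (g : L) = f := IntermediateField.AdjoinSimple.coe_gen k0 f
  have hg0 : g ≠ 0 := by
    intro h
    apply h0
    rw [← hg, h]; rfl
  refine ⟨_, orderOf_pos (Units.mk0 g hg0), ?_⟩
  have := congrArg (fun u : (IntermediateField.adjoin k0 {f})ˣ => ((u : IntermediateField.adjoin k0 {f}) : L)) (pow_orderOf_eq_one (Units.mk0 g hg0))
  have h3 : (g : L) ^ orderOf (Units.mk0 g hg0) = 1 := this
  exact (congrArg (fun z : L => z ^ orderOf (Units.mk0 g hg0)) hg).symm.trans h3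

theorem Br.ff {k0 L : Type*} [Field k0] [Finite k0] [Field L] (h : Br k0 L) :
    ∃ k : Subfield L, ∃ _ : Finite k, FF k L := by
  obtain ⟨hA, hF, hS⟩ := h
  obtain ⟨supp1, res1, vr1, ne1⟩ := half k0 L
  obtain ⟨e, he⟩ := exists_twist k0
  let t : L := algebraMap (RatFunc k0) L RatFunc.X
  have key2 : (∀ f : L, f ≠ 0 → {v : Place L | v.Ge t⁻¹ 0 ∧ v.ord f ≠ 0}.Finite) ∧
    (∀ v : Place L, v.Ge t⁻¹ 0 →
      ∃ S : Finset L, ∀ x, v.Ge x 0 → ∃ s ∈ S, v.Ge (x - s) 1) ∧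
    (∀ A : ValuationSubring L, A ≠ ⊤ → t⁻¹ ∈ A →
      ∃ v : Place L, ∀ x, v.Ge x 0 → x ∈ A) := by
    let hA' : Algebra (RatFunc k0) L := ((algebraMap (RatFunc k0) L).comp (e : RatFunc k0 →+* RatFunc k0)).toAlgebra
    have hcomp : RingHom.comp (@algebraMap (RatFunc k0) L _ _ hA') (e.symm : RatFunc k0 →+* RatFunc k0) =
        RingHom.comp (RingEquiv.refl L : L →+* L) (@algebraMap (RatFunc k0) L _ _ hA) := by
      ext x
      change (@algebraMap (RatFunc k0) L _ _ hA) (e (e.symm x)) = (@algebraMap (RatFunc k0) L _ _ hA) x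
      rw [e.apply_symm_apply]
    have h1 : @FiniteDimensional (RatFunc k0) L _ _ hA'.toModule :=
      @Module.Finite.of_equiv_equiv (RatFunc k0) L (RatFunc k0) L _ _ _ _ hA hA' e.symm
        (RingEquiv.refl L) hcomp hF
    have h2 : @Algebra.IsSeparable (RatFunc k0) L _ _ hA' :=
      @Algebra.IsSeparable.of_equiv_equiv (RatFunc k0) L (RatFunc k0) L _ _ _ _ hA hA' e.symm
        (RingEquiv.refl L) hcomp hS
    obtain ⟨supp2, res2, vr2, -⟩ := @half k0 L _ _ _ hA' h1 h2
    have ht : (@algebraMap (RatFunc k0) L _ _ hA') RatFunc.X = t⁻¹ := by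
      change (@algebraMap (RatFunc k0) L _ _ hA) (e RatFunc.X) = _
      rw [he, map_inv₀]
    rw [ht] at supp2 res2 vr2
    exact ⟨supp2, res2, vr2⟩
  obtain ⟨supp2, res2, vr2⟩ := key2
  have hor : ∀ v : Place L, v.Ge t 0 ∨ v.Ge t⁻¹ 0 := fun v => v.vsr.mem_or_inv_mem t
  have hres : ∀ v : Place L, ∃ S : Finset L, ∀ x, v.Ge x 0 → ∃ s ∈ S, v.Ge (x - s) 1 := by
    intro v
    rcases hor v with h | h
    · exact res1 v h
    · exact res2 v h
  have hvr : ∀ A : ValuationSubring L, A ≠ ⊤ → ∃ v : Place L, ∀ x, v.Ge x 0 → x ∈ A := by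
    intro A hA
    rcases A.mem_or_inv_mem t with h | h
    · exact vr1 A hA h
    · exact vr2 A hA h
  let hk0 : Algebra k0 L := ((algebraMap (RatFunc k0) L).comp RatFunc.C).toAlgebra
  let k : Subfield L := (algebraicClosure k0 L).toSubfield
  have hk : ∀ x : L, x ∈ k ↔ IsIntegral k0 x := fun x => by
    change x ∈ algebraicClosure k0 L ↔ _
    rw [mem_algebraicClosure_iff, isAlgebraic_iff_isIntegral]
  have hord : ∀ x ∈ k, ∀ v : Place L, v.ord x = 0 := by
    intro x hx v
    by_cases h0 : x = 0
    · rw [h0, v.ord_zero]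
    · obtain ⟨n, hn, hn1⟩ := pow_eq_one_of_integral x ((hk x).mp hx) h0
      have := congrArg v.ord hn1
      rw [v.ord_pow, v.ord_one] at this
      rcases mul_eq_zero.mp this with h | h
      · omega
      · exact h
  have hfin : Finite k := by
    obtain ⟨v⟩ := ne1
    obtain ⟨S, hSS⟩ := hres v
    choose s hs hs1 using hSS
    have hge : ∀ x : k, v.Ge (x : L) 0 := fun x => Or.inr (hord x x.2 v).ge
    apply Finite.of_injective (fun x : k => (⟨s x (hge x), hs x (hge x)⟩ : S))
    intro x y hxy
    have h1 : s x (hge x) = s y (hge y) := congrArg Subtype.val hxy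
    have h2 := (hs1 x (hge x)).sub (hs1 y (hge y))
    rw [h1, sub_sub_sub_cancel_right] at h2
    rcases h2 with h2 | h2
    · exact Subtype.ext (sub_eq_zero.mp h2)
    · have := hord _ (sub_mem x.2 y.2) v
      omega
  refine ⟨k, hfin, ?_, hres, hvr, ?_, ne1⟩
  · intro f hf
    apply ((supp1 f hf).union (supp2 f hf)).subset
    intro v hv
    rcases hor v with h | h
    · exact Or.inl ⟨h, hv⟩
    · exact Or.inr ⟨h, hv⟩
  · intro f hf
    by_contra hcon
    have h1 : ¬ IsIntegral k0 f := fun h => hcon ⟨⟨f, (hk f).mpr h⟩, rfl⟩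
    have h2 : f ∉ (integralClosure (Subring.closure (Set.range (algebraMap k0 L))) L).toSubring :=
      fun h => h1 (isIntegral_closure_range f h)
    rw [← iInf_valuationSubring_superset, Subring.mem_iInf] at h2
    push Not at h2
    obtain ⟨⟨V, hV⟩, hV2⟩ := h2
    obtain ⟨v, hv⟩ := hvr V (by
      rintro rfl
      exact hV2 trivial)
    exact hV2 (hv f (hf v))

end FFD

namespace FFD
open scoped Polynomial

theorem quad_fact {M : Type*} [Field M] (a : M) (ha : ∀ s : M, s * s ≠ a) :
    Fact (∀ r : M, r ^ 2 ≠ a + 0 * r) := ⟨fun r h => ha r (by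
    rw [← pow_two, h]; ring)⟩

/-- the field `M(√a)` -/
theorem exists_quad {M : Type*} [Field M] (a : M) (h2 : (2 : M) ≠ 0)
    [hf : Fact (∀ r : M, r ^ 2 ≠ a + 0 * r)] :
      Nonempty (Quad M (QuadraticAlgebra M a 0) a) := by
  have ha : ∀ s : M, s * s ≠ a := fun s h => hf.1 s (by rw [pow_two, h]; ring)
  refine ⟨⟨⟨0, 1⟩, ?_, ?_, ha, h2,
    (starRingEnd (QuadraticAlgebra M a 0)), ?_, ?_⟩⟩
  · ext <;> simp
  · intro z
    refine ⟨z.re, z.im, ?_⟩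
    ext <;> simp
  · intro x
    change star (algebraMap M (QuadraticAlgebra M a 0) x) = _
    ext <;> simp
  · change star (⟨0, 1⟩ : QuadraticAlgebra M a 0) = _
    ext <;> simp

theorem Br.quad {k0 M N : Type*} [Field k0] [Field M] [Field N] [Algebra M N] {a : M}
    (h : Br k0 M) (Q : Quad M N a) : Br k0 N := by
  obtain ⟨h1, h2, h3⟩ := h
  let _ : Algebra (RatFunc k0) N := ((algebraMap M N).comp (algebraMap (RatFunc k0) M)).toAlgebra
  have : IsScalarTower (RatFunc k0) M N := IsScalarTower.of_algebraMap_eq (fun _ => rfl)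
  have hfd : Module.Finite M N := by
    classical
    refine ⟨⟨{1, Q.r}, ?_⟩⟩
    rw [eq_top_iff]
    intro z _
    obtain ⟨x, y, rfl⟩ := Q.span z
    rw [Finset.coe_insert, Finset.coe_singleton, Submodule.mem_span_pair]
    exact ⟨x, y, by simp [Algebra.smul_def]⟩
  have hr0 := Q.r_ne
  have ha0 : a ≠ 0 := by
    intro h
    apply Q.nonsq 0
    rw [h, mul_zero]
  have hsep : Algebra.IsSeparable M N := by
    have hr : Q.r ∈ separableClosure M N := by
      rw [mem_separableClosure_iff]
      have hs : (Polynomial.X ^ 2 - Polynomial.C a : M[X]).Separable := by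
        apply Polynomial.separable_X_pow_sub_C _ _ ha0
        exact_mod_cast Q.two
      apply hs.of_dvd
      apply minpoly.dvd
      simp [pow_two, Q.r_sq]
    constructor
    intro z
    rw [← mem_separableClosure_iff]
    obtain ⟨x, y, rfl⟩ := Q.span z
    exact add_mem (IntermediateField.algebraMap_mem _ _)
      (mul_mem (IntermediateField.algebraMap_mem _ _) hr)
  exact ⟨inferInstance, Module.Finite.trans M N, Algebra.IsSeparable.trans (RatFunc k0) M N⟩

end FFD

namespace FFD

theorem Place.even_form {L : Type*} [Field L] (v : Place L) {b : L} (hb : v.ord b = 0)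
    (ho : v.Odd b) {y z : L} (h : y ≠ 0 ∨ z ≠ 0) :
    y ^ 2 - b * z ^ 2 ≠ 0 ∧ Even (v.ord (y ^ 2 - b * z ^ 2)) := by
  by_cases hz : z = 0
  · subst hz
    have hy : y ≠ 0 := by simpa using h
    simp only [ne_eq, OfNat.ofNat_ne_zero, not_false_eq_true, zero_pow, mul_zero, sub_zero]
    refine ⟨pow_ne_zero _ hy, ?_⟩
    rw [v.ord_pow]
    exact even_two_mul _
  · obtain ⟨h1, h2⟩ := Place.not_ge (ho (y / z))
    have hb0 : b ≠ 0 := by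
      rintro rfl
      exact ho 0 (Or.inl (by simp))
    have h3 : y ^ 2 - b * z ^ 2 = z ^ 2 * (y / z * (y / z) - b) := by field_simp
    rw [h3]
    refine ⟨mul_ne_zero (pow_ne_zero _ hz) h1, ?_⟩
    rw [v.ord_mul _ _ (pow_ne_zero _ hz) h1, v.ord_pow]
    apply Even.add (even_two_mul _)
    set t := y / z
    by_cases ht : v.Ge t 0
    · have h4 : v.Ge (t * t - b) 0 := by
        have := (ht.mul ht).sub (Or.inr hb.ge : v.Ge b 0)
        simpa using this
      have := h4.le h1
      have : v.ord (t * t - b) = 0 := by omega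
      rw [this]; exact Even.zero
    · obtain ⟨h4, h5⟩ := Place.not_ge ht
      have h6 := Place.ord_add_of_lt (v := v) (x := t * t) (y := -b) (mul_ne_zero h4 h4)
        (neg_ne_zero.mpr hb0) (by rw [v.ord_mul _ _ h4 h4, v.ord_neg]; omega)
      rw [sub_eq_add_neg, h6.2, v.ord_mul _ _ h4 h4]
      exact Even.add_self _

theorem FF.odd_mul {k L : Type*} [Field k] [Finite k] [Field L] [Algebra k L] (hF : FF k L)
    (h2 : (2 : L) ≠ 0) (v : Place L) {a b : L} (ha : v.ord a = 0) (hb : v.ord b = 0)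
    (hoa : v.Odd a) (hob : v.Odd b) : ∃ y : L, v.Ge (y * y - a * b) 1 := by
  have := hF.finκ v
  have : Fintype (v.κ k) := Fintype.ofFinite _
  have hcκ : ringChar (v.κ k) ≠ 2 := by
    intro h
    apply h2
    have := ringChar.Nat.cast_ringChar (R := v.κ k)
    rw [h] at this
    have h3 : algebraMap k (v.κ k) 2 = 0 := by rw [map_ofNat]; exact_mod_cast this
    rw [map_eq_zero] at h3
    rw [← map_ofNat (algebraMap k L), h3, map_zero]
  have ne0 : ∀ {a : L}, v.Odd a → a ≠ 0 := by
    rintro a h rfl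
    exact h 0 (Or.inl (by simp))
  let mk : ∀ a : L, v.ord a = 0 → v.κ k := fun a ha => Ideal.Quotient.mk (v.mm k) ⟨a, Or.inr ha.ge⟩
  have key : ∀ a (ha : v.ord a = 0), v.Odd a → mk a ha ≠ 0 ∧ ¬ IsSquare (mk a ha) := by
    intro a ha hoa
    constructor
    · intro h
      rw [Ideal.Quotient.eq_zero_iff_mem] at h
      have : v.Ge a 1 := h
      have := this.le (ne0 hoa)
      omega
    · rintro ⟨y, hy⟩
      obtain ⟨⟨c, hc0⟩, rfl⟩ := Ideal.Quotient.mk_surjective y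
      rw [← map_mul] at hy
      exact hoa c ((v.κ_mk_eq k).mp hy.symm)
  obtain ⟨a0, a1⟩ := key a ha hoa
  obtain ⟨b0, b1⟩ := key b hb hob
  have e1 := (FiniteField.pow_dichotomy hcκ a0).resolve_left
      (fun h => a1 ((FiniteField.isSquare_iff hcκ a0).mpr h))
  have e2 := (FiniteField.pow_dichotomy hcκ b0).resolve_left
      (fun h => b1 ((FiniteField.isSquare_iff hcκ b0).mpr h))
  have e3 : IsSquare (mk a ha * mk b hb) := by
    rw [FiniteField.isSquare_iff hcκ (mul_ne_zero a0 b0), mul_pow, e1, e2]; norm_num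
  obtain ⟨y, hy⟩ := e3
  obtain ⟨⟨c, hc0⟩, rfl⟩ := Ideal.Quotient.mk_surjective y
  rw [← map_mul, ← map_mul] at hy
  exact ⟨c, (v.κ_mk_eq k).mp hy.symm⟩

/-- Norm forms: Lemma B in its final shape. -/
theorem Br.normform {k0 L : Type*} [Field k0] [Finite k0] [Field L] (hL : Br k0 L) (h2 : (2 : L) ≠ 0)
    {ε : L} (hε0 : ε ≠ 0) (hε : ∀ v : Place L, v.Ge ε 0) {f : L} (hf : f ≠ 0)
    (h : ∀ v : Place L, v.Odd ε → Even (v.ord f)) : ∃ y z : L, f = y ^ 2 - ε * z ^ 2 := by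
  by_cases hs : ∃ s, s * s = ε
  · obtain ⟨s, rfl⟩ := hs
    have hs0 : s ≠ 0 := by rintro rfl; simp at hε0
    refine ⟨(f + 1) / 2, (f - 1) / (2 * s), ?_⟩
    field_simp
    ring
  · push Not at hs
    have := quad_fact ε hs
    obtain ⟨Q⟩ := exists_quad ε h2
    obtain ⟨k, hk, hF⟩ := hL.ff
    obtain ⟨k', hk', hN⟩ := (hL.quad Q).ff
    obtain ⟨ε', rfl⟩ := hF.const ε hε
    refine Quad.lemmaB hF hN Q f hf (fun v hv => h v ?_)
    have := hF.finκ v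
    rw [v.odd_iff]
    · exact hv
    · intro h
      apply h2
      rw [← map_ofNat (algebraMap k L), h, map_zero]
    · rintro ⟨s, hs'⟩
      exact hs (algebraMap k L s) (by rw [← map_mul, ← hs'])

theorem norm_extract0 {L : Type*} [Field L] (h2 : (2 : L) ≠ 0) {ε : L} (hε0 : ε ≠ 0) (a g y z : L)
    (h : g = y ^ 2 - ε * z ^ 2) : ∃ A y z : L, g * (a - ε * A ^ 2) = y ^ 2 - ε * z ^ 2 := by
  refine ⟨(a / ε + 1) / 2, ε * z * ((a / ε - 1) / 2), y * ((a / ε - 1) / 2), ?_⟩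
  rw [h]
  field_simp
  ring

theorem norm_extract {L M : Type*} [Field L] [Field M] [Algebra L M] {a : L} (Q : Quad L M a) {ε : L}
    (hε0 : ε ≠ 0) (g : L) (Y Z : M)
    (h : algebraMap L M g = Y ^ 2 - algebraMap L M ε * Z ^ 2) :
    ∃ A y z : L, g * (a - ε * A ^ 2) = y ^ 2 - ε * z ^ 2 := by
  obtain ⟨y0, y1, rfl⟩ := Q.span Y
  obtain ⟨z0, z1, rfl⟩ := Q.span Z
  have h1 : algebraMap L M g + algebraMap L M 0 * Q.r =
      algebraMap L M (y0 ^ 2 + y1 ^ 2 * a - ε * (z0 ^ 2 + z1 ^ 2 * a)) +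
        algebraMap L M (2 * (y0 * y1 - ε * (z0 * z1))) * Q.r := by
    rw [map_zero, zero_mul, add_zero, h]
    simp only [map_add, map_sub, map_mul, map_pow, map_ofNat, ← Q.r_sq]
    ring
  obtain ⟨h3, h4⟩ := Q.unique h1
  have h5 : y0 * y1 = ε * (z0 * z1) := by
    have := mul_eq_zero.mp h4.symm
    exact sub_eq_zero.mp (this.resolve_left Q.two)
  by_cases hy1 : y1 = 0
  · subst hy1
    by_cases hz1 : z1 = 0
    · subst hz1
      exact norm_extract0 Q.two hε0 a g y0 z0 (by rw [h3]; ring)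
    · have hz0 : z0 = 0 := by
        rw [mul_zero] at h5
        have := mul_eq_zero.mp h5.symm
        exact (mul_eq_zero.mp (this.resolve_left hε0)).resolve_right hz1
      subst hz0
      refine ⟨y0 / (ε * z1), 0, z1 * (a - ε * (y0 / (ε * z1)) ^ 2), ?_⟩
      rw [h3]
      field_simp
      ring
  · refine ⟨z0 / y1, y1 * (a - ε * (z0 / y1) ^ 2), z1 * (a - ε * (z0 / y1) ^ 2), ?_⟩
    have h6 : y0 = ε * (z0 * z1) / y1 := by field_simp; linear_combination h5
    rw [h3, h6]
    field_simp
    ring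

/-- solvability of one norm equation -/
theorem Br.solve {k0 L : Type*} [Field k0] [Finite k0] [Field L] (hL : Br k0 L) (h2 : (2 : L) ≠ 0)
    {ε : L} (hε0 : ε ≠ 0) (hε : ∀ v : Place L, v.Ge ε 0) {a g : L} (ha : a ≠ 0) (hg : g ≠ 0)
    (h : ∀ v : Place L, v.Odd ε → Odd (v.ord g) → Odd (v.ord a)) :
    ∃ A y z : L, g * (a - ε * A ^ 2) = y ^ 2 - ε * z ^ 2 := by
  by_cases hs : ∃ s, s * s = a
  · obtain ⟨s, rfl⟩ := hs
    have hs0 : s ≠ 0 := by rintro rfl; simp at ha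
    obtain ⟨y, z, hyz⟩ := hL.normform h2 hε0 hε hg (fun v hv => by
      by_contra hodd
      rw [Int.not_even_iff_odd] at hodd
      have := h v hv hodd
      rw [v.ord_mul _ _ hs0 hs0, Int.odd_iff] at this
      omega)
    exact norm_extract0 h2 hε0 _ g y z hyz
  · push Not at hs
    have := quad_fact a hs
    obtain ⟨Q⟩ := exists_quad a h2
    have hM := hL.quad Q
    obtain ⟨Y, Z, hYZ⟩ := hM.normform (f := algebraMap _ _ g) (ε := algebraMap _ _ ε) Q.two'
      (Quad.alg_ne hε0)
      (fun w => (Q.ge_res_zero w ε).mpr (hε _)) (Quad.alg_ne hg) (fun w hw => by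
        rw [Q.ord_res]
        by_cases hodd : Odd ((Q.res w).ord g)
        · have h3 := h _ (Q.odd_res hw) hodd
          have h4 := congrArg w.ord Q.r_sq
          rw [w.ord_mul _ _ Q.r_ne Q.r_ne, Q.ord_res] at h4
          have h5 : Even (Q.e w * (Q.res w).ord a) := h4 ▸ Even.add_self _
          rw [Int.even_mul] at h5
          rcases h5 with h5 | h5
          · exact h5.mul_right _
          · exact absurd h3 (Int.not_odd_iff_even.mpr h5)
        · rw [Int.not_odd_iff_even] at hodd
          exact hodd.mul_left _)
    exact norm_extract Q hε0 g Y Z hYZ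

end FFD

namespace FFD

/-- The basic diophantine system. -/
def Sys {R : Type*} [CommRing R] (ε δ c e : R) : Prop :=
  ∃ f f' A₁ y₁ z₁ A₂ y₂ z₂ A₃ y₃ z₃ : R, f * f' = 1 ∧
    f * (δ - ε * A₁ ^ 2) = y₁ ^ 2 - ε * z₁ ^ 2 ∧
    f * (ε * δ - ε * A₂ ^ 2) = y₂ ^ 2 - ε * z₂ ^ 2 ∧
    c * f * (e - ε * A₃ ^ 2) = y₃ ^ 2 - ε * z₃ ^ 2

theorem Sys.map {R S : Type*} [CommRing R] [CommRing S] (g : R →+* S) {ε δ c e : R}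
    (h : Sys ε δ c e) : Sys (g ε) (g δ) (g c) (g e) := by
  obtain ⟨f, f', A₁, y₁, z₁, A₂, y₂, z₂, A₃, y₃, z₃, h0, h1, h2, h3⟩ := h
  refine ⟨g f, g f', g A₁, g y₁, g z₁, g A₂, g y₂, g z₂, g A₃, g y₃, g z₃, ?_, ?_, ?_, ?_⟩
  · rw [← map_mul, h0, map_one]
  · simpa using congrArg g h1
  · simpa using congrArg g h2
  · simpa using congrArg g h3

theorem no_fixed {k K L : Type*} [Field k] [Finite k] [Field K] [Algebra k K] [Field L] [Algebra K L]
    {x : K} (hF : FF k K) (Q : Quad K L x) {ε : K} (hε0 : ∀ v : Place K, v.ord ε = 0)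
    (h2L : ∀ P : Place L, P.ord 2 = 0)
    (P : Place L) (hP : P.Odd (algebraMap K L ε)) (he : Odd (Q.e P)) : Q.conj P ≠ P := by
  intro hc
  have hx0 : x ≠ 0 := by
    intro h
    apply Q.nonsq 0
    rw [h, mul_zero]
  have h4 := congrArg P.ord Q.r_sq
  rw [P.ord_mul _ _ Q.r_ne Q.r_ne, Q.ord_res] at h4
  have h5 : Even (Q.e P * (Q.res P).ord x) := h4 ▸ Even.add_self _
  rw [Int.even_mul] at h5
  obtain ⟨m, hm⟩ := h5.resolve_left (Int.not_even_iff_odd.mpr he)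
  obtain ⟨π, hπ0, hπ⟩ := (Q.res P).exists_ord m
  let a : K := x / (π * π)
  have hπ' : algebraMap K L π ≠ 0 := Quad.alg_ne hπ0
  let Q' : Quad K L a :=
    { r := Q.r / algebraMap K L π
      r_sq := by
        simp only [a]
        rw [div_mul_div_comm, Q.r_sq, map_div₀, map_mul]
      span := by
        intro z
        obtain ⟨u, w, rfl⟩ := Q.span z
        refine ⟨u, w * π, ?_⟩
        rw [map_mul]
        field_simp
      nonsq := by
        intro s hs
        apply Q.nonsq (s * π)
        simp only [a] at hs
        rw [eq_div_iff (mul_ne_zero hπ0 hπ0)] at hs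
        rw [← hs]; ring
      two := Q.two
      σ := Q.σ
      σ_alg := Q.σ_alg
      σ_r := by rw [map_div₀, Q.σ_r, Q.σ_alg, neg_div] }
  have hres : Q'.res P = Q.res P := Q'.res_eq (fun x hx => (Q.ge_res_zero P x).mp hx)
  have hva : (Q.res P).ord a = 0 := by
    simp only [a]
    rw [Place.ord_div _ _ _ hx0 (mul_ne_zero hπ0 hπ0), Place.ord_mul _ _ _ hπ0 hπ0, hπ, hm]; ring
  have hPa : P.ord (algebraMap K L a) = 0 := by rw [Q.ord_res, hva, mul_zero]
  have ho := Q'.odd_of_conj_eq P (h2L P) hPa hc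
  rw [hres] at ho
  obtain ⟨y, hy⟩ := hF.odd_mul Q.two (Q.res P) hva (hε0 _) ho (Q.odd_res hP)
  rw [← Q.ge_res_pos] at hy
  have hr0 := Q'.r_ne
  have hr1 : P.ord Q'.r = 0 := by
    have := congrArg P.ord Q'.r_sq
    rw [P.ord_mul _ _ hr0 hr0, hPa] at this
    omega
  apply hP (algebraMap K L y / Q'.r)
  have h7 : algebraMap K L y / Q'.r * (algebraMap K L y / Q'.r) - algebraMap K L ε =
      algebraMap K L (y * y - a * ε) * (Q'.r⁻¹ * Q'.r⁻¹) := by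
    rw [map_sub, map_mul, map_mul, ← Q'.r_sq]
    field_simp
  rw [h7]
  have h8 : P.Ge (Q'.r⁻¹ * Q'.r⁻¹) 0 := by
    right
    rw [P.ord_mul _ _ (inv_ne_zero hr0) (inv_ne_zero hr0), P.ord_inv, hr1]
    norm_num
  simpa using hy.mul h8

theorem exists_f {k0 K L : Type*} [Field k0] [Finite k0] [Field K] [Field L] [Algebra K L]
    {x : K} (hK : Br k0 K) (Q : Quad K L x) {ε : K} (hε : ∀ v : Place K, v.Ge ε 0)
    (hε0 : ∀ v : Place K, v.ord ε = 0)
    (v0 : Place K) : ∃ f : L, f ≠ 0 ∧ ∀ P : Place L, P.Odd (algebraMap K L ε) →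
      (Odd (P.ord f) ↔ Q.res P = v0 ∧ Odd (Q.e P)) := by
  obtain ⟨k, hk, hF⟩ := hK.ff
  obtain ⟨k', hk', hN⟩ := (hK.quad Q).ff
  have h2L : ∀ P : Place L, P.ord 2 = 0 := by
    intro P
    have := P.ord_const k' (2 : k')
    rwa [map_ofNat] at this
  by_cases hU : ∃ P : Place L, P.Odd (algebraMap K L ε) ∧ Q.res P = v0 ∧ Odd (Q.e P)
  · obtain ⟨P, hP, hPv, he⟩ := hU
    have hne := no_fixed hF Q hε0 h2L P hP he
    obtain ⟨g, hg0, hg⟩ := hN.exists_parity (P := P) (Q := Q.conj P) hne.symm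
      (Q.deg_conj hN P).symm
    obtain ⟨ε', hε'⟩ := hN.const (algebraMap K L ε) (fun w => (Q.ge_res_zero w ε).mpr (hε _))
    refine ⟨g, hg0, fun P' hP' => ?_⟩
    have := hN.finκ P'
    have hodd : Odd (P'.deg k') := by
      rw [← P'.odd_iff (k := k') (ε := ε'), hε']
      · exact hP'
      · intro h
        apply Q.two'
        rw [← map_ofNat (algebraMap k' L), h, map_zero]
      · rintro ⟨s, hs'⟩
        apply hP (algebraMap k' L s)
        left
        rw [← hε', hs', map_mul, sub_self]
    rw [hg P' hodd]
    constructor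
    · rintro (rfl | rfl)
      · exact ⟨hPv, he⟩
      · rw [Q.res_conj, Q.e_conj]
        exact ⟨hPv, he⟩
    · rintro ⟨h1, -⟩
      exact Q.fibre (hPv.trans h1.symm)
  · push Not at hU
    refine ⟨1, one_ne_zero, fun P hP => ?_⟩
    rw [P.ord_one]
    constructor
    · intro h; simp at h
    · rintro ⟨h1, h3⟩
      exact absurd h3 (by simpa using hU P hP h1)

/-- The properties required of the parameters of the system. -/
structure Params {K : Type*} [Field K] (ε δ c e : K) (v0 : Place K) : Prop where
  ε_nonsq : ∀ s, s * s ≠ ε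
  ε_const : ∀ v : Place K, v.Ge ε 0
  odd : v0.Odd ε
  δ0 : δ ≠ 0
  c0 : c ≠ 0
  e0 : e ≠ 0
  hδ : Odd (v0.ord δ)
  hc : Odd (v0.ord c)
  hce : ∀ v : Place K, v ≠ v0 → Odd (v.ord c) → Odd (v.ord e)
  hδe : ∀ v : Place K, Odd (v.ord δ) → v.Ge (e - 1) 1
  hδc : ∀ v : Place K, v ≠ v0 → Odd (v.ord δ) → Even (v.ord c)

theorem Params.ε0 {K : Type*} [Field K] {ε δ c e : K} {v0 : Place K} (h : Params ε δ c e v0) : ε ≠ 0 := by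
  rintro rfl
  exact h.ε_nonsq 0 (by simp)

theorem FF.const_ord {k K : Type*} [Field k] [Finite k] [Field K] [Algebra k K] (hF : FF k K) {ε : K}
    (h : ∀ v : Place K, v.Ge ε 0) (v : Place K) : v.ord ε = 0 := by
  obtain ⟨c, rfl⟩ := hF.const ε h
  exact v.ord_const k c

theorem Params.complete {k0 K L : Type*} [Field k0] [Finite k0] [Field K] [Field L] [Algebra K L]
    {x : K} (hK : Br k0 K) (Q : Quad K L x) {ε δ c e : K} {v0 : Place K} (h : Params ε δ c e v0) :
    Sys (algebraMap K L ε) (algebraMap K L δ) (algebraMap K L c) (algebraMap K L e) := by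
  obtain ⟨k, hk, hF⟩ := hK.ff
  have hL := hK.quad Q
  have hε0 := hF.const_ord h.ε_const
  obtain ⟨f, hf0, hf⟩ := exists_f hK Q h.ε_const hε0 v0
  have h1 : algebraMap K L ε ≠ 0 := Quad.alg_ne h.ε0
  have h2 : ∀ P : Place L, P.Ge (algebraMap K L ε) 0 := fun w => (Q.ge_res_zero w ε).mpr (h.ε_const _)
  have hδ0 : algebraMap K L δ ≠ 0 := Quad.alg_ne h.δ0
  have hc0 : algebraMap K L c ≠ 0 := Quad.alg_ne h.c0
  have he0 : algebraMap K L e ≠ 0 := Quad.alg_ne h.e0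
  have hfd : ∀ P : Place L, P.Odd (algebraMap K L ε) → Odd (P.ord f) →
      Odd (P.ord (algebraMap K L δ)) := by
    intro P hP ho
    obtain ⟨h3, h4⟩ := (hf P hP).mp ho
    rw [Q.ord_res, h3]
    exact h4.mul h.hδ
  obtain ⟨A₁, y₁, z₁, e₁⟩ := hL.solve Q.two' h1 h2 hδ0 hf0 hfd
  obtain ⟨A₂, y₂, z₂, e₂⟩ := hL.solve Q.two' h1 h2 (mul_ne_zero h1 hδ0) hf0 (fun P hP ho => by
    rw [P.ord_mul _ _ h1 hδ0, Q.ord_res P ε, hε0, mul_zero, zero_add]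
    exact hfd P hP ho)
  obtain ⟨A₃, y₃, z₃, e₃⟩ := hL.solve Q.two' h1 h2 he0 (mul_ne_zero hc0 hf0) (fun P hP ho => by
    rw [P.ord_mul _ _ hc0 hf0, Q.ord_res P c] at ho
    rw [Q.ord_res]
    have h3 := hf P hP
    by_cases hv : Q.res P = v0
    · exfalso
      have h5 := h.hc
      rw [hv] at ho h3
      rw [Int.odd_add, Int.odd_mul] at ho
      rw [← Int.not_odd_iff_even] at ho
      tauto
    · have h6 : Even (P.ord f) := by
        rw [← Int.not_odd_iff_even]; tauto
      have h7 : Odd (Q.e P * (Q.res P).ord c) := by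
        rw [Int.odd_add] at ho
        exact ho.mpr h6
      rw [Int.odd_mul] at h7
      exact h7.1.mul (h.hce _ hv h7.2))
  exact ⟨f, f⁻¹, A₁, y₁, z₁, A₂, y₂, z₂, A₃, y₃, z₃, mul_inv_cancel₀ hf0, e₁, e₂, e₃⟩

end FFD

namespace FFD

theorem Place.odd_div {L : Type*} [Field L] (v : Place L) {ε u c : L} (hε0 : ε ≠ 0) (hε : v.ord ε = 0)
    (ho : v.Odd ε) (hu0 : u ≠ 0) (hu : v.ord u = 0) (hc : v.Ge (c * c - u) 1) :
    v.ord (u / ε) = 0 ∧ v.Odd (u / ε) := by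
  have h0 : v.ord (u / ε) = 0 := by rw [v.ord_div _ _ hu0 hε0, hu, hε, sub_zero]
  refine ⟨h0, fun d hd => ?_⟩
  have h1 : v.Ge (u / ε - d * d) (v.ord (u / ε) + 1) := by
    rw [h0, zero_add, ← neg_sub]
    exact hd.neg
  obtain ⟨h2, h3⟩ := Place.ord_eq_of_sub (div_ne_zero hu0 hε0) h1
  have hd0 : d ≠ 0 := fun h => h2 (by rw [h, zero_mul])
  rw [h0, v.ord_mul _ _ hd0 hd0] at h3
  apply ho (c / d)
  have h4 : c / d * (c / d) - ε = ((c * c - u) + (-ε) * (d * d - u / ε)) * (d⁻¹ * d⁻¹) := by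
    field_simp
    ring
  rw [h4]
  have h5 : v.Ge (d⁻¹ * d⁻¹) 0 := by
    right
    rw [v.ord_mul _ _ (inv_ne_zero hd0) (inv_ne_zero hd0), v.ord_inv]
    omega
  have h6 : v.Ge (-ε) 0 := by
    right
    rw [v.ord_neg, hε]
  have h7 : v.Ge ((-ε) * (d * d - u / ε)) 1 := by simpa using h6.mul hd
  simpa using (hc.add h7).mul h5

theorem Place.even_of_norm {L : Type*} [Field L] (v : Place L) {ε g T y z : L} (hε : v.ord ε = 0)
    (ho : v.Odd ε) (hg : g ≠ 0) (hT : T ≠ 0) (hTe : Even (v.ord T))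
    (h : g * T = y ^ 2 - ε * z ^ 2) : Even (v.ord g) := by
  have h1 : y ≠ 0 ∨ z ≠ 0 := by
    by_contra hn
    push Not at hn
    rw [hn.1, hn.2] at h
    simp [hg, hT] at h
  obtain ⟨-, h2⟩ := v.even_form hε ho h1
  rw [← h, v.ord_mul _ _ hg hT, Int.even_add] at h2
  exact h2.mpr hTe

theorem Params.sound {k0 K : Type*} [Field k0] [Finite k0] [Field K] (h2 : (2 : K) ≠ 0)
    (hK : Br k0 K) {ε δ c e : K} {v0 : Place K} (h : Params ε δ c e v0) : ¬ Sys ε δ c e := by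
  classical
  obtain ⟨k, hk, hF⟩ := hK.ff
  have hε := hF.const_ord h.ε_const
  have hε0 := h.ε0
  rintro ⟨f, f', A₁, y₁, z₁, A₂, y₂, z₂, A₃, y₃, z₃, e0, e1, e2, e3⟩
  have hf0 : f ≠ 0 := left_ne_zero_of_mul_eq_one e0
  have key : ∀ v : Place K, v.Odd ε → (Odd (v.ord f) ↔ v = v0) := by
    intro v hv
    by_cases hd : Odd (v.ord δ)
    · have he1 := h.hδe v hd
      have he2 : v.ord e = 0 := by
        have := (Place.ord_eq_of_sub (v := v) (x := 1) (y := e) one_ne_zero (by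
          rw [v.ord_one, zero_add, ← neg_sub]; exact he1.neg)).2
        rw [this, v.ord_one]
      obtain ⟨h3, h4⟩ := v.odd_div (c := 1) hε0 (hε v) hv h.e0 he2 (by
        rw [mul_one, ← neg_sub]; exact he1.neg)
      obtain ⟨h5, h6⟩ := v.even_form h3 h4 (y := A₃) (z := 1) (Or.inr one_ne_zero)
      have h7 : e - ε * A₃ ^ 2 = (-ε) * (A₃ ^ 2 - e / ε * 1 ^ 2) := by field_simp; ring
      have hnε : -ε ≠ 0 := neg_ne_zero.mpr hε0
      have h8 := v.even_of_norm (hε v) hv (mul_ne_zero h.c0 hf0) (T := e - ε * A₃ ^ 2)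
        (by rw [h7]; exact mul_ne_zero hnε h5)
        (by rw [h7, v.ord_mul _ _ hnε h5, v.ord_neg, hε, zero_add]; exact h6) e3
      rw [v.ord_mul _ _ h.c0 hf0, Int.even_add] at h8
      constructor
      · intro hodd
        by_contra hne
        have := h8.mp (h.hδc v hne hd)
        exact (Int.not_even_iff_odd.mpr hodd) this
      · rintro rfl
        rw [← Int.not_even_iff_odd, ← h8, Int.not_even_iff_odd]
        exact h.hc
    · have hne : v ≠ v0 := by
        rintro rfl
        exact hd h.hδ
      simp only [hne, iff_false, Int.not_odd_iff_even]
      rw [Int.not_odd_iff_even] at hd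
      obtain ⟨m, hm⟩ := hd
      obtain ⟨π, hπ0, hπ⟩ := v.exists_ord m
      have hu0 : δ / (π * π) ≠ 0 := div_ne_zero h.δ0 (mul_ne_zero hπ0 hπ0)
      have hu : v.ord (δ / (π * π)) = 0 := by
        rw [v.ord_div _ _ h.δ0 (mul_ne_zero hπ0 hπ0), v.ord_mul _ _ hπ0 hπ0, hπ, hm, sub_self]
      have hnε : -ε ≠ 0 := neg_ne_zero.mpr hε0
      by_cases hou : v.Odd (δ / (π * π))
      · obtain ⟨h5, h6⟩ := v.even_form hu hou (y := A₂) (z := π) (Or.inr hπ0)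
        have h7 : ε * δ - ε * A₂ ^ 2 = (-ε) * (A₂ ^ 2 - δ / (π * π) * π ^ 2) := by field_simp; ring
        exact v.even_of_norm (hε v) hv hf0 (T := ε * δ - ε * A₂ ^ 2)
          (by rw [h7]; exact mul_ne_zero hnε h5)
          (by rw [h7, v.ord_mul _ _ hnε h5, v.ord_neg, hε, zero_add]; exact h6) e2
      · unfold Place.Odd at hou
        push Not at hou
        obtain ⟨d, hd⟩ := hou
        obtain ⟨h3, h4⟩ := v.odd_div hε0 (hε v) hv hu0 hu hd
        obtain ⟨h5, h6⟩ := v.even_form h3 h4 (y := A₁) (z := π) (Or.inr hπ0)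
        have h7 : δ - ε * A₁ ^ 2 = (-ε) * (A₁ ^ 2 - δ / (π * π) / ε * π ^ 2) := by field_simp; ring
        exact v.even_of_norm (hε v) hv hf0 (T := δ - ε * A₁ ^ 2)
          (by rw [h7]; exact mul_ne_zero hnε h5)
          (by rw [h7, v.ord_mul _ _ hnε h5, v.ord_neg, hε, zero_add]; exact h6) e1
  obtain ⟨ε', hε'⟩ := hF.const ε h.ε_const
  have hdeg : ∀ v : Place K, v.Odd ε ↔ Odd (v.deg k) := by
    intro v
    have := hF.finκ v
    rw [← v.odd_iff (k := k) (ε := ε'), hε']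
    · intro hh
      apply h2
      rw [← map_ofNat (algebraMap k K), hh, map_zero]
    · rintro ⟨s, hs'⟩
      apply h.ε_nonsq (algebraMap k K s)
      rw [← hε', hs', map_mul]
  have hsum := hF.dg_div f
  have hv0 : Odd (v0.ord f) := (key v0 h.odd).mpr rfl
  have hmem : v0 ∈ (hF.div f).support := by
    rw [Finsupp.mem_support_iff, hF.div_apply]
    intro hh
    rw [hh] at hv0
    simp at hv0
  rw [dg, Finsupp.linearCombination_apply, Finsupp.sum, ← Finset.add_sum_erase _ _ hmem] at hsum
  have heven : Even (∑ v ∈ (hF.div f).support.erase v0, (hF.div f) v • (v.deg k : ℤ)) := by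
    apply Finset.even_sum
    intro v hv
    have hne := Finset.ne_of_mem_erase hv
    rw [hF.div_apply, smul_eq_mul, Int.even_mul]
    by_cases ho : v.Odd ε
    · left
      rw [← Int.not_odd_iff_even, key v ho]
      exact hne
    · right
      rw [hdeg] at ho
      rw [Nat.not_odd_iff_even] at ho
      exact_mod_cast ho
  have hodd : Odd ((hF.div f) v0 • (v0.deg k : ℤ)) := by
    rw [hF.div_apply, smul_eq_mul]
    refine hv0.mul ?_
    exact_mod_cast (hdeg v0).mp h.odd
  have := hodd.add_even heven
  rw [hsum] at this
  simp at this

theorem Params.exist {k K : Type*} [Field k] [Finite k] [Field K] [Algebra k K] (hF : FF k K)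
    {ε : K} (h1 : ∀ s, s * s ≠ ε) (h2 : ∀ v : Place K, v.Ge ε 0) {v0 : Place K} (h3 : v0.Odd ε) :
    ∃ δ c e, Params ε δ c e v0 := by
  classical
  obtain ⟨δ, hδ0, hδ⟩ := v0.exists_ord 1
  let S := (hF.supp δ hδ0).toFinset
  have hS : ∀ v : Place K, v ∈ S ↔ v.ord δ ≠ 0 := fun v => by simp [S]
  have hv0S : v0 ∈ S := by rw [hS, hδ]; norm_num
  obtain ⟨c, hc⟩ := Place.weak_approx S (fun v => if v = v0 then δ else 1) 2
  have hc0' : c ≠ 0 ∧ v0.ord c = v0.ord δ := by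
    apply Place.ord_eq_of_sub hδ0
    have := (hc v0 hv0S).neg
    simp only [if_true] at this
    rw [hδ, ← neg_sub]
    exact this
  have hcS : ∀ v ∈ S, v ≠ v0 → v.ord c = 0 := by
    intro v hv hne
    have := (hc v hv).neg
    simp only [hne, if_false] at this
    rw [neg_sub] at this
    have := (Place.ord_eq_of_sub (v := v) (x := 1) (y := c) one_ne_zero (by
      rw [v.ord_one]; exact this.mono (by norm_num))).2
    rw [this, v.ord_one]
  let T := (hF.supp c hc0'.1).toFinset
  have hT : ∀ v : Place K, v ∈ T ↔ v.ord c ≠ 0 := fun v => by simp [T]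
  choose p hp0 hp using fun v : Place K => v.exists_ord 1
  obtain ⟨e, he⟩ := Place.weak_approx (S ∪ T) (fun v => if v ∈ S then 1 else p v) 2
  have heS : ∀ v ∈ S, v.Ge (e - 1) 1 := by
    intro v hv
    have := he v (Finset.mem_union_left _ hv)
    simp only [hv, if_true] at this
    exact this.mono (by norm_num)
  have heT : ∀ v ∈ T, v ∉ S → v.ord e = 1 := by
    intro v hv hvS
    have := (he v (Finset.mem_union_right _ hv)).neg
    simp only [hvS, if_false] at this
    rw [neg_sub] at this
    rw [(Place.ord_eq_of_sub (hp0 v) (by rw [hp]; exact this)).2, hp]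
  have he0 : e ≠ 0 := by
    rintro rfl
    have := (heS v0 hv0S).le (by norm_num)
    rw [zero_sub, v0.ord_neg, v0.ord_one] at this
    omega
  have oddne : ∀ {n : ℤ}, Odd n → n ≠ 0 := by
    rintro n hn rfl
    simp at hn
  refine ⟨δ, c, e, h1, h2, h3, hδ0, hc0'.1, he0, by rw [hδ]; exact odd_one,
    by rw [hc0'.2, hδ]; exact odd_one, ?_, ?_, ?_⟩
  · intro v hne ho
    have hvT : v ∈ T := (hT v).mpr (oddne ho)
    by_cases hvS : v ∈ S
    · rw [hcS v hvS hne] at ho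
      simp at ho
    · rw [heT v hvT hvS]; exact odd_one
  · intro v ho
    exact heS v ((hS v).mpr (oddne ho))
  · intro v hne ho
    rw [hcS v ((hS v).mpr (oddne ho)) hne]
    exact Even.zero

end FFD

namespace FFD

/-- polynomial functions -/
def PF {σ K : Type*} [Field K] (g : (σ → K) → K) : Prop :=
  ∃ f : MvPolynomial σ K, ∀ a, MvPolynomial.eval a f = g a

namespace PF
variable {σ K : Type*} [Field K] {g h : (σ → K) → K}

theorem const (c : K) : PF (fun _ : σ → K => c) := ⟨MvPolynomial.C c, fun a => by simp⟩
theorem var (i : σ) : PF (fun b : σ → K => b i) := ⟨MvPolynomial.X i, fun a => by simp⟩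
theorem add (hg : PF g) (hh : PF h) : PF (fun b => g b + h b) := by
  obtain ⟨p, hp⟩ := hg
  obtain ⟨q, hq⟩ := hh
  exact ⟨p + q, fun a => by rw [map_add, hp, hq]⟩
theorem mul (hg : PF g) (hh : PF h) : PF (fun b => g b * h b) := by
  obtain ⟨p, hp⟩ := hg
  obtain ⟨q, hq⟩ := hh
  exact ⟨p * q, fun a => by rw [map_mul, hp, hq]⟩
theorem sub (hg : PF g) (hh : PF h) : PF (fun b => g b - h b) := by
  obtain ⟨p, hp⟩ := hg
  obtain ⟨q, hq⟩ := hh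
  exact ⟨p - q, fun a => by rw [map_sub, hp, hq]⟩
theorem pow (hg : PF g) (n : ℕ) : PF (fun b => g b ^ n) := by
  obtain ⟨p, hp⟩ := hg
  exact ⟨p ^ n, fun a => by rw [map_pow, hp]⟩
theorem sum {ι : Type*} (s : Finset ι) (g : ι → (σ → K) → K) (hg : ∀ i, PF (g i)) :
    PF (fun b => ∑ i ∈ s, g i b) := by
  choose p hp using hg
  exact ⟨∑ i ∈ s, p i, fun a => by rw [map_sum]; exact Finset.sum_congr rfl (fun i _ => hp i a)⟩
theorem comp {σ' : Type*} (hg : PF g) (s : σ → (σ' → K) → K) (hs : ∀ i, PF (s i)) :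
    PF (fun b => g (fun i => s i b)) := by
  obtain ⟨p, hp⟩ := hg
  choose q hq using hs
  refine ⟨MvPolynomial.bind₁ q p, fun a => ?_⟩
  beta_reduce
  rw [← hp, ← MvPolynomial.coe_aeval_eq_eval, ← MvPolynomial.coe_aeval_eq_eval]
  change MvPolynomial.aeval a (MvPolynomial.bind₁ q p) = MvPolynomial.aeval (fun i => s i a) p
  rw [MvPolynomial.aeval_bind₁]
  have h1 : (fun i => MvPolynomial.aeval a (q i)) = fun i => s i a := by
    funext i
    exact hq i a
  rw [h1]
end PF

/-- Diophantine predicates in one variable. -/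
def DP {K : Type*} [Field K] (P : K → Prop) : Prop :=
  ∃ (κ τ : Type) (_ : Fintype κ) (_ : Fintype τ) (g : τ → (Option κ → K) → K),
    (∀ t, PF (g t)) ∧ ∀ x, P x ↔ ∃ y : κ → K, ∀ t, g t (fun o => o.elim x y) = 0

theorem DP.congr {K : Type*} [Field K] {P Q : K → Prop} (hP : DP P) (h : ∀ x, Q x ↔ P x) : DP Q := by
  obtain ⟨κ, τ, h1, h2, g, hg, hh⟩ := hP
  exact ⟨κ, τ, h1, h2, g, hg, fun x => (h x).trans (hh x)⟩

theorem DP.or {K : Type*} [Field K] {P Q : K → Prop} (hP : DP P) (hQ : DP Q) :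
    DP (fun x => P x ∨ Q x) := by
  obtain ⟨κ, τ, h1, h2, g, hg, hh⟩ := hP
  obtain ⟨κ', τ', h1', h2', g', hg', hh'⟩ := hQ
  refine ⟨κ ⊕ κ', τ × τ', inferInstance, inferInstance, fun t b =>
    g t.1 (fun o => o.elim (b none) (fun i => b (some (Sum.inl i)))) *
    g' t.2 (fun o => o.elim (b none) (fun i => b (some (Sum.inr i)))), ?_, ?_⟩
  · intro t
    apply PF.mul
    · apply (hg t.1).comp (fun o b => o.elim (b none) (fun i => b (some (Sum.inl i))))
      rintro (_ | i)
      · exact PF.var _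
      · exact PF.var _
    · apply (hg' t.2).comp (fun o b => o.elim (b none) (fun i => b (some (Sum.inr i))))
      rintro (_ | i)
      · exact PF.var _
      · exact PF.var _
  · intro x
    simp only [Option.elim_none, Option.elim_some, mul_eq_zero]
    rw [hh, hh']
    constructor
    · rintro (⟨y, hy⟩ | ⟨y, hy⟩)
      · exact ⟨Sum.elim y 0, fun t => Or.inl (hy t.1)⟩
      · exact ⟨Sum.elim 0 y, fun t => Or.inr (hy t.2)⟩
    · rintro ⟨y, hy⟩
      by_cases h : ∀ t, g t (fun o => o.elim x (fun i => y (Sum.inl i))) = 0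
      · exact Or.inl ⟨_, h⟩
      · push Not at h
        obtain ⟨t, ht⟩ := h
        exact Or.inr ⟨_, fun t' => (hy (t, t')).resolve_left ht⟩

/-- the set `ε y²`, `y ≠ 0`. -/
theorem DP.mul_sq {K : Type*} [Field K] (ε : K) : DP (fun x : K => ∃ y, y ≠ 0 ∧ x = ε * (y * y)) := by
  refine ⟨Bool, Bool, inferInstance, inferInstance, fun t b =>
    if t then b none - ε * (b (some true) * b (some true)) else b (some true) * b (some false) - 1, ?_, ?_⟩
  · rintro (_ | _)
    · exact ((PF.var _).mul (PF.var _)).sub (PF.const 1)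
    · exact (PF.var _).sub ((PF.const ε).mul ((PF.var _).mul (PF.var _)))
  · intro x
    constructor
    · rintro ⟨y, hy, rfl⟩
      refine ⟨fun t => if t then y else y⁻¹, ?_⟩
      rintro (_ | _) <;> simp [hy]
    · rintro ⟨y, hy⟩
      refine ⟨y true, ?_, ?_⟩
      · intro h
        have := hy false
        simp [h] at this
      · have := hy true
        simpa [sub_eq_zero] using this

/-- restriction of scalars -/
theorem DP.restrict {K M : Type*} [Field K] [Field M] [Algebra K M] [FiniteDimensional K M]
    {P : M → Prop} (hP : DP P) : DP (fun x : K => P (algebraMap K M x)) := by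
  obtain ⟨κ, τ, h1, h2, g, hg, hh⟩ := hP
  choose f hf using hg
  let d := Module.finrank K M
  let B : Module.Basis (Fin d) K M := Module.finBasis K M
  let σ := Option (κ × Fin d)
  let PM : ((σ → K) → M) → Prop := fun G => ∀ l, PF (fun b => B.repr (G b) l)
  have hmul : ∀ G H, PM G → PM H → PM (fun b => G b * H b) := by
    intro G H hG hH l
    have : (fun b => B.repr (G b * H b) l) = fun b => ∑ i, ∑ j,
        B.repr (G b) i * (B.repr (H b) j * B.repr (B i * B j) l) := by
      funext b
      conv_lhs => rw [← B.sum_repr (G b), ← B.sum_repr (H b)]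
      rw [Finset.sum_mul_sum]
      simp only [smul_mul_smul_comm, map_sum, map_smul, Finsupp.coe_finsetSum, Finset.sum_apply,
        Finsupp.smul_apply, smul_eq_mul, mul_assoc]
    change PF (fun b => B.repr (G b * H b) l)
    rw [this]
    exact PF.sum _ _ (fun i => PF.sum _ _ (fun j => (hG i).mul ((hH j).mul (PF.const _))))
  have hadd : ∀ G H, PM G → PM H → PM (fun b => G b + H b) := by
    intro G H hG hH l
    simp only [map_add, Finsupp.add_apply]
    exact (hG l).add (hH l)
  let asg : (σ → K) → (Option κ → M) := fun b o =>
    o.elim (algebraMap K M (b none)) (fun i => ∑ l, b (some (i, l)) • B l)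
  have hasg : ∀ o, PM (fun b => asg b o) := by
    rintro (_ | i) l
    · simp only [asg, Option.elim_none, Algebra.algebraMap_eq_smul_one, map_smul, Finsupp.smul_apply,
        smul_eq_mul]
      exact (PF.var _).mul (PF.const _)
    · have : (fun b : σ → K => B.repr (asg b (some i)) l) = fun b => b (some (i, l)) := by
        funext b
        simp only [asg, Option.elim_some]
        rw [B.repr_sum_self]
      rw [this]
      exact PF.var _
  have key : ∀ p : MvPolynomial (Option κ) M, PM (fun b => MvPolynomial.eval (asg b) p) := by
    intro p
    induction p using MvPolynomial.induction_on with
    | C a =>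
      intro l
      simp only [MvPolynomial.eval_C]
      exact PF.const _
    | add p q hp hq =>
      simp only [map_add]
      exact hadd _ _ hp hq
    | mul_X p n hp =>
      simp only [map_mul, MvPolynomial.eval_X]
      exact hmul _ _ hp (hasg n)
  refine ⟨κ × Fin d, τ × Fin d, inferInstance, inferInstance,
    fun t b => B.repr (MvPolynomial.eval (asg b) (f t.1)) t.2, fun t => key _ _, fun x => ?_⟩
  beta_reduce
  rw [hh]
  constructor
  · rintro ⟨y, hy⟩
    refine ⟨fun i => B.repr (y i.1) i.2, fun t => ?_⟩
    have : asg (fun o => o.elim x (fun i => B.repr (y i.1) i.2)) =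
        fun o => o.elim (algebraMap K M x) y := by
      funext o
      rcases o with _ | i
      · rfl
      · simp only [asg, Option.elim_some]
        exact B.sum_repr (y i)
    rw [this, hf, hy]
    simp
  · rintro ⟨y, hy⟩
    refine ⟨fun i => ∑ l, y (i, l) • B l, fun t => ?_⟩
    have h3 : MvPolynomial.eval (asg (fun o => o.elim x y)) (f t) = 0 := by
      apply B.repr.map_eq_zero_iff.mp
      ext l
      exact hy (t, l)
    rw [hf] at h3
    rw [← h3]
    congr 1

/-- the system as a family of equations -/
def SysE {R : Type*} [CommRing R] (ε δ c e : R) (z : Fin 11 → R) : Fin 4 → R :=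
  ![z 0 * z 1 - 1,
    z 0 * (δ - ε * (z 2 * z 2)) - (z 3 * z 3 - ε * (z 4 * z 4)),
    z 0 * (ε * δ - ε * (z 5 * z 5)) - (z 6 * z 6 - ε * (z 7 * z 7)),
    c * z 0 * (e - ε * (z 8 * z 8)) - (z 9 * z 9 - ε * (z 10 * z 10))]

theorem sys_iff {R : Type*} [CommRing R] (ε δ c e : R) :
    Sys ε δ c e ↔ ∃ z : Fin 11 → R, ∀ j, SysE ε δ c e z j = 0 := by
  constructor
  · rintro ⟨f, f', A₁, y₁, z₁, A₂, y₂, z₂, A₃, y₃, z₃, h0, h1, h2, h3⟩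
    refine ⟨![f, f', A₁, y₁, z₁, A₂, y₂, z₂, A₃, y₃, z₃], fun j => ?_⟩
    fin_cases j
    · exact sub_eq_zero.mpr h0
    · simp only [pow_two] at h1
      exact sub_eq_zero.mpr h1
    · simp only [pow_two] at h2
      exact sub_eq_zero.mpr h2
    · simp only [pow_two] at h3
      exact sub_eq_zero.mpr h3
  · rintro ⟨z, hz⟩
    refine ⟨z 0, z 1, z 2, z 3, z 4, z 5, z 6, z 7, z 8, z 9, z 10, ?_, ?_, ?_, ?_⟩
    · exact sub_eq_zero.mp (hz 0)
    · simp only [pow_two]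
      exact sub_eq_zero.mp (hz 1)
    · simp only [pow_two]
      exact sub_eq_zero.mp (hz 2)
    · simp only [pow_two]
      exact sub_eq_zero.mp (hz 3)

/-- The system over `K[√x]` is diophantine in `x`. -/
theorem DP.sys {K : Type*} [Field K] (ε δ c e : K) : DP (fun x : K =>
    Sys (algebraMap K (QuadraticAlgebra K x 0) ε) (algebraMap K (QuadraticAlgebra K x 0) δ)
      (algebraMap K (QuadraticAlgebra K x 0) c) (algebraMap K (QuadraticAlgebra K x 0) e)) := by
  let κ := Fin 11 ⊕ Fin 11
  let F := ∀ b : Option κ → K, QuadraticAlgebra K (b none) 0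
  let P2 : F → Prop := fun h => PF (fun b => (h b).re) ∧ PF (fun b => (h b).im)
  have hmul : ∀ G H : F, P2 G → P2 H → P2 (fun b => G b * H b) := by
    rintro G H ⟨h1, h2⟩ ⟨h3, h4⟩
    constructor
    · simp only [QuadraticAlgebra.re_mul]
      exact (h1.mul h3).add (((PF.var _).mul h2).mul h4)
    · simp only [QuadraticAlgebra.im_mul]
      exact ((h1.mul h4).add (h2.mul h3)).add (((PF.const _).mul h2).mul h4)
  have hsub : ∀ G H : F, P2 G → P2 H → P2 (fun b => G b - H b) := by
    rintro G H ⟨h1, h2⟩ ⟨h3, h4⟩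
    constructor
    · simp only [QuadraticAlgebra.re_sub]
      exact h1.sub h3
    · simp only [QuadraticAlgebra.im_sub]
      exact h2.sub h4
  have hcst : ∀ u : K, P2 (fun b => algebraMap K _ u) := by
    intro u
    constructor
    · simp only [QuadraticAlgebra.algebraMap_re]
      exact PF.const _
    · simp only [QuadraticAlgebra.algebraMap_im]
      exact PF.const _
  have hone : P2 (fun b => 1) := by
    constructor
    · simp only [QuadraticAlgebra.re_one]
      exact PF.const _
    · simp only [QuadraticAlgebra.im_one]
      exact PF.const _
  let Z : ∀ b : Option κ → K, Fin 11 → QuadraticAlgebra K (b none) 0 :=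
    fun b i => ⟨b (some (Sum.inl i)), b (some (Sum.inr i))⟩
  have hZ : ∀ i, P2 (fun b => Z b i) := fun i => ⟨PF.var _, PF.var _⟩
  let E : ∀ b : Option κ → K, Fin 4 → QuadraticAlgebra K (b none) 0 := fun b =>
    SysE (algebraMap K _ ε) (algebraMap K _ δ) (algebraMap K _ c) (algebraMap K _ e) (Z b)
  have hE : ∀ j, P2 (fun b => E b j) := by
    intro j
    fin_cases j
    · exact hsub _ _ (hmul _ _ (hZ _) (hZ _)) hone
    · exact hsub _ _ (hmul _ _ (hZ _) (hsub _ _ (hcst _) (hmul _ _ (hcst _) (hmul _ _ (hZ _) (hZ _)))))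
        (hsub _ _ (hmul _ _ (hZ _) (hZ _)) (hmul _ _ (hcst _) (hmul _ _ (hZ _) (hZ _))))
    · exact hsub _ _ (hmul _ _ (hZ _) (hsub _ _ (hmul _ _ (hcst _) (hcst _))
        (hmul _ _ (hcst _) (hmul _ _ (hZ _) (hZ _)))))
        (hsub _ _ (hmul _ _ (hZ _) (hZ _)) (hmul _ _ (hcst _) (hmul _ _ (hZ _) (hZ _))))
    · exact hsub _ _ (hmul _ _ (hmul _ _ (hcst _) (hZ _)) (hsub _ _ (hcst _)
        (hmul _ _ (hcst _) (hmul _ _ (hZ _) (hZ _)))))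
        (hsub _ _ (hmul _ _ (hZ _) (hZ _)) (hmul _ _ (hcst _) (hmul _ _ (hZ _) (hZ _))))
  refine ⟨κ, Fin 4 × Bool, inferInstance, inferInstance,
    fun t b => if t.2 then (E b t.1).re else (E b t.1).im, ?_, ?_⟩
  · rintro ⟨j, _ | _⟩
    · exact (hE j).2
    · exact (hE j).1
  · intro x
    beta_reduce
    rw [sys_iff]
    constructor
    · rintro ⟨z, hz⟩
      refine ⟨Sum.elim (fun i => (z i).re) (fun i => (z i).im), ?_⟩
      rintro ⟨j, _ | _⟩
      · exact congrArg QuadraticAlgebra.im (hz j)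
      · exact congrArg QuadraticAlgebra.re (hz j)
    · rintro ⟨y, hy⟩
      refine ⟨fun i => ⟨y (Sum.inl i), y (Sum.inr i)⟩, fun j => ?_⟩
      ext
      · exact hy (j, true)
      · exact hy (j, false)

end FFD

namespace FFD

theorem Params.iff {k0 K : Type*} [Field k0] [Finite k0] [Field K] (h2 : (2 : K) ≠ 0)
    (hK : Br k0 K) {ε δ c e : K} {v0 : Place K} (h : Params ε δ c e v0) (x : K) :
    (∀ s, s * s ≠ x) ↔
    Sys (algebraMap K (QuadraticAlgebra K x 0) ε) (algebraMap K (QuadraticAlgebra K x 0) δ)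
      (algebraMap K (QuadraticAlgebra K x 0) c) (algebraMap K (QuadraticAlgebra K x 0) e) := by
  constructor
  · intro hx
    have := quad_fact x hx
    obtain ⟨Q⟩ := exists_quad x h2
    exact h.complete hK Q
  · intro hS s hs
    let φ : QuadraticAlgebra K x 0 →ₐ[K] K := QuadraticAlgebra.lift ⟨s, by simp [hs]⟩
    have h3 := hS.map (φ : QuadraticAlgebra K x 0 →+* K)
    simp only [RingHom.coe_coe, AlgHom.commutes, Algebra.algebraMap_self, RingHom.id_apply] at h3
    exact h.sound h2 hK h3

/-- constants -/
def Cst (K : Type*) [Field K] : Set K := {x | ∀ v : Place K, v.Ge x 0}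

theorem FF.cst_finite {k K : Type*} [Field k] [Finite k] [Field K] [Algebra k K] (hF : FF k K) :
    (Cst K).Finite := by
  apply (Set.finite_range (algebraMap k K)).subset
  intro x hx
  exact hF.const x hx

theorem FF.exists_nonsq {k K : Type*} [Field k] [Finite k] [Field K] [Algebra k K] (hF : FF k K)
    (h2 : (2 : K) ≠ 0) : ∃ ε : K, (∀ s, s * s ≠ ε) ∧ ∀ v : Place K, v.Ge ε 0 := by
  have hk : ringChar k ≠ 2 := by
    intro h
    apply h2
    have := ringChar.Nat.cast_ringChar (R := k)
    rw [h] at this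
    rw [← map_ofNat (algebraMap k K)]
    have h3 : (2 : k) = 0 := by exact_mod_cast this
    rw [h3, map_zero]
  obtain ⟨a, ha⟩ := FiniteField.exists_nonsquare hk
  refine ⟨algebraMap k K a, ?_, fun v => v.ge_const k a⟩
  intro s hs
  obtain ⟨b, hb⟩ := hF.const s (by
    intro v
    by_cases h0 : s = 0
    · exact Or.inl h0
    · right
      have := congrArg v.ord hs
      rw [v.ord_mul _ _ h0 h0, v.ord_const k a] at this
      omega)
  apply ha
  refine ⟨b, ?_⟩
  apply (algebraMap k K).injective
  rw [map_mul, hb, hs]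

theorem FF.cst_card {k K : Type*} [Field k] [Finite k] [Field K] [Algebra k K] (hF : FF k K)
    (v : Place K) (S : Finset K) (hS : ∀ x, v.Ge x 0 → ∃ s ∈ S, v.Ge (x - s) 1) :
    (Cst K).ncard ≤ S.card := by
  have hch : ∀ x : K, ∃ s, x ∈ Cst K → s ∈ S ∧ v.Ge (x - s) 1 := by
    intro x
    by_cases hx : x ∈ Cst K
    · obtain ⟨s, h1, h2⟩ := hS x (hx v)
      exact ⟨s, fun _ => ⟨h1, h2⟩⟩
    · exact ⟨0, fun h => absurd h hx⟩
  choose f hf using hch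
  rw [← Set.ncard_coe_finset]
  apply Set.ncard_le_ncard_of_injOn f (fun x hx => (hf x hx).1) ?_ S.finite_toSet
  intro x hx y hy hxy
  by_contra hne
  have h1 := (hf x hx).2
  have h2 := (hf y hy).2
  rw [← hxy] at h2
  have h3 : v.Ge (x - y) 1 := by
    have := h1.sub h2
    rwa [sub_sub_sub_cancel_right] at this
  have h4 : v.ord (x - y) = 0 := hF.const_ord (fun w => by simpa using (hx w).sub (hy w)) v
  have := h3.le (sub_ne_zero.mpr hne)
  omega

theorem Quad.split_res {M N : Type*} [Field M] [Field N] [Algebra M N] {a : M} (Q : Quad M N a)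
    (w : Place N) (hw : Q.conj w ≠ w) (S : Finset M)
    (hS : ∀ x, (Q.res w).Ge x 0 → ∃ s ∈ S, (Q.res w).Ge (x - s) 1) :
    ∃ S' : Finset N, S'.card ≤ S.card ∧ ∀ x, w.Ge x 0 → ∃ s ∈ S', w.Ge (x - s) 1 := by
  classical
  refine ⟨S.image (algebraMap M N), Finset.card_image_le, fun x hx => ?_⟩
  obtain ⟨z, hz⟩ := Place.weak_approx {w, Q.conj w} (fun v => if v = w then x else 0) 1
  have h1 := hz w (by simp)
  have h2 := hz (Q.conj w) (by simp)
  simp only [if_true] at h1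
  simp only [hw, if_false, sub_zero] at h2
  rw [Q.conj_ge] at h2
  obtain ⟨t, ht⟩ := Q.trace z
  have h3 : w.Ge (x - algebraMap M N t) 1 := by
    have h4 : x - algebraMap M N t = -(z - x) - Q.σ z := by rw [← ht]; ring
    rw [h4]
    exact h1.neg.sub h2
  have h5 : w.Ge (algebraMap M N t) 0 := by
    have h6 := hx.sub (h3.mono (by norm_num : (0:ℤ) ≤ 1))
    rwa [sub_sub_cancel] at h6
  rw [Q.ge_res_zero] at h5
  obtain ⟨s, hs, h7⟩ := hS t h5
  refine ⟨algebraMap M N s, Finset.mem_image_of_mem _ hs, ?_⟩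
  rw [← Q.ge_res_pos, map_sub] at h7
  have := h3.add h7
  rwa [sub_add_sub_cancel] at this

theorem Quad.cst_lt {M N : Type*} [Field M] [Field N] [Algebra M N] {a : M} (Q : Quad M N a)
    (ha : a ∈ Cst M) (hfin : (Cst N).Finite) : (Cst M).ncard < (Cst N).ncard := by
  have h1 : (algebraMap M N) '' Cst M ⊂ Cst N := by
    rw [Set.ssubset_iff_of_subset]
    · refine ⟨Q.r, ?_, ?_⟩
      · intro w
        right
        have := congrArg w.ord Q.r_sq
        rw [w.ord_mul _ _ Q.r_ne Q.r_ne] at this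
        have h2 := (Q.ge_res_zero w a).mpr (ha _)
        have h3 := h2.le (by rw [← Q.r_sq]; exact mul_ne_zero Q.r_ne Q.r_ne)
        omega
      · rintro ⟨s, -, hs⟩
        apply Q.nonsq s
        apply (algebraMap M N).injective
        rw [map_mul, hs, Q.r_sq]
    · rintro _ ⟨x, hx, rfl⟩ w
      exact (Q.ge_res_zero w x).mpr (hx _)
  have := Set.ncard_lt_ncard h1 hfin
  rwa [Set.ncard_image_of_injective _ (algebraMap M N).injective] at this

theorem Quad.nonsq_iff {M N : Type*} [Field M] [Field N] [Algebra M N] {a : M} (Q : Quad M N a)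
    (x : M) : (∀ s, s * s ≠ x) ↔
      ((∀ s, s * s ≠ algebraMap M N x) ∨ ∃ y, y ≠ 0 ∧ x = a * (y * y)) := by
  constructor
  · intro hx
    by_contra hn
    push Not at hn
    obtain ⟨⟨s, hs⟩, h2⟩ := hn
    obtain ⟨u, w, rfl⟩ := Q.span s
    have h3 : algebraMap M N x + algebraMap M N 0 * Q.r =
        algebraMap M N (u * u + w * w * a) + algebraMap M N (2 * (u * w)) * Q.r := by
      rw [← hs, map_zero, zero_mul, add_zero]
      simp only [map_add, map_mul, map_ofNat, ← Q.r_sq]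
      ring
    obtain ⟨h4, h5⟩ := Q.unique h3
    have h6 : u * w = 0 := (mul_eq_zero.mp h5.symm).resolve_left Q.two
    rcases mul_eq_zero.mp h6 with h | h
    · subst h
      have hw : w ≠ 0 := by
        rintro rfl
        exact hx 0 (by rw [h4]; ring)
      exact h2 w hw (by rw [h4]; ring)
    · subst h
      exact hx u (by rw [h4]; ring)
  · rintro (h | ⟨y, hy, rfl⟩) s hs
    · exact h (algebraMap M N s) (by rw [← map_mul, hs])
    · apply Q.nonsq (s / y)
      rw [div_mul_div_comm, hs]
      field_simp

theorem Quad.finite {M N : Type*} [Field M] [Field N] [Algebra M N] {a : M} (Q : Quad M N a) :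
    FiniteDimensional M N := by
  classical
  refine ⟨⟨{1, Q.r}, ?_⟩⟩
  rw [eq_top_iff]
  intro z _
  obtain ⟨x, y, rfl⟩ := Q.span z
  rw [Finset.coe_insert, Finset.coe_singleton, Submodule.mem_span_pair]
  exact ⟨x, y, by simp [Algebra.smul_def]⟩

universe u
theorem tower (k0 : Type*) [Field k0] [Finite k0] (n : ℕ) (j : ℕ) : ∀ (K : Type u) [Field K],
    Br k0 K → (2 : K) ≠ 0 → ∀ v : Place K,
    (∃ S : Finset K, S.card ≤ n ∧ ∀ x, v.Ge x 0 → ∃ s ∈ S, v.Ge (x - s) 1) →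
    n < j + (Cst K).ncard → DP (fun x : K => ∀ s, s * s ≠ x) := by
  induction j with
  | zero =>
    rintro K _ hK h2 v ⟨S, hS, hS'⟩ hn
    obtain ⟨k, hk, hF⟩ := hK.ff
    have := hF.cst_card v S hS'
    omega
  | succ j ih =>
    rintro K _ hK h2 v ⟨S, hS, hS'⟩ hn
    obtain ⟨k, hk, hF⟩ := hK.ff
    obtain ⟨ε, hε, hεc⟩ := hF.exists_nonsq h2
    by_cases hv : v.Odd ε
    · obtain ⟨δ, c, e, hp⟩ := Params.exist hF hε hεc hv
      exact (DP.sys ε δ c e).congr (hp.iff h2 hK)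
    · have := quad_fact ε hε
      obtain ⟨Q⟩ := exists_quad ε h2
      have hL := hK.quad Q
      obtain ⟨k', hk', hN⟩ := hL.ff
      obtain ⟨w, rfl⟩ := Q.exists_ext hN v
      have h2L : w.ord 2 = 0 := by
        have := w.ord_const k' (2 : k')
        rwa [map_ofNat] at this
      have hc : Q.conj w ≠ w := fun hc => hv (Q.odd_of_conj_eq w h2L (by
        rw [Q.ord_res, hF.const_ord hεc, mul_zero]) hc)
      obtain ⟨S', h3, h4⟩ := Q.split_res w hc S hS'
      have h5 := Q.cst_lt hεc hN.cst_finite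
      have h6 := ih (QuadraticAlgebra K ε 0) hL Q.two' w ⟨S', h3.trans hS, h4⟩ (by omega)
      have := Q.finite
      exact (h6.restrict.or (DP.mul_sq ε)).congr Q.nonsq_iff

theorem Br.dp {k0 : Type*} [Field k0] [Finite k0] {K : Type u} [Field K] (hK : Br k0 K)
    (h2 : (2 : K) ≠ 0) : DP (fun x : K => ∀ s, s * s ≠ x) := by
  obtain ⟨k, hk, hF⟩ := hK.ff
  obtain ⟨v⟩ := hF.ne
  obtain ⟨S, hS⟩ := hF.resfin v
  exact tower k0 S.card (S.card + 1) K hK h2 v ⟨S, le_rfl, hS⟩ (by omega)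

end FFD

namespace FFD

theorem finite_of_gen {A B : Type*} [CommRing A] [CommRing B] (f : A →+* B) (s : Finset B)
    (h : ∀ P : B → Prop, (∀ b ∈ s, P b) → P 0 → (∀ x y, P x → P y → P (x + y)) →
      (∀ a x, P x → P (f a * x)) → ∀ b, P b) : f.Finite := by
  let _ := f.toAlgebra
  refine ⟨⟨s, ?_⟩⟩
  rw [eq_top_iff]
  intro b _
  refine h (fun b => b ∈ Submodule.span A (s : Set B)) (fun b hb => Submodule.subset_span hb)
    (Submodule.zero_mem _) (fun x y => Submodule.add_mem _) (fun a x hx => ?_) b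
  exact Submodule.smul_mem _ a hx

theorem frob_finite (k : Type*) [Field k] [Finite k] (p j : ℕ) [Fact p.Prime] [CharP k p]
    [CharP (RatFunc k) p] : (iterateFrobenius (RatFunc k) p j).Finite := by
  classical
  have hq : 0 < p ^ j := pow_pos (Fact.out : p.Prime).pos _
  apply finite_of_gen _ ((Finset.range (p ^ j)).image (fun i => (RatFunc.X : RatFunc k) ^ i))
  intro P h1 h2 h3 h4 b
  have hX : ∀ i < p ^ j, P (RatFunc.X ^ i) := fun i hi =>
    h1 _ (Finset.mem_image_of_mem _ (Finset.mem_range.mpr hi))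
  have hpoly : ∀ g : Polynomial k, P (algebraMap (Polynomial k) (RatFunc k) g) := by
    intro g
    induction g using Polynomial.induction_on' with
    | add g g' hg hg' => rw [map_add]; exact h3 _ _ hg hg'
    | monomial n a =>
      obtain ⟨d, hd⟩ := (bijective_iterateFrobenius k p j).2 a
      rw [iterateFrobenius_def] at hd
      have : algebraMap (Polynomial k) (RatFunc k) (Polynomial.monomial n a) =
          iterateFrobenius (RatFunc k) p j (RatFunc.C d * RatFunc.X ^ (n / p ^ j)) *
            RatFunc.X ^ (n % p ^ j) := by
        rw [iterateFrobenius_def, mul_pow, ← map_pow, hd, ← pow_mul, mul_assoc, ← pow_add,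
          Nat.div_add_mod', ← Polynomial.C_mul_X_pow_eq_monomial, map_mul, map_pow,
          RatFunc.algebraMap_C, RatFunc.algebraMap_X]
      rw [this]
      exact h4 _ _ (hX _ (Nat.mod_lt _ hq))
  induction b using RatFunc.induction_on with
  | f g r hr =>
    have hr' : algebraMap (Polynomial k) (RatFunc k) r ≠ 0 := by simpa using hr
    have : algebraMap (Polynomial k) (RatFunc k) g / algebraMap (Polynomial k) (RatFunc k) r =
        iterateFrobenius (RatFunc k) p j (algebraMap (Polynomial k) (RatFunc k) r)⁻¹ *
          algebraMap (Polynomial k) (RatFunc k) (g * r ^ (p ^ j - 1)) := by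
      rw [iterateFrobenius_def, map_mul, map_pow, inv_pow]
      rw [eq_comm, inv_mul_eq_div, div_eq_div_iff (pow_ne_zero _ hr') hr', mul_assoc, ← pow_succ,
        Nat.sub_add_cancel hq]
    rw [this]
    exact h4 _ _ (hpoly _)

universe u
theorem dp_main (Fq : Type*) (K : Type u) [Field Fq] [Fintype Fq] [Field K] [Algebra (RatFunc Fq) K]
    [FunctionField Fq K] (hq : Odd (Fintype.card Fq)) : DP (fun x : K => ∀ s, s * s ≠ x) := by
  obtain ⟨p, hp⟩ := CharP.exists Fq
  have hpp : Fact p.Prime := ⟨CharP.char_is_prime Fq p⟩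
  have hpodd : p ≠ 2 := by
    rintro rfl
    obtain ⟨n, -, hn⟩ := FiniteField.card Fq 2
    rw [hn] at hq
    simp [Nat.odd_pow_iff] at hq
    exact absurd hq (by decide)
  have hpo : Odd p := hpp.out.odd_of_ne_two hpodd
  have c1 : CharP (RatFunc Fq) p := charP_of_injective_algebraMap (algebraMap Fq (RatFunc Fq)).injective p
  have c2 : CharP K p := charP_of_injective_algebraMap (algebraMap (RatFunc Fq) K).injective p
  let S := separableClosure (RatFunc Fq) K
  have c3 : CharP S p := charP_of_injective_algebraMap (algebraMap (RatFunc Fq) S).injective p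
  have h2 : (2 : S) ≠ 0 := by
    intro h
    have h3 : ((2 : ℕ) : S) = 0 := by exact_mod_cast h
    rw [CharP.cast_eq_zero_iff S p] at h3
    exact hpodd ((Nat.prime_dvd_prime_iff_eq hpp.out Nat.prime_two).mp h3)
  have hBr : Br Fq S := ⟨inferInstance, inferInstance, inferInstance⟩
  have hDP := hBr.dp h2
  let j := IsPurelyInseparable.exponent S K
  let φ : K →+* S := IsPurelyInseparable.iterateFrobenius S K p (le_refl j)
  have hφ : ∀ x, algebraMap S K (φ x) = x ^ p ^ j := fun x =>
    IsPurelyInseparable.algebraMap_iterateFrobenius S p (le_refl j) x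
  have hfin : φ.Finite := by
    apply RingHom.Finite.of_comp_finite (f := algebraMap (RatFunc Fq) K)
    have : φ.comp (algebraMap (RatFunc Fq) K) =
        (algebraMap (RatFunc Fq) S).comp (iterateFrobenius (RatFunc Fq) p j) := by
      ext1 x
      apply (algebraMap S K).injective
      rw [RingHom.comp_apply, hφ, RingHom.comp_apply, iterateFrobenius_def,
        ← IsScalarTower.algebraMap_apply (RatFunc Fq) S K, map_pow]
    rw [this]
    refine RingHom.Finite.comp ?_ (frob_finite Fq p j)
    rw [RingHom.finite_algebraMap]
    infer_instance
  let _ : Algebra K S := φ.toAlgebra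
  have : FiniteDimensional K S := hfin
  refine hDP.restrict.congr (fun x => ?_)
  change _ ↔ ∀ s : S, s * s ≠ φ x
  constructor
  · intro hx s hs
    have h4 := congrArg (algebraMap S K) hs
    rw [hφ, map_mul] at h4
    obtain ⟨r, hr⟩ := hpo.pow (n := j)
    by_cases hx0 : x = 0
    · exact hx 0 (by rw [hx0, zero_mul])
    · apply hx (algebraMap S K s / x ^ r)
      rw [div_mul_div_comm, h4, hr]
      field_simp
      ring
  · intro hx s hs
    exact hx (φ s) (by rw [← map_mul, hs])

theorem DP.single {K : Type*} [Field K] (d : K) (hd : ∀ s, s * s ≠ d) {σ τ : Type*} (T : Finset τ)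
    (g : τ → (σ → K) → K) (hg : ∀ t, PF (g t)) :
    ∃ G : (σ → K) → K, PF G ∧ ∀ b, G b = 0 ↔ ∀ t ∈ T, g t b = 0 := by
  classical
  induction T using Finset.induction_on with
  | empty => exact ⟨fun _ => 0, PF.const 0, fun b => by simp⟩
  | insert t T ht ih =>
    obtain ⟨G, hG, hG'⟩ := ih
    refine ⟨fun b => g t b * g t b - d * (G b * G b),
      ((hg t).mul (hg t)).sub ((PF.const d).mul (hG.mul hG)), fun b => ?_⟩
    simp only [Finset.forall_mem_insert]
    rw [← hG']
    constructor
    · intro h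
      have h0 : G b = 0 := by
        by_contra hne
        apply hd (g t b / G b)
        rw [div_mul_div_comm, sub_eq_zero.mp h]
        field_simp
      rw [h0] at h
      refine ⟨?_, h0⟩
      simpa using h
    · rintro ⟨h1, h3⟩
      rw [h1, h3]; ring

end FFD

/-- Over a global function field `K` of odd characteristic, the set of pairs
`(a₁, a₂) ∈ (Kˣ)²` such that `−a₁a₂` is not a square in `K` is diophantine over `K`. -/
theorem nonsquare_product_diophantine_functionField
    (Fq K : Type*) [Field Fq] [Fintype Fq] [Field K] [Algebra (RatFunc Fq) K]
    [FunctionField Fq K] (hq : Odd (Fintype.card Fq)) :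
    IsDiophantine {a : Fin 2 → K | a 0 ≠ 0 ∧ a 1 ≠ 0 ∧ ¬ ∃ s : K, -(a 0 * a 1) = s ^ 2} := by
  have hiff : ∀ a : Fin 2 → K, a ∈ {a : Fin 2 → K | a 0 ≠ 0 ∧ a 1 ≠ 0 ∧
      ¬ ∃ s : K, -(a 0 * a 1) = s ^ 2} ↔ ∀ s, s * s ≠ -(a 0 * a 1) := by
    intro a
    simp only [Set.mem_ofPred_eq]
    constructor
    · rintro ⟨-, -, h⟩ s hs
      exact h ⟨s, by rw [pow_two, hs]⟩
    · intro h
      refine ⟨?_, ?_, ?_⟩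
      · intro h0
        exact h 0 (by rw [h0]; ring)
      · intro h0
        exact h 0 (by rw [h0]; ring)
      · rintro ⟨s, hs⟩
        exact h s (by rw [hs, pow_two])
  by_cases hd : ∃ d : K, ∀ s, s * s ≠ d
  · obtain ⟨d, hd⟩ := hd
    obtain ⟨κ, τ, hκ, hτ, g, hg, hh⟩ := FFD.dp_main Fq K hq
    obtain ⟨G, hG, hG'⟩ := FFD.DP.single d hd Finset.univ g hg
    let eqv := Fintype.equivFin κ
    obtain ⟨f, hf⟩ := hG.comp (σ' := Fin 2 ⊕ Fin (Fintype.card κ))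
      (fun o b => o.elim (0 - (b (Sum.inl 0) * b (Sum.inl 1))) (fun i => b (Sum.inr (eqv i)))) (by
        rintro (_ | i)
        · exact (FFD.PF.const 0).sub ((FFD.PF.var _).mul (FFD.PF.var _))
        · exact FFD.PF.var _)
    refine ⟨Fintype.card κ, f, fun a => ?_⟩
    rw [hiff]
    refine (hh _).trans ?_
    constructor
    · rintro ⟨y, hy⟩
      refine ⟨fun i => y (eqv.symm i), ?_⟩
      rw [hf, hG']
      intro t _
      simp only [Sum.elim_inl, Sum.elim_inr, Equiv.symm_apply_apply, zero_sub]
      exact hy t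
    · rintro ⟨x, hx⟩
      refine ⟨fun i => x (eqv i), fun t => ?_⟩
      rw [hf, hG'] at hx
      have := hx t (Finset.mem_univ t)
      simpa only [Sum.elim_inl, Sum.elim_inr, zero_sub] using this
  · refine ⟨0, 1, fun a => ?_⟩
    rw [hiff]
    constructor
    · intro h
      exact absurd ⟨_, h⟩ hd
    · rintro ⟨x, hx⟩
      simp at hx
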